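/- arXiv:1412.0272 — 6 statements merged into one kernel-verified Lean document; each statement's English description precedes it below -/
import Mathlib

section
/- Let n ≥ 2 and r ≥ 2. The set of reducible tuples (A₁,…,A_r) ∈ U(n)^r — tuples for which some subspace of ℂⁿ other than {0} and ℂⁿ is invariant under all the Aᵢ — viewed as a subset of the metric space of r-tuples of n×n complex matrices, has Hausdorff dimension at most rn² − 2(r−1)(n−1). -/
/-!
The reducible locus is covered by countably many `C¹` images of real vector spaces of dimension at
most `r n² - 2 (r - 1) (n - 1)`, and a `C¹` map does not raise the dimension of a vector space.

A unitary matrix `A` is the Cayley transform of a Hermitian matrix `H`, up to a rotation by some `μ`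
on the unit circle which is not an eigenvalue of `A`; countably many `μ` suffice, and `H` preserves
every subspace that `A` preserves (`exists_cayley_eq`). This reduces the problem to tuples of Hermitian
matrices with a common invariant subspace `p`.

By the standard charts of the Grassmannian, `p` is the graph of a linear map `T` over one of finitely
many coordinate subspaces (`exists_graph`). If `M` is the matrix whose columns are the obvious bases of
the graph and of its orthogonal complement, the Hermitian matrices preserving `p` are exactly the
products `M W Mᴴ` with `W` Hermitian and block diagonal (`exists_frame_eq`). With `a = dim p` and
`b = n - a`, the pair `(T, (Wᵢ))` has `2 a b + r (a² + b²) = r n² - 2 (r - 1) a b` real parameters,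
and `a b ≥ n - 1` since `1 ≤ a ≤ n - 1` (`dim_count`).
-/

open scoped ENNReal

-- Equip `n × n` complex matrices with the Frobenius norm, whose metric is the standard
-- Euclidean metric of `ℝ^{2n²}`; tuples then carry the (bi-Lipschitz equivalent) product metric.
attribute [local instance] Matrix.frobeniusNormedAddCommGroup

open Matrix
open scoped ComplexOrder

/-! ### Real coordinates on Hermitian matrices -/

section Herm
variable {α : Type*}

/-- The `ℝ`-linear isomorphism `R ↦ (R + Rᵀ)/2 + i (R - Rᵀ)/2` from real square matrices onto
Hermitian matrices; it shows that Hermitian `m × m` matrices have `m²` real parameters. -/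
noncomputable def herm : Matrix α α ℝ →ₗ[ℝ] Matrix α α ℂ where
  toFun R := Matrix.of fun i j => ⟨(R i j + R j i) / 2, (R i j - R j i) / 2⟩
  map_add' R S := by
    ext i j; apply Complex.ext <;> simp <;> ring
  map_smul' c R := by
    ext i j; apply Complex.ext <;> simp <;> ring

lemma herm_isHermitian (R : Matrix α α ℝ) : (herm R).IsHermitian := by
  ext i j; apply Complex.ext <;> simp [herm, add_comm]
  ring

lemma exists_herm_eq {H : Matrix α α ℂ} (hH : H.IsHermitian) : ∃ R, herm R = H := by
  -- `Re H` is symmetric and `Im H` antisymmetric, so both can be read off from their sum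
  refine ⟨Matrix.of fun i j => (H i j).re + (H i j).im, ?_⟩
  ext i j
  have h := hH.apply i j
  have hre : (H j i).re = (H i j).re := by rw [← h]; simp
  have him : (H j i).im = -(H i j).im := by rw [← h]; simp
  apply Complex.ext <;> simp [herm, hre, him] <;> ring
end Herm

/-! ### Every subspace is a graph over some coordinate subspace -/

/-- Affine charts of the Grassmannian: a subspace `p` of `ℂ^ι` is the graph of a linear map `T` from
the coordinates in some `t` to the remaining ones. The set `t` is the complement of a set of
standard basis vectors whose images form a basis of `ℂ^ι / p`. -/
lemma exists_graph {ι : Type*} [Fintype ι] [DecidableEq ι] (p : Submodule ℂ (ι → ℂ)) :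
    ∃ (t : Finset ι) (T : Matrix {i // i ∉ t} {i // i ∈ t} ℂ), ∀ x : ι → ℂ,
      x ∈ p ↔ (fun j : {j // j ∉ t} => x j) = T *ᵥ fun i : {i // i ∈ t} => x i := by
  classical
  obtain ⟨κ, a, ha, hspan, hli⟩ :=
    exists_linearIndependent' ℂ (fun i : ι => p.mkQ (Pi.single i 1))
  have : Fintype κ := Fintype.ofInjective a ha
  set t : Finset ι := Finset.univ.filter fun i => i ∉ Set.range a with ht
  -- a vector of `p` vanishing on the coordinates in `t` is zero
  have hdis : ∀ x ∈ p, (∀ i ∈ t, x i = 0) → x = 0 := by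
    intro x hx hx0
    have hsum : x = ∑ k, x (a k) • (Pi.single (a k) 1 : ι → ℂ) := by
      ext i
      by_cases hi : i ∈ t
      · rw [hx0 i hi, Finset.sum_apply, Finset.sum_eq_zero]
        intro k _
        have : i ≠ a k := by rintro rfl; exact (Finset.mem_filter.1 hi).2 ⟨k, rfl⟩
        simp [this]
      · obtain ⟨k, rfl⟩ : i ∈ Set.range a := by simpa [ht] using hi
        rw [Finset.sum_apply, Finset.sum_eq_single k]
        · simp
        · intro l _ hl
          have : a k ≠ a l := fun h => hl (ha h).symm
          simp [this]
        · simp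
    have h0 : ∑ k, x (a k) • ((fun i : ι => p.mkQ (Pi.single i 1)) ∘ a) k = 0 := by
      have := (Submodule.Quotient.mk_eq_zero p).2 hx
      rw [← Submodule.mkQ_apply, hsum, map_sum] at this
      simpa using this
    have hz := Fintype.linearIndependent_iff.1 hli _ h0
    rw [hsum]; simp [hz]
  -- modulo the basis vectors outside `t`, every standard basis vector lies in `p`
  have hcod : ∀ i : ι, ∃ u ∈ p, ∀ j ∈ t, u j = (Pi.single i 1 : ι → ℂ) j := by
    intro i
    have hm : p.mkQ (Pi.single i 1) ∈
        Submodule.span ℂ (Set.range ((fun i : ι => p.mkQ (Pi.single i 1)) ∘ a)) := by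
      rw [hspan]; exact Submodule.subset_span ⟨i, rfl⟩
    obtain ⟨c, hc⟩ := (Submodule.mem_span_range_iff_exists_fun ℂ).1 hm
    refine ⟨Pi.single i 1 - ∑ k, c k • Pi.single (a k) 1, ?_, ?_⟩
    · rw [← Submodule.Quotient.mk_eq_zero, ← Submodule.mkQ_apply, map_sub, ← hc, map_sum]
      simp
    · intro j hj
      have : ∀ k, j ≠ a k := by rintro k rfl; exact (Finset.mem_filter.1 hj).2 ⟨k, rfl⟩
      simp [Finset.sum_apply, this]
  choose u hup hu using hcod
  have key : ∀ c : {i // i ∈ t} → ℂ, ∀ i : {i // i ∈ t}, (∑ k : {i // i ∈ t}, c k • u k) i = c i := by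
    intro c i
    rw [Finset.sum_apply, Finset.sum_eq_single i]
    · simp [hu i i i.2]
    · intro b _ hb
      have : (i : ι) ≠ b := fun h => hb (Subtype.ext h).symm
      simp [hu b i i.2, this]
    · simp
  have hmem : ∀ c : {i // i ∈ t} → ℂ, ∑ k : {i // i ∈ t}, c k • u k ∈ p := fun c =>
    p.sum_mem fun k _ => p.smul_mem _ (hup k)
  refine ⟨t, Matrix.of fun j i => u i j, fun x => ⟨fun hx => ?_, fun hx => ?_⟩⟩
  · have h0 := hdis _ (p.sub_mem hx (hmem fun i => x i)) (fun i hi => by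
      have := key (fun i => x i) ⟨i, hi⟩
      simp only at this
      rw [Pi.sub_apply, this, sub_self])
    ext j
    have := congrFun (sub_eq_zero.1 h0) j
    rw [this]
    simp [Matrix.mulVec, dotProduct, Finset.sum_apply, mul_comm]
  · have : x = ∑ k : {i // i ∈ t}, x k • u k := by
      ext j
      by_cases hj : j ∈ t
      · exact (key (fun i => x i) ⟨j, hj⟩).symm
      · have := congrFun hx ⟨j, hj⟩
        simp only at this
        rw [this]
        simp [Matrix.mulVec, dotProduct, Finset.sum_apply, mul_comm]
    rw [this]; exact hmem fun i => x i

/-! ### Hermitian matrices preserving a graph -/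

section Frame
variable {α β : Type*} [Fintype α] [Fintype β] [DecidableEq α] [DecidableEq β]

/-- The first block of columns `(1, T)` is a basis of the graph of `T`, the second block `(-Tᴴ, 1)` a
basis of its orthogonal complement. Not normalizing these bases keeps the map affine in `T`. -/
def frame (T : Matrix β α ℂ) : Matrix (α ⊕ β) (α ⊕ β) ℂ := fromBlocks 1 (-Tᴴ) T 1

/-- A Hermitian matrix `X` preserving the graph of `T` also preserves its orthogonal complement, so
with `M = frame T` both `Mᴴ M` and `Mᴴ X M` are block diagonal; hence `X = M W Mᴴ` for the block
diagonal `W = (Mᴴ M)⁻¹ (Mᴴ X M) (Mᴴ M)⁻¹`. -/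
lemma exists_frame_eq {X : Matrix (α ⊕ β) (α ⊕ β) ℂ} (hX : X.IsHermitian) (T : Matrix β α ℂ)
    (hT : ∀ u : α → ℂ, (fun j => (X *ᵥ Sum.elim u (T *ᵥ u)) (Sum.inr j)) =
      T *ᵥ fun i => (X *ᵥ Sum.elim u (T *ᵥ u)) (Sum.inl i)) :
    ∃ (Y : Matrix α α ℂ) (Z : Matrix β β ℂ), Y.IsHermitian ∧ Z.IsHermitian ∧
      X = frame T * fromBlocks Y 0 0 Z * (frame T)ᴴ := by
  obtain ⟨a, b, c, d, rfl⟩ : ∃ a b c d, X = fromBlocks a b c d :=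
    ⟨_, _, _, _, (fromBlocks_toBlocks X).symm⟩
  obtain ⟨ha, hb, hc, hd⟩ := isHermitian_fromBlocks_iff.1 hX
  have hinv : c + d * T = T * (a + b * T) := by
    refine Matrix.ext_of_mulVec_single fun i => ?_
    have := hT (Pi.single i 1)
    simp only [fromBlocks_mulVec, Sum.elim_inr, Sum.elim_inl, Sum.elim_comp_inl,
      Sum.elim_comp_inr] at this
    rw [Matrix.add_mulVec, ← Matrix.mulVec_mulVec, ← Matrix.mulVec_mulVec, Matrix.add_mulVec,
      ← Matrix.mulVec_mulVec]
    exact this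
  have hinv' : b + Tᴴ * d = (a + Tᴴ * c) * Tᴴ := by
    have := congrArg conjTranspose hinv
    simpa [hb, ← hc, ha.eq, hd.eq, Matrix.conjTranspose_mul] using this
  have hP : IsUnit (1 + Tᴴ * T) :=
    (PosDef.one.add_posSemidef (posSemidef_conjTranspose_mul_self T)).isUnit
  have hQ : IsUnit (1 + T * Tᴴ) :=
    (PosDef.one.add_posSemidef (posSemidef_self_mul_conjTranspose T)).isUnit
  have hPh : (1 + Tᴴ * T)ᴴ = 1 + Tᴴ * T := by simp
  have hQh : (1 + T * Tᴴ)ᴴ = 1 + T * Tᴴ := by simp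
  set P := 1 + Tᴴ * T
  set Q := 1 + T * Tᴴ
  have hPd := (isUnit_iff_isUnit_det P).1 hP
  have hQd := (isUnit_iff_isUnit_det Q).1 hQ
  have hMM : (frame T)ᴴ * frame T = fromBlocks P 0 0 Q := by
    simp [frame, fromBlocks_conjTranspose, fromBlocks_multiply, P, Q, add_comm]
  set N₁ := a + b * T + Tᴴ * (c + d * T) with hN₁
  set N₂ := T * a * Tᴴ - c * Tᴴ - T * b + d with hN₂
  have hN : (frame T)ᴴ * fromBlocks a b c d * frame T = fromBlocks N₁ 0 0 N₂ := by
    simp only [frame, fromBlocks_conjTranspose, fromBlocks_multiply, conjTranspose_one,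
      conjTranspose_neg, conjTranspose_conjTranspose]
    congr 1
    · simp only [hN₁]; simp only [Matrix.mul_add, Matrix.add_mul, Matrix.one_mul, Matrix.mul_one,
        Matrix.mul_assoc]
      abel
    · rw [← sub_eq_zero] at hinv'
      rw [← hinv']; simp only [Matrix.add_mul, Matrix.mul_neg, Matrix.one_mul, Matrix.mul_one,
        Matrix.mul_assoc]
      abel
    · rw [← sub_eq_zero] at hinv
      rw [← hinv]; simp only [Matrix.mul_add, Matrix.add_mul, Matrix.neg_mul, Matrix.one_mul, Matrix.mul_one,
        Matrix.mul_assoc]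
      abel
    · simp only [hN₂]; simp only [Matrix.add_mul, Matrix.mul_neg, Matrix.neg_mul, Matrix.one_mul, Matrix.mul_one,
        Matrix.mul_assoc]
      abel
  have hDD : fromBlocks P 0 0 Q * fromBlocks P⁻¹ 0 0 Q⁻¹ = 1 := by
    simp [fromBlocks_multiply, mul_nonsing_inv _ hPd, mul_nonsing_inv _ hQd]
  have hN₁h : N₁.IsHermitian := by
    have := isHermitian_conjTranspose_mul_mul (frame T) hX
    rw [hN, isHermitian_fromBlocks_iff] at this
    exact this.1
  have hN₂h : N₂.IsHermitian := by
    have := isHermitian_conjTranspose_mul_mul (frame T) hX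
    rw [hN, isHermitian_fromBlocks_iff] at this
    exact this.2.2.2
  -- `(Mᴴ M)⁻¹ Mᴴ` is a left inverse of the square matrix `M = frame T`, hence a right inverse
  have hM : frame T * (fromBlocks P⁻¹ 0 0 Q⁻¹ * (frame T)ᴴ) = 1 := by
    rw [mul_eq_one_comm, Matrix.mul_assoc, hMM, mul_eq_one_comm, hDD]
  refine ⟨P⁻¹ * N₁ * P⁻¹, Q⁻¹ * N₂ * Q⁻¹, ?_, ?_, ?_⟩
  · simp [IsHermitian, conjTranspose_mul, conjTranspose_nonsing_inv, hPh, hN₁h.eq,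
      Matrix.mul_assoc]
  · simp [IsHermitian, conjTranspose_mul, conjTranspose_nonsing_inv, hQh, hN₂h.eq,
      Matrix.mul_assoc]
  · have hW : fromBlocks (P⁻¹ * N₁ * P⁻¹) 0 0 (Q⁻¹ * N₂ * Q⁻¹) =
        fromBlocks P⁻¹ 0 0 Q⁻¹ * ((frame T)ᴴ * fromBlocks a b c d * frame T) *
          fromBlocks P⁻¹ 0 0 Q⁻¹ := by
      rw [hN]; simp [fromBlocks_multiply]
    rw [hW]
    calc fromBlocks a b c d = (frame T * (fromBlocks P⁻¹ 0 0 Q⁻¹ * (frame T)ᴴ)) *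
          fromBlocks a b c d * (frame T * (fromBlocks P⁻¹ 0 0 Q⁻¹ * (frame T)ᴴ)) := by
          rw [hM, Matrix.one_mul, Matrix.mul_one]
      _ = _ := by simp only [Matrix.mul_assoc]

end Frame

/-! ### The Cayley transform -/

section Cayley
variable {ι : Type*} [Fintype ι] [DecidableEq ι]

/-- The Cayley transform of `H`, rotated by `μ`. For Hermitian `H` the inverse is a genuine one by
`isUnit_one_add_I_smul`. For `|μ| = 1` the image of the Hermitian matrices is the set of unitary
matrices that do not have `μ` as an eigenvalue. -/
noncomputable def cayley (μ : ℂ) (H : Matrix ι ι ℂ) : Matrix ι ι ℂ :=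
  μ • ((1 + Complex.I • H)⁻¹ * (Complex.I • H - 1))

lemma isUnit_one_add_I_smul {H : Matrix ι ι ℂ} (hH : H.IsHermitian) :
    IsUnit (1 + Complex.I • H) := by
  have h : (1 + Complex.I • H)ᴴ * (1 + Complex.I • H) = 1 + Hᴴ * H := by
    simp [Matrix.mul_add, Matrix.add_mul, hH.eq, smul_smul]
  have hu : IsUnit (1 + Hᴴ * H) :=
    (PosDef.one.add_posSemidef (posSemidef_conjTranspose_mul_self H)).isUnit
  rw [← h, isUnit_iff_isUnit_det, det_mul] at hu
  exact (isUnit_iff_isUnit_det _).2 (isUnit_of_mul_isUnit_right hu)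

lemma exists_circle_seq : ∃ c : ℕ → ℂ, Function.Injective c ∧ ∀ k, star (c k) * c k = 1 := by
  refine ⟨fun k => (Circle.exp (1 / ((k : ℝ) + 1)) : ℂ), fun k l h => ?_, fun k => ?_⟩
  · have hr : ∀ m : ℕ, Complex.arg (Circle.exp (1 / ((m : ℝ) + 1)) : ℂ) = 1 / ((m : ℝ) + 1) := by
      intro m
      have h0 : 0 < 1 / ((m : ℝ) + 1) := by positivity
      have h1 : 1 / ((m : ℝ) + 1) ≤ 1 := by
        rw [div_le_one (by positivity)]; linarith [(Nat.cast_nonneg m : (0 : ℝ) ≤ m)]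
      exact Circle.arg_exp (by linarith [Real.pi_pos]) (by linarith [Real.pi_gt_three])
    have := congrArg Complex.arg h
    simp only [hr] at this
    simpa using this
  · rw [Complex.star_def, ← Complex.normSq_eq_conj_mul_self, Circle.normSq_coe]; simp

/-- A unitary `A` has finitely many eigenvalues, so some `μ = c k` is not one of them. Then
`S = (μ + A)(μ - A)⁻¹` is skew-Hermitian, preserves every `A`-invariant subspace, and `-i S` is a
preimage of `A` under the Cayley transform. -/
lemma exists_cayley_eq {c : ℕ → ℂ} (hc : Function.Injective c) (hc1 : ∀ k, star (c k) * c k = 1)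
    {A : Matrix ι ι ℂ} (hA : A ∈ unitaryGroup ι ℂ) {p : Submodule ℂ (ι → ℂ)}
    (hp : ∀ v ∈ p, A *ᵥ v ∈ p) :
    ∃ (k : ℕ) (H : Matrix ι ι ℂ), H.IsHermitian ∧ (∀ v ∈ p, H *ᵥ v ∈ p) ∧ A = cayley (c k) H := by
  obtain ⟨k, hk⟩ : ∃ k, A.charpoly.eval (c k) ≠ 0 := by
    by_contra! h
    exact A.charpoly_monic.ne_zero (Polynomial.eq_zero_of_infinite_isRoot _
      ((Set.infinite_range_of_injective hc).mono (by rintro _ ⟨k, rfl⟩; exact h k)))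
  rw [eval_charpoly] at hk
  have hk1 := hc1 k
  set μ := c k
  rw [show scalar ι μ = μ • (1 : Matrix ι ι ℂ) by ext; simp [Matrix.one_apply, diagonal_apply]] at hk
  set B := μ • (1 : Matrix ι ι ℂ) - A with hB
  have hu : IsUnit B.det := isUnit_iff_ne_zero.2 hk
  have hBi : B⁻¹ * B = 1 := nonsing_inv_mul _ hu
  set C := μ • (1 : Matrix ι ι ℂ) + A with hC
  have hAA : Aᴴ * A = 1 := mem_unitaryGroup_iff'.1 hA
  set S := C * B⁻¹ with hS
  have hSB : S * B = C := by rw [hS, Matrix.mul_assoc, hBi, Matrix.mul_one]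
  have hskew : Sᴴ = -S := by
    have h1 : Bᴴ * (Sᴴ + S) * B = 0 := by
      have h2 : Bᴴ * (Sᴴ + S) * B = (S * B)ᴴ * B + Bᴴ * (S * B) := by
        rw [conjTranspose_mul S B, Matrix.mul_add, Matrix.add_mul, Matrix.mul_assoc Bᴴ S]
      rw [h2, hSB, hB, hC]
      simp only [conjTranspose_add, conjTranspose_sub, conjTranspose_smul, conjTranspose_one,
        Matrix.add_mul, Matrix.sub_mul, Matrix.mul_add, Matrix.mul_sub, Matrix.smul_mul,
        Matrix.mul_smul, Matrix.one_mul, Matrix.mul_one, hAA, smul_sub, smul_add, smul_smul, hk1,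
        mul_comm μ, one_smul]
      abel
    have hBh : B⁻¹ᴴ * Bᴴ = 1 := by
      rw [← conjTranspose_mul, mul_nonsing_inv _ hu, conjTranspose_one]
    have h3 : Sᴴ + S = B⁻¹ᴴ * (Bᴴ * (Sᴴ + S) * B) * B⁻¹ := by
      calc Sᴴ + S = (B⁻¹ᴴ * Bᴴ) * (Sᴴ + S) * (B * B⁻¹) := by
            rw [hBh, mul_nonsing_inv _ hu, Matrix.one_mul, Matrix.mul_one]
        _ = _ := by simp only [Matrix.mul_assoc]
    rw [h1, Matrix.mul_zero, Matrix.zero_mul] at h3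
    exact eq_neg_of_add_eq_zero_left h3
  have hIS : Complex.I • ((-Complex.I) • S) = S := by simp [smul_smul]
  have hH : ((-Complex.I) • S).IsHermitian := by
    simp [IsHermitian, conjTranspose_smul, hskew]
  refine ⟨k, (-Complex.I) • S, hH, fun v hv => ?_, ?_⟩
  · -- `B` restricts to an injective, hence surjective, endomorphism of `p`
    have hBp : ∀ v ∈ p, B.mulVecLin v ∈ p := fun w hw => by
      simp only [mulVecLin_apply, hB, Matrix.sub_mulVec, Matrix.smul_mulVec, Matrix.one_mulVec]
      exact p.sub_mem (p.smul_mem _ hw) (hp _ hw)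
    have hinj : Function.Injective (B.mulVecLin.restrict hBp) := by
      intro x y hxy
      have h1 : B *ᵥ (x : ι → ℂ) = B *ᵥ (y : ι → ℂ) := congrArg Subtype.val hxy
      have h2 := congrArg (B⁻¹ *ᵥ ·) h1
      simp only [Matrix.mulVec_mulVec, hBi, Matrix.one_mulVec] at h2
      exact Subtype.ext h2
    obtain ⟨w, hw⟩ := LinearMap.injective_iff_surjective.1 hinj ⟨v, hv⟩
    have hw' : B *ᵥ (w : ι → ℂ) = v := congrArg Subtype.val hw
    rw [Matrix.smul_mulVec, ← hw', Matrix.mulVec_mulVec, hSB, hC, Matrix.add_mulVec,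
      Matrix.smul_mulVec, Matrix.one_mulVec]
    exact p.smul_mem _ (p.add_mem (p.smul_mem _ w.2) (hp _ w.2))
  · have hun := isUnit_one_add_I_smul hH
    rw [isUnit_iff_isUnit_det] at hun
    rw [cayley]
    rw [hIS] at hun ⊢
    have h1 : (1 + S) * A = μ • (S - 1) := by
      have : S * B = C := hSB
      rw [hB, hC, Matrix.mul_sub, Matrix.mul_smul, Matrix.mul_one] at this
      rw [Matrix.add_mul, Matrix.one_mul, smul_sub]
      rw [sub_eq_iff_eq_add] at this
      rw [this]; abel
    rw [← Matrix.mul_smul, ← h1, ← Matrix.mul_assoc, nonsing_inv_mul _ hun, Matrix.one_mul]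

end Cayley

/-! ### Parametrizing reducible tuples -/

section Param
variable {ι α β : Type*} [Fintype α] [Fintype β] [DecidableEq α] [DecidableEq β]

attribute [local instance] Matrix.frobeniusNormedSpace Matrix.frobeniusNormedRing
  Matrix.frobeniusNormedAlgebra

/-- Parameters for `r` Hermitian matrices with a common invariant subspace: a graph `T`, and for each
matrix the real coordinates of its two Hermitian diagonal blocks. -/
abbrev Param (α β : Type*) (r : ℕ) : Type _ :=
  Matrix β α ℂ × (Fin r → Matrix α α ℝ × Matrix β β ℝ)

/-- The `i`-th Hermitian matrix with parameters `x`; it preserves the graph of `x.1` once `α ⊕ β` is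
identified with `ι` by `e`. -/
noncomputable def hermParam {r : ℕ} (e : α ⊕ β ≃ ι) (x : Param α β r) (i : Fin r) :
    Matrix ι ι ℂ :=
  (frame x.1 * fromBlocks (herm (x.2 i).1) 0 0 (herm (x.2 i).2) * (frame x.1)ᴴ).submatrix
    e.symm e.symm

lemma hermParam_isHermitian {r : ℕ} (e : α ⊕ β ≃ ι) (x : Param α β r) (i : Fin r) :
    (hermParam e x i).IsHermitian := by
  refine IsHermitian.submatrix (isHermitian_mul_mul_conjTranspose _ ?_) _
  exact IsHermitian.fromBlocks (herm_isHermitian _) (by simp) (herm_isHermitian _)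

lemma contDiff_of_linear {E F : Type*} [NormedAddCommGroup E] [NormedSpace ℝ E]
    [FiniteDimensional ℝ E] [NormedAddCommGroup F] [NormedSpace ℝ F] (f : E →ₗ[ℝ] F) :
    ContDiff ℝ 1 f :=
  (LinearMap.toContinuousLinearMap f).contDiff

lemma contDiff_frame : ContDiff ℝ 1 (frame : Matrix β α ℂ → Matrix (α ⊕ β) (α ⊕ β) ℂ) := by
  let L : Matrix β α ℂ →ₗ[ℝ] Matrix (α ⊕ β) (α ⊕ β) ℂ :=
    { toFun := fun T => fromBlocks 0 (-Tᴴ) T 0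
      map_add' := fun S T => by simp [fromBlocks_add, add_comm]
      map_smul' := fun c T => by simp [fromBlocks_smul] }
  have : (frame : Matrix β α ℂ → Matrix (α ⊕ β) (α ⊕ β) ℂ) = fun T => 1 + L T := by
    funext T
    simp only [frame, L, ← fromBlocks_one, LinearMap.coe_mk, AddHom.coe_mk, fromBlocks_add]
    simp
  rw [this]
  exact contDiff_const.add (contDiff_of_linear L)

lemma contDiff_hermParam [Fintype ι] {r : ℕ} (e : α ⊕ β ≃ ι) (i : Fin r) :
    ContDiff ℝ 1 fun x : Param α β r => hermParam e x i := by
  let L : Matrix α α ℝ × Matrix β β ℝ →ₗ[ℝ] Matrix (α ⊕ β) (α ⊕ β) ℂ :=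
    { toFun := fun R => fromBlocks (herm R.1) 0 0 (herm R.2)
      map_add' := fun S T => by simp [fromBlocks_add]
      map_smul' := fun c T => by simp [fromBlocks_smul] }
  have hf : ContDiff ℝ 1 fun x : Param α β r => frame x.1 := contDiff_frame.comp contDiff_fst
  have hL : ContDiff ℝ 1 fun x : Param α β r => L (x.2 i) :=
    (contDiff_of_linear L).comp ((contDiff_apply ℝ _ i).comp contDiff_snd)
  have hs : ContDiff ℝ 1 fun x : Param α β r => (frame x.1)ᴴ :=
    (contDiff_of_linear
      (conjTransposeLinearEquiv (α ⊕ β) (α ⊕ β) ℝ ℂ).toLinearMap).comp hf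
  exact (contDiff_of_linear (reindexLinearEquiv ℝ ℂ e e).toLinearMap).comp ((hf.mul hL).mul hs)

lemma contDiffAt_cayley [Fintype ι] [DecidableEq ι] (μ : ℂ) {H : Matrix ι ι ℂ} (hH : H.IsHermitian) :
    ContDiffAt ℝ 1 (cayley μ) H := by
  obtain ⟨u, hu⟩ := isUnit_one_add_I_smul hH
  have hI : ContDiffAt ℝ 1 (fun H : Matrix ι ι ℂ => Complex.I • H) H :=
    contDiffAt_id.const_smul Complex.I
  have h1 : ContDiffAt ℝ 1 (fun H : Matrix ι ι ℂ => 1 + Complex.I • H) H :=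
    contDiffAt_const.add hI
  have h2 : ContDiffAt ℝ 1 (fun H : Matrix ι ι ℂ => (1 + Complex.I • H)⁻¹) H := by
    simp only [nonsing_inv_eq_ringInverse]
    refine ContDiffAt.comp H (g := Ring.inverse) ?_ h1
    rw [← hu]
    exact contDiffAt_ringInverse ℝ u
  exact (h2.mul (hI.sub contDiffAt_const)).const_smul μ

/-- The composite of the parametrization with a Cayley transform in each factor is `C¹` on the whole
parameter space, so its range has dimension at most the number of real parameters. -/
lemma dimH_range_cayley_hermParam_le [Fintype ι] [DecidableEq ι] {r : ℕ} (e : α ⊕ β ≃ ι) (c : Fin r → ℂ) :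
    dimH (Set.range fun (x : Param α β r) i => cayley (c i) (hermParam e x i)) ≤
      ((2 * (Fintype.card α * Fintype.card β) +
        r * (Fintype.card α ^ 2 + Fintype.card β ^ 2) : ℕ) : ℝ≥0∞) := by
  have h : ContDiff ℝ 1 fun (x : Param α β r) i => cayley (c i) (hermParam e x i) :=
    contDiff_pi.2 fun i => contDiff_iff_contDiffAt.2 fun x =>
      ContDiffAt.comp x (g := cayley (c i)) (contDiffAt_cayley (c i) (hermParam_isHermitian e x i))
        (contDiff_hermParam e i).contDiffAt
  refine h.dimH_range_le.trans (le_of_eq ?_)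
  congr 1
  rw [Module.finrank_prod, Module.finrank_pi_fintype]
  simp only [Module.finrank_prod, Module.finrank_matrix, Complex.finrank_real_complex,
    Module.finrank_self, Finset.sum_const, Finset.card_univ, Fintype.card_fin, smul_eq_mul]
  ring

end Param

/-- The parametrization reaches every tuple of Hermitian matrices preserving a given subspace `p`,
written as the graph of `T` over the coordinates in `t`. -/
lemma exists_hermParam_eq {ι : Type*} [Fintype ι] [DecidableEq ι] {p : Submodule ℂ (ι → ℂ)}
    {t : Finset ι} {T : Matrix {i // i ∉ t} {i // i ∈ t} ℂ}
    (hT : ∀ x : ι → ℂ,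
      x ∈ p ↔ (fun j : {j // j ∉ t} => x j) = T *ᵥ fun i : {i // i ∈ t} => x i)
    {r : ℕ} {H : Fin r → Matrix ι ι ℂ} (hH : ∀ i, (H i).IsHermitian)
    (hp : ∀ i, ∀ v ∈ p, H i *ᵥ v ∈ p) :
    ∃ x : Param {i // i ∈ t} {i // i ∉ t} r,
      ∀ i, hermParam (Equiv.sumCompl (· ∈ t)) x i = H i := by
  set e := Equiv.sumCompl (· ∈ t) with he
  have key : ∀ i, ∃ R : Matrix {i // i ∈ t} {i // i ∈ t} ℝ × Matrix {i // i ∉ t} {i // i ∉ t} ℝ,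
      (H i).submatrix e e = frame T * fromBlocks (herm R.1) 0 0 (herm R.2) * (frame T)ᴴ := by
    intro i
    obtain ⟨Y, Z, hY, hZ, h⟩ := exists_frame_eq ((hH i).submatrix e) T (fun u => by
      set v : ι → ℂ := Sum.elim u (T *ᵥ u) ∘ e.symm with hv
      have hve : v ∘ e = Sum.elim u (T *ᵥ u) := by rw [hv]; ext; simp
      have hvp : v ∈ p := by
        rw [hT]
        have h1 : (fun j : {j // j ∉ t} => v j) = T *ᵥ u := by
          ext j; exact congrFun hve (Sum.inr j)
        have h2 : (fun j : {j // j ∈ t} => v j) = u := by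
          ext j; exact congrFun hve (Sum.inl j)
        rw [h1, h2]
      have h3 : (H i).submatrix e e *ᵥ Sum.elim u (T *ᵥ u) = (H i *ᵥ v) ∘ e := by
        rw [submatrix_mulVec_equiv, hv]
      rw [h3]
      exact (hT _).1 (hp i v hvp))
    obtain ⟨R₁, rfl⟩ := exists_herm_eq hY
    obtain ⟨R₂, rfl⟩ := exists_herm_eq hZ
    exact ⟨(R₁, R₂), h⟩
  choose R hR using key
  refine ⟨(T, R), fun i => ?_⟩
  rw [hermParam, ← hR, submatrix_submatrix]
  simp

/-- The difference of the two sides is `2 (r - 1) (a b - (n - 1)) = 2 (r - 1) (a - 1) (b - 1)`. -/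
lemma dim_count {a b n r : ℕ} (ha : 0 < a) (hb : 0 < b) (hab : a + b = n) (hr : 0 < r) :
    2 * (a * b) + r * (a ^ 2 + b ^ 2) ≤ r * n ^ 2 - 2 * (r - 1) * (n - 1) := by
  obtain ⟨a, rfl⟩ := Nat.exists_eq_add_of_lt ha
  obtain ⟨b, rfl⟩ := Nat.exists_eq_add_of_lt hb
  obtain ⟨r, rfl⟩ := Nat.exists_eq_add_of_lt hr
  subst hab
  apply Nat.le_sub_of_add_le
  have h1 : 0 + r + 1 - 1 = r := by omega
  have h2 : 0 + a + 1 + (0 + b + 1) - 1 = a + b + 1 := by omega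
  rw [h1, h2]
  nlinarith [Nat.zero_le (r * (a * b))]

/-! ### Covering the reducible locus -/

/-- Let `n ≥ 2` and `r ≥ 2`.  The set of reducible tuples `(A₁, …, A_r) ∈ U(n)^r` — tuples of
unitary matrices for which some subspace of `ℂⁿ` other than `{0}` and `ℂⁿ` is invariant under
all the `Aᵢ` — viewed as a subset of the metric space of `r`-tuples of `n × n` complex
matrices, has Hausdorff dimension at most `r n² − 2(r−1)(n−1)`. -/
theorem dimH_reducible_locus_le (n r : ℕ) (hn : 2 ≤ n) (hr : 2 ≤ r) :
    dimH {A : Fin r → Matrix (Fin n) (Fin n) ℂ |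
        (∀ i, A i ∈ Matrix.unitaryGroup (Fin n) ℂ) ∧
        ∃ p : Submodule ℂ (Fin n → ℂ), p ≠ ⊥ ∧ p ≠ ⊤ ∧
          ∀ i, ∀ v ∈ p, (A i).mulVec v ∈ p} ≤
      ((r * n ^ 2 - 2 * (r - 1) * (n - 1) : ℕ) : ℝ≥0∞) := by
  obtain ⟨c, hc, hc1⟩ := exists_circle_seq
  let J := {t : Finset (Fin n) // t.Nonempty ∧ tᶜ.Nonempty} × (Fin r → ℕ)
  let S : J → Set (Fin r → Matrix (Fin n) (Fin n) ℂ) := fun j =>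
    Set.range fun (x : Param {i // i ∈ j.1.1} {i // i ∉ j.1.1} r) i =>
      cayley (c (j.2 i)) (hermParam (Equiv.sumCompl (· ∈ j.1.1)) x i)
  refine (dimH_mono (t := ⋃ j, S j) ?_).trans ?_
  · rintro A ⟨hA, p, hbot, htop, hp⟩
    choose k H hH hHp hAH using fun i => exists_cayley_eq hc hc1 (hA i) (hp i)
    obtain ⟨t, T, hT⟩ := exists_graph p
    obtain ⟨x, hx⟩ := exists_hermParam_eq hT hH hHp
    have ht : t.Nonempty := by
      rw [Finset.nonempty_iff_ne_empty]
      rintro rfl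
      refine hbot ((Submodule.eq_bot_iff p).2 fun v hv => ?_)
      ext j
      simpa [Matrix.mulVec, dotProduct] using congrFun ((hT v).1 hv) ⟨j, by simp⟩
    have ht' : tᶜ.Nonempty := by
      rw [Finset.nonempty_iff_ne_empty, Ne, Finset.compl_eq_empty_iff]
      rintro rfl
      refine htop (Submodule.eq_top_iff'.2 fun v => (hT v).2 ?_)
      ext j
      exact absurd (Finset.mem_univ _) j.2
    refine Set.mem_iUnion.2 ⟨(⟨t, ht, ht'⟩, k), x, ?_⟩
    funext i
    rw [hAH i, ← hx i]
  · rw [dimH_iUnion]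
    refine iSup_le fun j => (dimH_range_cayley_hermParam_le _ _).trans (Nat.cast_le.2 ?_)
    have h1 : Fintype.card {i // i ∈ j.1.1} = j.1.1.card := Fintype.card_coe _
    have h2 : Fintype.card {i // i ∉ j.1.1} = j.1.1ᶜ.card := by
      rw [← Fintype.card_coe]
      exact Fintype.card_congr (Equiv.subtypeEquivRight fun i => by simp)
    rw [h1, h2]
    refine dim_count j.1.2.1.card_pos j.1.2.2.card_pos ?_ (by omega)
    rw [Finset.card_add_card_compl, Fintype.card_fin]
end

section
/- Suppose r ≥ 3, or r ≥ 2 and n ≥ 3. Then for every ρ ∈ U(n)^r and every open neighborhood U of the class [ρ] in X_r(U(n)), there exists an open set V with [ρ] ∈ V ⊆ U such that V is contractible and V ∩ X_r(U(n))^{irr} is simply connected (in particular, nonempty and path connected). -/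
/-!
Let `U(n)` act on the Euclidean space `E` of `r`-tuples of Hermitian matrices by simultaneous
conjugation. Choosing for each `ρ i` a scalar of modulus one whose negative is not an eigenvalue,
the rotated Cayley transform is an equivariant open embedding of `E` into `U(n)^r` whose image
contains `ρ`. The theorem thus concerns the quotient `q` of an orthogonal representation of a
compact group, and `V` is the image of a small ball around `ρ`.

*Contractibility.* The Dirichlet domain of `ρ`, consisting of the points of `E` closest to `ρ` within
their orbit, is a cone preserved by the straight contraction to `ρ`. Near `ρ`, two points of the
domain lie in the same orbit only if they differ by an element of the stabilizer of `ρ`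
(`HermTuple.exists_reach`); the contraction commutes with that stabilizer, so it descends to `V`.
The claim about orbits holds because the domain is orthogonal to the tangent space of the orbit of
`ρ`, while `g ρ - ρ` is tangent up to an error which is quadratic in its own norm
(`HermTuple.exists_quadratic_bound`).

*Simple connectivity upstairs.* The reducible tuples in `E` are covered by finitely many smooth
images of codimension `2 (r - 1) k (n - k) > 2`, with `0 < k < n`: block diagonal tuples, moved by a
matrix depending on an off-diagonal block (`HermTuple.exists_param`). Hence a loop of irreducible
tuples in the ball can be made smooth and then contracted in straight lines to a generic cone point
(`isSimplyConnected_inter_of_thin`).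

*Descent.* On irreducible tuples the action is free modulo scalars, so Dirichlet domains for the
stabilizer of `ρ` provide local sections of `q` and paths lift into the Dirichlet domain of `ρ`. Two
lifts of paths with the same end points end in the same orbit of the stabilizer of `ρ`. This
stabilizer is path connected, by scaling Cayley logarithms, so homotopies upstairs give homotopies
downstairs (`OrthRep.IsOrbitMap.simplyConnectedSpace`).
-/

/-- The unitary group `U(n)` of `n × n` complex unitary matrices. -/
abbrev Un (n : ℕ) : Type := ↥(Matrix.unitaryGroup (Fin n) ℂ)

/-- The character variety `X_r(U(n))`: the quotient topological space of `U(n)^r`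
by the diagonal conjugation action `g • (A₁, …, A_r) = (g A₁ g⁻¹, …, g A_r g⁻¹)`. -/
abbrev CharVarU (n r : ℕ) : Type :=
  Quotient (MulAction.orbitRel (ConjAct (Un n)) (Fin r → Un n))

/-- A tuple `(A₁, …, A_r)` of `n × n` unitary matrices is irreducible if no subspace of `ℂⁿ`
other than `{0}` and `ℂⁿ` is invariant under all the `Aᵢ`. -/
def IsIrreducibleTupleU {n r : ℕ} (A : Fin r → Un n) : Prop :=
  ∀ p : Submodule ℂ (Fin n → ℂ),
    (∀ i, ∀ v ∈ p, (A i : Matrix (Fin n) (Fin n) ℂ).mulVec v ∈ p) → p = ⊥ ∨ p = ⊤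

/-- The irreducible locus `X_r(U(n))^{irr}`: the subspace of classes of irreducible tuples. -/
def irrLocusU (n r : ℕ) : Set (CharVarU n r) :=
  {x | ∃ A : Fin r → Un n, IsIrreducibleTupleU A ∧
    Quotient.mk (MulAction.orbitRel (ConjAct (Un n)) (Fin r → Un n)) A = x}

open scoped unitInterval Topology RealInnerProductSpace Matrix
open Set

/-! ### Complements of thin sets are simply connected -/

/-- A loop that extends to a map of the cylinder `I × I` whose other end is collapsed to one point
is null-homotopic relative to its base point. -/
theorem homotopic_refl_of_cone {Y : Type*} [TopologicalSpace Y] {x q : Y} (p : Path x x)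
    (H : C(I × I, Y)) (h0 : ∀ t, H (0, t) = p t) (h1 : ∀ t, H (1, t) = q)
    (h2 : ∀ s, H (s, 0) = H (s, 1)) : p.Homotopic (Path.refl x) := by
  let F : p.toContinuousMap.Homotopy (ContinuousMap.const I q) :=
    { toContinuousMap := H
      map_zero_left := h0
      map_one_left := h1 }
  let e : Path x q :=
    { toFun := fun s => H (s, 0)
      continuous_toFun := by fun_prop
      source' := by simp [h0]
      target' := by simp [h1] }
  have key := Path.Homotopic.map_trans_evalAt F Path.id
  have key2 : (p.trans e).Homotopic (e.trans (Path.refl q)) := by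
    have := key.pathCast (x₂ := x) (x₃ := q) (by simp) (by simp)
    convert! this using 1
    · ext t
      change (p.trans e) t = ((Path.id.map (map_continuous p.toContinuousMap)).trans (F.evalAt 1)) t
      simp only [Path.trans_apply]
      split_ifs
      · rfl
      · exact h2 _
  rw [← Path.Homotopic.Quotient.eq] at key2 ⊢
  simp only [Path.Homotopic.Quotient.mk_trans, Path.Homotopic.Quotient.mk_refl,
    Path.Homotopic.Quotient.trans_refl] at key2
  calc Path.Homotopic.Quotient.mk p
      = ((Path.Homotopic.Quotient.mk p).trans (.mk e)).trans (.symm (.mk e)) := by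
        rw [Path.Homotopic.Quotient.trans_assoc]; simp
    _ = _ := by rw [key2]; simp

/-- If the complement of `I'` is covered by finitely many `C¹` images of dimension less than
`dim E - 2`, then the segments from a generic point `q` to the points of two given `C¹` curves stay
in `I'`, except possibly at their end on the curve.

A bad `q` lies on a line through a point of a curve and a point of the complement of `I'`, and these
lines sweep out `C¹` images of dimension less than `dim E`. -/
theorem exists_cone_point {E : Type*} [NormedAddCommGroup E] [NormedSpace ℝ E]
    [FiniteDimensional ℝ E] {B I' : Set E} (hBo : IsOpen B) (hBn : B.Nonempty)
    {ι : Type*} [Finite ι] {P : ι → Type*} [∀ k, NormedAddCommGroup (P k)]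
    [∀ k, NormedSpace ℝ (P k)] [∀ k, FiniteDimensional ℝ (P k)]
    (φ : ∀ k, P k → E) (hφ : ∀ k, ContDiff ℝ 1 (φ k))
    (hdim : ∀ k, Module.finrank ℝ (P k) + 2 < Module.finrank ℝ E)
    (hcov : I'ᶜ ⊆ ⋃ k, range (φ k)) (f : Bool → ℝ → E) (hf : ∀ j, ContDiff ℝ 1 (f j)) :
    ∃ q ∈ B, ∀ j : Bool, ∀ s t : ℝ, s < 1 → (1 - s) • q + s • f j t ∈ I' := by
  -- `Φ` sends `(z, u, t)` to the point of the line through `f t` and `φ z` with parameter `u`;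
  -- if the segment from `q` to `f t` meets `φ z` at parameter `s`, then `u = (1 - s)⁻¹`
  let Φ : ∀ a : ι × Bool, (P a.1 × ℝ × ℝ) → E := fun a z =>
    z.2.1 • φ a.1 z.1 - (z.2.1 - 1) • f a.2 z.2.2
  have hΦ : ∀ a, ContDiff ℝ 1 (Φ a) := by
    intro a
    have h1 := hφ a.1
    have h2 := hf a.2
    refine ContDiff.sub (ContDiff.smul (by fun_prop) (h1.comp contDiff_fst))
      (ContDiff.smul (by fun_prop) (h2.comp (by fun_prop)))
  have hd : Dense (⋃ a, range (Φ a))ᶜ := by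
    rcases isEmpty_or_nonempty (ι × Bool) with he | hne
    · simp
    · apply dense_compl_of_dimH_lt_finrank
      rw [dimH_iUnion]
      obtain ⟨a, ha⟩ := exists_eq_ciSup_of_finite (f := fun a => dimH (range (Φ a)))
      rw [← ha]
      refine (hΦ a).dimH_range_le.trans_lt ?_
      have := hdim a.1
      simp only [Module.finrank_prod, Module.finrank_self]
      exact_mod_cast this
  obtain ⟨q, hqB, hq⟩ := hd.inter_open_nonempty B hBo hBn
  refine ⟨q, hqB, fun j s t hs => ?_⟩
  by_contra hcon
  obtain ⟨k, z, hz⟩ := mem_iUnion.1 (hcov hcon)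
  apply hq
  refine mem_iUnion.2 ⟨(k, j), (z, (1 - s)⁻¹, t), ?_⟩
  have h1 : (1 - s) ≠ 0 := by linarith
  simp only [Φ, hz, smul_add, smul_smul, inv_mul_cancel₀ h1, one_smul]
  have : (1 - s)⁻¹ * s = (1 - s)⁻¹ - 1 := by field_simp; ring
  rw [this]; abel

/-- Removing from a convex open set a closed set covered by finitely many `C¹` images of codimension
greater than two leaves a simply connected set.

A loop is first replaced by a nearby Bernstein polynomial, which is smooth, and then contracted
along straight lines to a generic cone point. -/
theorem isSimplyConnected_inter_of_thin {E : Type*} [NormedAddCommGroup E] [NormedSpace ℝ E]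
    [FiniteDimensional ℝ E] {B I' : Set E} (hBo : IsOpen B) (hBc : Convex ℝ B) (hBn : B.Nonempty)
    (hIo : IsOpen I')
    {ι : Type*} [Finite ι] {P : ι → Type*} [∀ k, NormedAddCommGroup (P k)]
    [∀ k, NormedSpace ℝ (P k)] [∀ k, FiniteDimensional ℝ (P k)]
    (φ : ∀ k, P k → E) (hφ : ∀ k, ContDiff ℝ 1 (φ k))
    (hdim : ∀ k, Module.finrank ℝ (P k) + 2 < Module.finrank ℝ E)
    (hcov : I'ᶜ ⊆ ⋃ k, range (φ k)) : IsSimplyConnected (B ∩ I') := by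
  have hcone := fun f hf => exists_cone_point hBo hBn φ hφ hdim hcov f hf
  have hpc : IsPathConnected (B ∩ I') := by
    rw [isPathConnected_iff]
    constructor
    · obtain ⟨q, hq, hq'⟩ := hcone (fun _ _ => 0) (fun _ => contDiff_const)
      exact ⟨q, hq, by simpa using hq' true 0 0 one_pos⟩
    · intro x hx y hy
      obtain ⟨q, hq, hq'⟩ := hcone (fun j _ => if j then x else y) (fun _ => contDiff_const)
      have key : ∀ z ∈ B ∩ I', (∀ s : ℝ, s < 1 → (1 - s) • q + s • z ∈ I') →
          JoinedIn (B ∩ I') q z := by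
        intro z hz h
        apply JoinedIn.of_segment_subset
        rintro w ⟨a, b, ha, hb, hab, rfl⟩
        refine ⟨hBc hq hz.1 ha hb hab, ?_⟩
        rcases eq_or_lt_of_le (show b ≤ 1 by linarith) with h1 | h1
        · obtain rfl : a = 0 := by linarith
          simpa [h1] using hz.2
        · obtain rfl : a = 1 - b := by linarith
          exact h b h1
      exact (key x hx fun s hs => by simpa using hq' true s 0 hs).symm.trans
        (key y hy fun s hs => by simpa using hq' false s 0 hs)
  rw [IsSimplyConnected, simply_connected_iff_loops_nullhomotopic]
  refine ⟨isPathConnected_iff_pathConnectedSpace.1 hpc, fun x γ => ?_⟩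
  let g : C(I, E) := ⟨fun t => (γ t : E), by fun_prop⟩
  have hso : IsOpen (B ∩ I') := hBo.inter hIo
  obtain ⟨δ, hδ, hδs⟩ := (isCompact_range g.continuous).exists_thickening_subset_open hso
    (by rintro _ ⟨t, rfl⟩; exact (γ t).2)
  obtain ⟨n, hn0, hn⟩ : ∃ n : ℕ, n ≠ 0 ∧ dist (bernsteinApproximation n g) g < δ := by
    have := (Metric.tendsto_nhds.1 (bernsteinApproximation_uniform g) δ hδ).and
      (Filter.eventually_ne_atTop 0)
    obtain ⟨n, h1, h2⟩ := this.exists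
    exact ⟨n, h2, h1⟩
  have hball : ∀ t : I, Metric.ball (g t) δ ⊆ B ∩ I' := fun t z hz =>
    hδs (Metric.mem_thickening_iff.2 ⟨g t, mem_range_self t, hz⟩)
  have hnt : ∀ t, bernsteinApproximation n g t ∈ Metric.ball (g t) δ := fun t =>
    (ContinuousMap.dist_apply_le_dist t).trans_lt hn
  let b : Path x x :=
    { toFun := fun t => ⟨bernsteinApproximation n g t, hball t (hnt t)⟩
      continuous_toFun := by fun_prop
      source' := by ext; simp [g]
      target' := by ext; simp [g, bernsteinApproximation.apply_one hn0] }
  have h1 : γ.Homotopic b := by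
    have hmem : ∀ p : I × I, (1 - (p.1 : ℝ)) • g p.2 + (p.1 : ℝ) • bernsteinApproximation n g p.2
        ∈ B ∩ I' := by
      intro p
      apply hball p.2
      exact (convex_ball (g p.2) δ) (Metric.mem_ball_self hδ) (hnt p.2)
        (by have := p.1.2.2; linarith) p.1.2.1 (by ring)
    refine ⟨{ toFun := fun p => ⟨_, hmem p⟩, continuous_toFun := by fun_prop,
              map_zero_left := ?_, map_one_left := ?_, prop' := ?_ }⟩
    · intro t; ext; simp [g]
    · intro t; ext; simp [b]
    · intro t y hy
      ext
      simp only [mem_insert_iff, mem_singleton_iff] at hy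
      rcases hy with rfl | rfl
      · simp [g, ← add_smul]
      · simp [g, bernsteinApproximation.apply_one hn0, ← add_smul]
  refine h1.trans ?_
  -- the Bernstein polynomial extends to a smooth curve on the whole line
  let f : ℝ → E := fun t => ∑ k : Fin (n + 1),
    ((n.choose k : ℝ) * t ^ (k : ℕ) * (1 - t) ^ (n - k)) • g (bernstein.z k)
  have hf : ContDiff ℝ 1 f := by
    refine ContDiff.sum fun k _ => ContDiff.smul ?_ contDiff_const
    fun_prop
  have hfb : ∀ t : I, f t = bernsteinApproximation n g t := by
    intro t
    rw [bernsteinApproximation.apply]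
    simp only [f, bernstein_apply]
  obtain ⟨q, hq, hq'⟩ := hcone (fun _ => f) (fun _ => hf)
  have hmem : ∀ p : I × I, (p.1 : ℝ) • q + (1 - (p.1 : ℝ)) • bernsteinApproximation n g p.2
      ∈ B ∩ I' := by
    intro p
    have hp := p.1.2
    refine ⟨hBc hq (hball _ (hnt p.2)).1 hp.1 (by linarith [hp.2]) (by ring), ?_⟩
    rcases eq_or_lt_of_le hp.1 with h0 | h0
    · rw [← h0]; simpa using (hball _ (hnt p.2)).2
    · have := hq' true (1 - p.1) p.2 (by linarith)
      rw [hfb] at this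
      simpa using this
  have hqs : q ∈ B ∩ I' := ⟨hq, by simpa using hq' true 0 0 one_pos⟩
  refine homotopic_refl_of_cone (q := ⟨q, hqs⟩) b
    ⟨fun p => ⟨_, hmem p⟩, by fun_prop⟩ ?_ ?_ ?_
  · intro t; ext; simp [b]
  · intro t; ext; simp
  · intro s; ext; simp [bernsteinApproximation.apply_one hn0, g]

/-! ### Orthogonal representations and Dirichlet domains -/

/-- A continuous orthogonal representation of a topological group on a real inner product space.
Only joint continuity of the action is recorded; each operator is linear and isometric. -/
structure OrthRep (G E : Type*) [Group G] [TopologicalSpace G] [NormedAddCommGroup E]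
    [InnerProductSpace ℝ E] where
  act : G → E →ₗ[ℝ] E
  one : ∀ x, act 1 x = x
  mul : ∀ g h x, act (g * h) x = act g (act h x)
  inner : ∀ g x y, ⟪act g x, act g y⟫ = ⟪x, y⟫
  cont : Continuous fun p : G × E => act p.1 p.2

namespace OrthRep

variable {G E X : Type*} [Group G] [TopologicalSpace G] [NormedAddCommGroup E]
    [InnerProductSpace ℝ E] [TopologicalSpace X] (R : OrthRep G E)

theorem norm_act (g : G) (x : E) : ‖R.act g x‖ = ‖x‖ := by
  rw [@norm_eq_sqrt_real_inner E, R.inner, ← norm_eq_sqrt_real_inner]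

theorem inv_act (g : G) (x : E) : R.act g⁻¹ (R.act g x) = x := by
  rw [← R.mul, inv_mul_cancel, R.one]

theorem act_inv (g : G) (x : E) : R.act g (R.act g⁻¹ x) = x := by
  rw [← R.mul, mul_inv_cancel, R.one]

theorem inner_act_left (g : G) (x y : E) : ⟪R.act g x, y⟫ = ⟪x, R.act g⁻¹ y⟫ := by
  rw [← R.inner g x, R.act_inv]

theorem continuous_act (g : G) : Continuous (R.act g) :=
  R.cont.comp (Continuous.prodMk_right g)

/-- The stabilizer of a vector. -/
def stab (a : E) : Subgroup G where
  carrier := {g | R.act g a = a}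
  mul_mem' := by
    intro g h hg hh
    simp only [mem_ofPred_eq] at *
    rw [R.mul, hh, hg]
  one_mem' := R.one a
  inv_mem' := by
    intro g hg
    simp only [mem_ofPred_eq] at *
    conv_lhs => rw [← hg]
    rw [R.inv_act]

theorem mem_stab {a : E} {g : G} : g ∈ R.stab a ↔ R.act g a = a := Iff.rfl

theorem isClosed_stab (a : E) : IsClosed (R.stab a : Set G) :=
  isClosed_eq (R.cont.comp (by fun_prop : Continuous fun g : G => (g, a))) continuous_const

theorem stab_zero : R.stab 0 = ⊤ := by
  ext g; simp [mem_stab]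

/-- The Dirichlet domain of `c` for `Γ`: the points which are at least as close to `c` as every
other point of their `Γ`-orbit. Since the action is isometric, this amounts to maximizing the inner
product with `c` along the orbit, so the domain is a closed cone. -/
def dir (Γ : Subgroup G) (c : E) : Set E := {x | ∀ g ∈ Γ, ⟪R.act g x, c⟫ ≤ ⟪x, c⟫}

theorem isClosed_dir (Γ : Subgroup G) (c : E) : IsClosed (R.dir Γ c) := by
  have : R.dir Γ c = ⋂ g ∈ Γ, {x | ⟪R.act g x, c⟫ ≤ ⟪x, c⟫} := by ext; simp [dir]
  rw [this]
  refine isClosed_biInter fun g _ => isClosed_le ?_ ?_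
  · exact (R.continuous_act g).inner continuous_const
  · fun_prop

theorem norm_act_sub_sq (g : G) (x c : E) :
    ‖R.act g x - c‖ ^ 2 = ‖x‖ ^ 2 - 2 * ⟪R.act g x, c⟫ + ‖c‖ ^ 2 := by
  rw [norm_sub_sq_real, R.norm_act]

theorem norm_sub_le_of_mem_dir {Γ : Subgroup G} {c x : E} (hx : x ∈ R.dir Γ c) {g : G}
    (hg : g ∈ Γ) : ‖x - c‖ ≤ ‖R.act g x - c‖ := by
  have h1 := R.norm_act_sub_sq g x c
  have h2 := norm_sub_sq_real x c
  have h3 := hx g hg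
  exact le_of_sq_le_sq (by linarith) (norm_nonneg _)
where
  le_of_sq_le_sq {a b : ℝ} (h : a ^ 2 ≤ b ^ 2) (hb : 0 ≤ b) : a ≤ b := abs_le_of_sq_le_sq' h hb |>.2

theorem self_mem_dir (Γ : Subgroup G) (c : E) : c ∈ R.dir Γ c := by
  intro g _
  refine (real_inner_le_norm _ _).trans ?_
  rw [R.norm_act, real_inner_self_eq_norm_mul_norm]

theorem act_mem_dir {Γ : Subgroup G} {c x : E} (hx : x ∈ R.dir Γ c) {s : G} (hs : s ∈ Γ)
    (hsc : R.act s c = c) : R.act s x ∈ R.dir Γ c := by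
  intro g hg
  rw [← R.mul]
  refine (hx _ (Γ.mul_mem hg hs)).trans (le_of_eq ?_)
  rw [← R.inner s x c, hsc]

theorem exists_act_mem_dir [CompactSpace G] {Γ : Subgroup G} (hΓ : IsClosed (Γ : Set G))
    (c x : E) : ∃ g ∈ Γ, R.act g x ∈ R.dir Γ c := by
  have hc : Continuous fun g : G => R.act g x :=
    R.cont.comp (by fun_prop : Continuous fun g : G => (g, x))
  obtain ⟨g, hg, hmax⟩ := hΓ.isCompact.exists_isMaxOn ⟨1, Γ.one_mem⟩
    (f := fun g => ⟪R.act g x, c⟫) (hc.inner continuous_const).continuousOn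
  refine ⟨g, hg, fun h hh => ?_⟩
  rw [← R.mul]
  exact hmax (Γ.mul_mem hh hg)

/-- Sums of nonnegative multiples of `c` and of a point of the domain stay in the domain; in
particular the straight contraction to `c` preserves it. -/
theorem segment_mem_dir {Γ : Subgroup G} {c x : E} (hx : x ∈ R.dir Γ c) {a b : ℝ} (ha : 0 ≤ a)
    (hb : 0 ≤ b) : a • x + b • c ∈ R.dir Γ c := by
  intro g hg
  have h1 := hx g hg
  have h2 := R.self_mem_dir Γ c g hg
  simp only [map_add, map_smul, inner_add_left, real_inner_smul_left]
  gcongr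

/-- Within distance `ε` of `c`, the Dirichlet domain meets each `Γ`-orbit in a single orbit of the
stabilizer of `c`: an element of `Γ` which moves such a point inside the domain must fix `c`. -/
def Reach (Γ : Subgroup G) (c : E) (ε : ℝ) : Prop :=
  ∀ x ∈ R.dir Γ c, ‖x - c‖ < ε → ∀ g ∈ Γ, R.act g x ∈ R.dir Γ c → R.act g c = c

/-- A criterion for `Reach`. Suppose that the Dirichlet domain is orthogonal to a set `T` of vectors
(tangent to the orbit of `c`), and that every displacement `g c - c` is within a quadratic error of
an element of `T`. Then the domain has reach `1 / (2 K)` at `c`.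

If `x` and `g x` are both in the domain, then `x` is orthogonal to `w = g⁻¹ c - c`. Since `c` and
`g⁻¹ c` have the same norm, `⟪c, w⟫ = -‖w‖² / 2`; as `w` is tangent up to `O(‖w‖²)`, this is
impossible for `x` close to `c` unless `w = 0`. -/
theorem reach_of_tangent {Γ : Subgroup G} {c : E} (T : Set E) {K : ℝ} (hK : 0 < K)
    (horth : ∀ x ∈ R.dir Γ c, ∀ y ∈ T, ⟪x, y⟫ = 0)
    (hquad : ∀ g ∈ Γ, ∃ y ∈ T, ‖R.act g c - c - y‖ ≤ K * ‖R.act g c - c‖ ^ 2) :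
    R.Reach Γ c (1 / (2 * K)) := by
  intro x hx hxc g hg hgx
  have hginv : g⁻¹ ∈ Γ := Γ.inv_mem hg
  have h1 : ⟪R.act g x, c⟫ = ⟪x, c⟫ := by
    refine le_antisymm (hx g hg) ?_
    have := hgx _ hginv
    rwa [R.inv_act] at this
  rw [R.inner_act_left] at h1
  obtain ⟨y, hy, hle⟩ := hquad _ hginv
  set w := R.act g⁻¹ c - c with hw
  have h2 : ⟪x, w⟫ = 0 := by rw [hw, inner_sub_right, h1, sub_self]
  have h3 : 2 * ⟪c, w⟫ = - ‖w‖ ^ 2 := by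
    have := norm_add_sq_real c w
    have h4 : c + w = R.act g⁻¹ c := by rw [hw]; abel
    rw [h4, R.norm_act] at this
    linarith
  have h5 : ⟪x - c, w - y⟫ = ‖w‖ ^ 2 / 2 := by
    rw [inner_sub_left, inner_sub_right x w y, inner_sub_right c w y, horth x hx y hy,
      horth c (R.self_mem_dir Γ c) y hy]
    linarith
  have h6 : ‖w‖ ^ 2 / 2 ≤ ‖x - c‖ * (K * ‖w‖ ^ 2) := by
    rw [← h5]
    exact (real_inner_le_norm _ _).trans (by gcongr)
  have h7 : ‖w‖ = 0 := by
    by_contra hne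
    have hpos : 0 < ‖w‖ ^ 2 := by positivity
    have : ‖x - c‖ * (K * ‖w‖ ^ 2) < 1 / (2 * K) * (K * ‖w‖ ^ 2) := by gcongr
    have h8 : 1 / (2 * K) * (K * ‖w‖ ^ 2) = ‖w‖ ^ 2 / 2 := by field_simp
    linarith
  have h9 : R.act g⁻¹ c = c := sub_eq_zero.1 (norm_eq_zero.1 h7)
  conv_lhs => rw [← h9]
  rw [R.act_inv]

/-- An open quotient map (onto its image) whose fibres are orbits. -/
structure IsOrbitMap (q : E → X) : Prop where
  cont : Continuous q
  isOpenMap : IsOpenMap q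
  eq_iff : ∀ x y, q x = q y ↔ ∃ g, R.act g x = y

variable {R} {q : E → X}

/-- The image of a closed set is closed in the range: its saturation is closed because the group is
compact. -/
theorem IsOrbitMap.exists_isClosed [CompactSpace G] [IsTopologicalGroup G]
    (hq : R.IsOrbitMap q) {K : Set E}
    (hK : IsClosed K) : ∃ F : Set X, IsClosed F ∧ q '' K = F ∩ range q := by
  have hGK : IsClosed (Prod.snd '' {p : G × E | R.act p.1 p.2 ∈ K}) :=
    isClosedMap_snd_of_compactSpace _ (hK.preimage R.cont)
  refine ⟨(q '' (Prod.snd '' {p : G × E | R.act p.1 p.2 ∈ K})ᶜ)ᶜ,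
    (hq.isOpenMap _ hGK.isOpen_compl).isClosed_compl, ?_⟩
  ext v
  constructor
  · rintro ⟨x, hx, rfl⟩
    refine ⟨?_, mem_range_self x⟩
    rintro ⟨y, hy, hyx⟩
    obtain ⟨g, hg⟩ := (hq.eq_iff _ _).1 hyx
    exact hy ⟨(g, y), by simpa [hg] using hx, rfl⟩
  · rintro ⟨hv, x, rfl⟩
    by_contra hcon
    apply hv
    refine ⟨x, ?_, rfl⟩
    rintro ⟨⟨g, y⟩, hgy, rfl⟩
    exact hcon ⟨R.act g y, hgy, ((hq.eq_iff _ _).2 ⟨g, rfl⟩).symm⟩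

section level

variable [CompactSpace G] [IsTopologicalGroup G] (hq : R.IsOrbitMap q) {ρ : E} {ε : ℝ}
  (hR : R.Reach ⊤ ρ ε)

include hq in
/-- Every orbit meeting the ball around `ρ` meets it inside the Dirichlet domain of `ρ`. -/
theorem IsOrbitMap.exists_lift {v : X} (hv : v ∈ q '' Metric.ball ρ ε) :
    ∃ x ∈ R.dir ⊤ ρ ∩ Metric.ball ρ ε, q x = v := by
  obtain ⟨x, hx, rfl⟩ := hv
  obtain ⟨g, -, hg⟩ := R.exists_act_mem_dir (Γ := ⊤) isClosed_univ ρ x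
  refine ⟨R.act g x, ⟨hg, ?_⟩, ((hq.eq_iff _ _).2 ⟨g, rfl⟩).symm⟩
  have := R.norm_sub_le_of_mem_dir hg (g := g⁻¹) (by trivial)
  rw [R.inv_act] at this
  rw [mem_ball_iff_norm] at hx ⊢
  exact this.trans_lt hx

include hq hR in
theorem IsOrbitMap.eq_in_dir {x y : E} (hx : x ∈ R.dir ⊤ ρ) (hxb : x ∈ Metric.ball ρ ε)
    (hy : y ∈ R.dir ⊤ ρ) (hxy : q x = q y) :
    y ∈ Metric.ball ρ ε ∧ ∃ s ∈ R.stab ρ, R.act s x = y := by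
  obtain ⟨g, rfl⟩ := (hq.eq_iff _ _).1 hxy
  rw [mem_ball_iff_norm] at hxb ⊢
  refine ⟨?_, g, hR x hx hxb g trivial hy, rfl⟩
  have := R.norm_sub_le_of_mem_dir hy (g := g⁻¹) (by trivial)
  rw [R.inv_act] at this
  exact this.trans_lt hxb

include hq hR in
/-- Near `ρ`, the quotient map restricted to the Dirichlet domain of `ρ` is open onto its image. -/
theorem IsOrbitMap.isOpen_image_dir {P : Set E} (hP : IsOpen P) (hPb : P ⊆ Metric.ball ρ ε) :
    IsOpen (q '' (R.dir ⊤ ρ ∩ P)) := by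
  let P' : Set E := ⋃ s ∈ R.stab ρ, R.act s ⁻¹' P
  have hP' : IsOpen P' := isOpen_biUnion fun s _ => hP.preimage (R.continuous_act s)
  obtain ⟨F, hF, hFq⟩ := hq.exists_isClosed ((R.isClosed_dir ⊤ ρ).inter hP'.isClosed_compl)
  have : q '' (R.dir ⊤ ρ ∩ P) = q '' Metric.ball ρ ε ∩ Fᶜ := by
    ext v
    constructor
    · rintro ⟨x, ⟨hx, hxP⟩, rfl⟩
      refine ⟨⟨x, hPb hxP, rfl⟩, fun hxF => ?_⟩
      have : q x ∈ F ∩ range q := ⟨hxF, mem_range_self _⟩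
      rw [← hFq] at this
      obtain ⟨y, ⟨hy, hyP⟩, hyx⟩ := this
      obtain ⟨-, s, hs, hsx⟩ := hq.eq_in_dir hR hx (hPb hxP) hy hyx.symm
      refine hyP (mem_biUnion ((R.stab ρ).inv_mem hs) ?_)
      rw [← hsx, mem_preimage, R.inv_act]
      exact hxP
    · rintro ⟨hv, hvF⟩
      obtain ⟨x, ⟨hx, hxb⟩, rfl⟩ := hq.exists_lift hv
      have : x ∈ P' := by
        by_contra hcon
        have : q x ∈ F ∩ range q := by rw [← hFq]; exact ⟨x, ⟨hx, hcon⟩, rfl⟩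
        exact hvF this.1
      obtain ⟨s, hs, hsx⟩ := mem_iUnion₂.1 this
      exact ⟨R.act s x, ⟨R.act_mem_dir hx trivial hs, hsx⟩, ((hq.eq_iff _ _).2 ⟨s, rfl⟩).symm⟩
  rw [this]
  exact (hq.isOpenMap _ Metric.isOpen_ball).inter hF.isOpen_compl

include hq hR in
/-- The image of the ball in the quotient is contractible. The straight contraction of the Dirichlet
domain to `ρ` commutes with the stabilizer of `ρ`, so it descends along the restricted quotient
map. -/
theorem IsOrbitMap.contractible (hε : 0 < ε) : ContractibleSpace ↥(q '' Metric.ball ρ ε) := by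
  set V := q '' Metric.ball ρ ε with hV
  set A := R.dir ⊤ ρ ∩ Metric.ball ρ ε with hA
  have hAV : ∀ x : A, q x ∈ V := fun x => ⟨x, x.2.2, rfl⟩
  let qA : A → V := fun x => ⟨q x, hAV x⟩
  have hqAc : Continuous qA := (hq.cont.comp continuous_subtype_val).subtype_mk _
  have hqAs : Function.Surjective qA := by
    rintro ⟨v, hv⟩
    obtain ⟨x, hx, rfl⟩ := hq.exists_lift hv
    exact ⟨⟨x, hx⟩, rfl⟩
  have hqAo : IsOpenMap qA := by
    intro O hO
    obtain ⟨P, hP, rfl⟩ := isOpen_induced_iff.1 hO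
    have := (hq.isOpen_image_dir hR (hP.inter Metric.isOpen_ball)
      inter_subset_right).preimage (continuous_subtype_val (p := (· ∈ V)))
    convert this using 1
    ext ⟨v, hv⟩
    constructor
    · rintro ⟨x, hx, hxv⟩
      exact ⟨x, ⟨x.2.1, hx, x.2.2⟩, congrArg Subtype.val hxv⟩
    · rintro ⟨x, ⟨hx, hxP, hxb⟩, hxv⟩
      exact ⟨⟨x, hx, hxb⟩, hxP, Subtype.ext hxv⟩
  have hmemA : ∀ (t : I) (x : A), (1 - (t : ℝ)) • (x : E) + (t : ℝ) • ρ ∈ A := by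
    intro t x
    have h1 : 0 ≤ 1 - (t : ℝ) := by linarith [t.2.2]
    exact ⟨R.segment_mem_dir x.2.1 h1 t.2.1,
      (convex_ball ρ ε) x.2.2 (Metric.mem_ball_self hε) h1 t.2.1 (by ring)⟩
  let r := Function.surjInv hqAs
  let H : I × V → V := fun p => qA ⟨_, hmemA p.1 (r p.2)⟩
  -- `H` does not depend on the chosen lift `r`
  have hHA : ∀ (t : I) (x : A), H (t, qA x) = qA ⟨_, hmemA t x⟩ := by
    intro t x
    have h0 : qA (r (qA x)) = qA x := Function.surjInv_eq hqAs _
    obtain ⟨-, s, hs, hsx⟩ := hq.eq_in_dir hR (r (qA x)).2.1 (r (qA x)).2.2 x.2.1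
      (congrArg Subtype.val h0)
    apply Subtype.ext
    refine (hq.eq_iff _ _).2 ⟨s, ?_⟩
    simp only [map_add, map_smul, hsx, R.mem_stab.1 hs]
  have hH : Continuous H := by
    have hquot : Topology.IsQuotientMap (Prod.map (id : I → I) qA) :=
      (IsOpenMap.id.prodMap hqAo).isQuotientMap (continuous_id.prodMap hqAc)
        (Function.surjective_id.prodMap hqAs)
    rw [hquot.continuous_iff]
    have : H ∘ Prod.map (id : I → I) qA = fun p : I × A => qA ⟨_, hmemA p.1 p.2⟩ := by
      ext p : 1
      exact hHA p.1 p.2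
    rw [this]
    exact hqAc.comp (by fun_prop)
  have hρA : ρ ∈ A := ⟨R.self_mem_dir ⊤ ρ, Metric.mem_ball_self hε⟩
  rw [contractible_iff_id_nullhomotopic]
  refine ⟨qA ⟨ρ, hρA⟩, ⟨{ toFun := H, continuous_toFun := hH, map_zero_left := ?_,
                          map_one_left := ?_ }⟩⟩
  · intro v
    obtain ⟨x, rfl⟩ := hqAs v
    rw [hHA]
    simp
  · intro v
    obtain ⟨x, rfl⟩ := hqAs v
    rw [hHA]
    simp

end level

end OrthRep

/-! ### Lifting paths through the quotient -/

namespace OrthRep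

variable {G E X : Type*} [Group G] [TopologicalSpace G] [NormedAddCommGroup E]
    [InnerProductSpace ℝ E] [TopologicalSpace X] {R : OrthRep G E} {q : E → X}

/-- If a closed set `D` meets every orbit over `O` exactly once, the resulting section over `O` is
continuous. -/
theorem IsOrbitMap.exists_section [CompactSpace G] [IsTopologicalGroup G]
    (hq : R.IsOrbitMap q) {D : Set E} {O : Set X} (hD : IsClosed D)
    (hinj : InjOn q (D ∩ q ⁻¹' O)) (hsurj : O ⊆ q '' D) :
    ∃ τ : X → E, ContinuousOn τ O ∧ ∀ v ∈ O, τ v ∈ D ∧ q (τ v) = v := by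
  classical
  have hex : ∀ v, ∃ x : E, v ∈ O → x ∈ D ∧ q x = v := by
    intro v
    by_cases hv : v ∈ O
    · obtain ⟨x, hx⟩ := hsurj hv
      exact ⟨x, fun _ => hx⟩
    · exact ⟨0, fun h => absurd h hv⟩
  choose τ hτ using hex
  refine ⟨τ, continuousOn_iff_isClosed.2 fun t ht => ?_, hτ⟩
  obtain ⟨F, hF, hFq⟩ := hq.exists_isClosed (ht.inter hD)
  refine ⟨F, hF, ?_⟩
  ext v
  constructor
  · rintro ⟨hvt, hv⟩
    have : v ∈ F ∩ range q := by
      rw [← hFq]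
      exact ⟨τ v, ⟨hvt, (hτ v hv).1⟩, (hτ v hv).2⟩
    exact ⟨this.1, hv⟩
  · rintro ⟨hvF, hv⟩
    have : v ∈ q '' (t ∩ D) := by
      rw [hFq]
      exact ⟨hvF, τ v, (hτ v hv).2⟩
    obtain ⟨y, ⟨hyt, hyD⟩, hyv⟩ := this
    have h1 : y = τ v := hinj ⟨hyD, by rw [mem_preimage, hyv]; exact hv⟩
      ⟨(hτ v hv).1, by rw [mem_preimage, (hτ v hv).2]; exact hv⟩ (by rw [hyv, (hτ v hv).2])
    exact ⟨by rw [mem_preimage, ← h1]; exact hyt, hv⟩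

/-- Around a point of the free locus `J` lying in the Dirichlet domain of `ρ`, the quotient map has
a continuous local section with values in that domain.

The closed set carrying the section is the Dirichlet domain of `c` for the stabilizer of `ρ`,
intersected with the Dirichlet domain of `ρ` for the whole group: two of its points near `c` in the
same orbit differ first by an element of the stabilizer of `ρ`, hence by one fixing `c`, hence by
one acting trivially. -/
theorem IsOrbitMap.exists_local_section [CompactSpace G] [IsTopologicalGroup G]
    (hq : R.IsOrbitMap q) {ρ : E} {ε : ℝ} (hR : R.Reach ⊤ ρ ε) {J : Set E} (hJo : IsOpen J)
    (hJinv : ∀ g, ∀ x ∈ J, R.act g x ∈ J)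
    (hJfree : ∀ c ∈ J, ∀ g, R.act g c = c → ∀ x, R.act g x = x) {c : E}
    (hc : c ∈ R.dir ⊤ ρ ∩ Metric.ball ρ ε ∩ J)
    (hRc : ∃ ε' > 0, R.Reach (R.stab ρ) c ε') :
    ∃ O : Set X, IsOpen O ∧ q c ∈ O ∧ ∃ τ : X → E, ContinuousOn τ O ∧
      ∀ v ∈ O, τ v ∈ R.dir ⊤ ρ ∩ Metric.ball ρ ε ∩ J ∧ q (τ v) = v := by
  obtain ⟨ε', hε', hR'⟩ := hRc
  set P := Metric.ball ρ ε ∩ J ∩ Metric.ball c ε' with hP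
  have hPo : IsOpen P := (Metric.isOpen_ball.inter hJo).inter Metric.isOpen_ball
  have hPb : P ⊆ Metric.ball ρ ε := fun x hx => hx.1.1
  set D := R.dir (R.stab ρ) c ∩ R.dir ⊤ ρ with hD
  have hDc : IsClosed D := (R.isClosed_dir _ _).inter (R.isClosed_dir _ _)
  set O := q '' (R.dir ⊤ ρ ∩ P) with hO
  have key : ∀ x ∈ D, q x ∈ O → x ∈ Metric.ball ρ ε ∧ x ∈ J ∧ ‖x - c‖ < ε' := by
    rintro x ⟨hxD, hxρ⟩ ⟨z, ⟨hzρ, hzP⟩, hzx⟩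
    obtain ⟨hxb, s, hs, rfl⟩ := hq.eq_in_dir hR hzρ (hPb hzP) hxρ hzx
    refine ⟨hxb, hJinv _ _ hzP.1.2, ?_⟩
    have := R.norm_sub_le_of_mem_dir hxD ((R.stab ρ).inv_mem hs)
    rw [R.inv_act] at this
    exact this.trans_lt (mem_ball_iff_norm.1 hzP.2)
  refine ⟨O, hq.isOpen_image_dir hR hPo hPb,
    ⟨c, ⟨hc.1.1, ⟨hc.1.2, hc.2⟩, Metric.mem_ball_self hε'⟩, rfl⟩, ?_⟩
  have hinj : InjOn q (D ∩ q ⁻¹' O) := by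
    rintro x ⟨hxD, hxO⟩ y ⟨hyD, hyO⟩ hxy
    have hx := key x hxD hxO
    obtain ⟨-, s, hs, rfl⟩ := hq.eq_in_dir hR hxD.2 hx.1 hyD.2 hxy
    have := hR' x hxD.1 hx.2.2 s hs hyD.1
    exact (hJfree c hc.2 s this x).symm
  have hsurj : O ⊆ q '' D := by
    rintro v ⟨z, ⟨hzρ, hzP⟩, rfl⟩
    obtain ⟨g, hg, hgz⟩ := R.exists_act_mem_dir (R.isClosed_stab ρ) c z
    exact ⟨R.act g z, ⟨hgz, R.act_mem_dir hzρ trivial hg⟩, ((hq.eq_iff _ _).2 ⟨g, rfl⟩).symm⟩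
  obtain ⟨τ, hτc, hτ⟩ := hq.exists_section (D := D) (O := O) hDc hinj hsurj
  refine ⟨τ, hτc, fun v hv => ⟨?_, (hτ v hv).2⟩⟩
  have := key (τ v) (hτ v hv).1 (by rw [(hτ v hv).2]; exact hv)
  exact ⟨⟨(hτ v hv).1.2, this.1⟩, this.2.1⟩

/-- Lifting of paths through `q : S → X` with prescribed starting point, when the fibres are orbits
of `H` and `q` has local sections through `S`: local lifts over the pieces of a subdivision are
matched by elements of `H`. -/
theorem exists_path_lift (R : OrthRep G E) {q : E → X} {H : Subgroup G} {S : Set E}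
    (hSinv : ∀ s ∈ H, ∀ x ∈ S, R.act s x ∈ S)
    (hqinv : ∀ s x, q (R.act s x) = q x)
    (htrans : ∀ x ∈ S, ∀ y ∈ S, q x = q y → ∃ s ∈ H, R.act s x = y)
    (hloc : ∀ c ∈ S, ∃ O : Set X, IsOpen O ∧ q c ∈ O ∧ ∃ τ : X → E, ContinuousOn τ O ∧
      ∀ v ∈ O, τ v ∈ S ∧ q (τ v) = v)
    (γ : C(I, X)) (hγ : ∀ t, γ t ∈ q '' S) {x₀ : E} (hx₀ : x₀ ∈ S) (hx₀γ : q x₀ = γ 0) :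
    ∃ f : C(I, E), f 0 = x₀ ∧ ∀ t, f t ∈ S ∧ q (f t) = γ t := by
  classical
  choose O hO hcO τ hτ hτS using hloc
  obtain ⟨t, ht0, htm, ⟨n, hn⟩, hsub⟩ := exists_monotone_Icc_subset_open_cover_unitInterval
    (c := fun c : S => γ ⁻¹' O c c.2) (fun c => (hO c c.2).preimage γ.continuous) (by
      intro u _
      obtain ⟨c, hc, hcu⟩ := hγ u
      refine mem_iUnion.2 ⟨⟨c, hc⟩, ?_⟩
      rw [mem_preimage, ← hcu]
      exact hcO c hc)
  have claim : ∀ k, ∃ f : I → E, ContinuousOn f (Icc 0 (t k)) ∧ f 0 = x₀ ∧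
      ∀ u ∈ Icc 0 (t k), f u ∈ S ∧ q (f u) = γ u := by
    intro k
    induction k with
    | zero =>
      refine ⟨fun _ => x₀, continuousOn_const, rfl, fun u hu => ?_⟩
      rw [ht0, Icc_self, mem_singleton_iff] at hu
      subst hu
      exact ⟨hx₀, hx₀γ⟩
    | succ k ih =>
      obtain ⟨f, hf, hf0, hfS⟩ := ih
      obtain ⟨⟨c, hc⟩, hck⟩ := hsub k
      have hle : t k ≤ t (k + 1) := htm (Nat.le_succ k)
      have hk := hfS (t k) ⟨unitInterval.nonneg', le_rfl⟩
      have hk2 := hτS c hc (γ (t k)) (hck ⟨le_rfl, hle⟩)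
      obtain ⟨s, hs, hsx⟩ := htrans _ hk2.1 _ hk.1 (by rw [hk2.2, hk.2])
      set g : I → E := fun u => R.act s (τ c hc (γ u)) with hg
      set f' : I → E := fun u => if u ≤ t k then f u else g u with hf'
      have h1 : EqOn f' f (Icc 0 (t k)) := fun u hu => if_pos hu.2
      have h2 : EqOn f' g (Icc (t k) (t (k + 1))) := by
        intro u hu
        rcases eq_or_lt_of_le hu.1 with h | h
        · rw [← h]; simp [hf', hg, hsx]
        · exact if_neg (not_le.2 h)
      have hgc : ContinuousOn g (Icc (t k) (t (k + 1))) :=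
        (R.continuous_act s).comp_continuousOn
          ((hτ c hc).comp γ.continuous.continuousOn hck)
      have hun : Icc 0 (t k) ∪ Icc (t k) (t (k + 1)) = Icc 0 (t (k + 1)) :=
        Icc_union_Icc_eq_Icc unitInterval.nonneg' hle
      refine ⟨f', ?_, ?_, ?_⟩
      · rw [← hun]
        exact (hf.congr h1).union_of_isClosed (hgc.congr h2) isClosed_Icc isClosed_Icc
      · rw [h1 ⟨le_rfl, unitInterval.nonneg'⟩, hf0]
      · rw [← hun]
        rintro u (hu | hu)
        · rw [h1 hu]; exact hfS u hu
        · rw [h2 hu]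
          have := hτS c hc (γ u) (hck hu)
          exact ⟨hSinv s hs _ this.1, by rw [hg, hqinv, this.2]⟩
  obtain ⟨f, hf, hf0, hfS⟩ := claim n
  rw [hn n le_rfl] at hf hfS
  have huniv : Icc (0 : I) 1 = univ := by ext u; simp [unitInterval.le_one']
  rw [huniv] at hf hfS
  exact ⟨⟨f, continuousOn_univ.1 hf⟩, hf0, fun u => hfS u trivial⟩

/-- Simple connectivity of the free part of the image of the ball. Two paths with common end points
lift to paths in the Dirichlet domain of `ρ` with the same start; their ends differ by an element
of the stabilizer of `ρ`, which is joined to the identity inside that stabilizer. The two lifts are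
therefore homotopic upstairs after inserting a path that is constant downstairs. -/
theorem IsOrbitMap.simplyConnectedSpace [CompactSpace G] [IsTopologicalGroup G]
    (hq : R.IsOrbitMap q) {ρ : E} {ε : ℝ} (hR : R.Reach ⊤ ρ ε) {J : Set E} (hJo : IsOpen J)
    (hJinv : ∀ g, ∀ x ∈ J, R.act g x ∈ J)
    (hJfree : ∀ c ∈ J, ∀ g, R.act g c = c → ∀ x, R.act g x = x)
    (hRc : ∀ c, ∃ ε' > 0, R.Reach (R.stab ρ) c ε')
    (hstab : ∀ s ∈ R.stab ρ, ∃ p : C(I, G), p 0 = 1 ∧ p 1 = s ∧ ∀ t, p t ∈ R.stab ρ)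
    (hsc : IsSimplyConnected (Metric.ball ρ ε ∩ J)) :
    SimplyConnectedSpace ↥(q '' Metric.ball ρ ε ∩ q '' J) := by
  set S := R.dir ⊤ ρ ∩ Metric.ball ρ ε ∩ J with hS
  set Y := q '' Metric.ball ρ ε ∩ q '' J with hY
  set B := Metric.ball ρ ε ∩ J with hB
  have : SimplyConnectedSpace B := hsc.simplyConnectedSpace
  have hqinv : ∀ s x, q (R.act s x) = q x := fun s x => ((hq.eq_iff _ _).2 ⟨s, rfl⟩).symm
  have hYS : Y ⊆ q '' S := by
    rintro v ⟨hv, y, hy, hyv⟩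
    obtain ⟨x, hx, rfl⟩ := hq.exists_lift hv
    obtain ⟨g, rfl⟩ := (hq.eq_iff _ _).1 hyv
    exact ⟨_, ⟨hx, hJinv g y hy⟩, rfl⟩
  have hSB : S ⊆ B := fun x hx => ⟨hx.1.2, hx.2⟩
  let Q : B → Y := fun x => ⟨q x, ⟨x, x.2.1, rfl⟩, ⟨x, x.2.2, rfl⟩⟩
  have hQ : Continuous Q := (hq.cont.comp continuous_subtype_val).subtype_mk _
  have hQs : Function.Surjective Q := by
    rintro ⟨v, hv⟩
    obtain ⟨x, hx, rfl⟩ := hYS hv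
    exact ⟨⟨x, hSB hx⟩, rfl⟩
  have htrans : ∀ x ∈ S, ∀ y ∈ S, q x = q y → ∃ s ∈ R.stab ρ, R.act s x = y :=
    fun x hx y hy h => (hq.eq_in_dir hR hx.1.1 hx.1.2 hy.1.1 h).2
  have hSinv : ∀ s ∈ R.stab ρ, ∀ x ∈ S, R.act s x ∈ S := by
    intro s hs x hx
    have h1 := R.act_mem_dir hx.1.1 (s := s) trivial hs
    exact ⟨⟨h1, (hq.eq_in_dir hR hx.1.1 hx.1.2 h1 (hqinv s x).symm).1⟩, hJinv s x hx.2⟩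
  rw [simply_connected_iff_paths_homotopic']
  refine ⟨hQs.pathConnectedSpace hQ, fun {v w} γ₁ γ₂ => ?_⟩
  obtain ⟨x₀, hx₀, hx₀v⟩ := hYS v.2
  have lift : ∀ γ : Path v w, ∃ f : C(I, E), f 0 = x₀ ∧ ∀ t, f t ∈ S ∧ q (f t) = γ t := by
    intro γ
    refine R.exists_path_lift hSinv hqinv htrans (fun c hc => hq.exists_local_section hR hJo hJinv
      hJfree hc (hRc c)) ⟨fun t => (γ t : X), by fun_prop⟩ (fun t => hYS (γ t).2) hx₀ ?_
    simp [hx₀v]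
  obtain ⟨f₁, h10, hf₁⟩ := lift γ₁
  obtain ⟨f₂, h20, hf₂⟩ := lift γ₂
  obtain ⟨s, hs, hs12⟩ := htrans _ (hf₁ 1).1 _ (hf₂ 1).1 (by rw [(hf₁ 1).2, (hf₂ 1).2]; simp)
  obtain ⟨p, hp0, hp1, hp⟩ := hstab s hs
  let δ₁ : Path (⟨x₀, hSB hx₀⟩ : B) ⟨f₁ 1, hSB (hf₁ 1).1⟩ :=
    { toFun := fun t => ⟨f₁ t, hSB (hf₁ t).1⟩
      continuous_toFun := by fun_prop
      source' := by ext; exact h10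
      target' := rfl }
  let δ₂ : Path (⟨x₀, hSB hx₀⟩ : B) ⟨f₂ 1, hSB (hf₂ 1).1⟩ :=
    { toFun := fun t => ⟨f₂ t, hSB (hf₂ t).1⟩
      continuous_toFun := by fun_prop
      source' := by ext; exact h20
      target' := rfl }
  let η : Path (⟨f₁ 1, hSB (hf₁ 1).1⟩ : B) ⟨f₂ 1, hSB (hf₂ 1).1⟩ :=
    { toFun := fun t => ⟨R.act (p t) (f₁ 1), hSB (hSinv _ (hp t) _ (hf₁ 1).1)⟩
      continuous_toFun :=
        (R.cont.comp (by fun_prop : Continuous fun t : I => (p t, f₁ 1))).subtype_mk _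
      source' := by ext; simp [hp0, R.one]
      target' := by ext; simp [hp1, hs12] }
  have key : (δ₁.trans η).Homotopic δ₂ := SimplyConnectedSpace.paths_homotopic _ _
  have key2 := (key.map ⟨Q, hQ⟩).pathCast (x₂ := v) (x₃ := w)
    (Subtype.ext hx₀v.symm) (Subtype.ext (by simp [Q, (hf₂ 1).2]))
  have e2 : γ₂ = (δ₂.map hQ).cast (Subtype.ext hx₀v.symm) (Subtype.ext (by simp [Q, (hf₂ 1).2])) := by
    ext t
    exact (hf₂ t).2.symm
  have e1 : γ₁.trans (Path.refl w) = ((δ₁.trans η).map hQ).cast (Subtype.ext hx₀v.symm)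
      (Subtype.ext (by simp [Q, (hf₂ 1).2])) := by
    ext t
    rw [Path.map_trans]
    simp only [Path.trans_apply, Path.cast_coe]
    split_ifs
    · exact (hf₁ _).2.symm
    · have : q (f₁ 1) = w := by rw [(hf₁ 1).2]; simp
      exact this.symm.trans (hqinv _ _).symm
  have heq : ∀ a b : Path v w, a = b → a.Homotopic b := by
    rintro a _ rfl
    exact .refl a
  have key3 : (γ₁.trans (Path.refl w)).Homotopic γ₂ :=
    (heq _ _ e1).trans (key2.trans (heq _ _ e2.symm))
  exact (Path.Homotopic.symm ⟨Path.Homotopy.transRefl γ₁⟩).trans key3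

/-- The general statement for a compact group acting orthogonally: the images of small balls are
contractible, and their intersection with the image of the free locus `J` is simply connected, as
soon as Dirichlet domains have positive reach, vector stabilizers are path connected and the
complement of `J` has codimension greater than two. -/
theorem IsOrbitMap.main [CompactSpace G] [IsTopologicalGroup G] [FiniteDimensional ℝ E]
    (hq : R.IsOrbitMap q) (hReach : ∀ a c, ∃ ε > 0, R.Reach (R.stab a) c ε)
    {J : Set E} (hJo : IsOpen J)
    (hJinv : ∀ g, ∀ x ∈ J, R.act g x ∈ J)
    (hJfree : ∀ c ∈ J, ∀ g, R.act g c = c → ∀ x, R.act g x = x)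
    (hstab : ∀ a, ∀ s ∈ R.stab a, ∃ p : C(I, G), p 0 = 1 ∧ p 1 = s ∧ ∀ t, p t ∈ R.stab a)
    {ι : Type*} [Finite ι] {P : ι → Type*} [∀ k, NormedAddCommGroup (P k)]
    [∀ k, NormedSpace ℝ (P k)] [∀ k, FiniteDimensional ℝ (P k)]
    (φ : ∀ k, P k → E) (hφ : ∀ k, ContDiff ℝ 1 (φ k))
    (hdim : ∀ k, Module.finrank ℝ (P k) + 2 < Module.finrank ℝ E)
    (hcov : Jᶜ ⊆ ⋃ k, range (φ k)) (ρ : E) {U : Set X} (hU : IsOpen U) (hρ : q ρ ∈ U) :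
    ∃ V, IsOpen V ∧ q ρ ∈ V ∧ V ⊆ U ∧ ContractibleSpace ↥V ∧
      SimplyConnectedSpace ↥(V ∩ q '' J) := by
  obtain ⟨ε₁, hε₁, hR₁⟩ := hReach 0 ρ
  rw [R.stab_zero] at hR₁
  obtain ⟨ε₂, hε₂, hb⟩ := Metric.isOpen_iff.1 (hU.preimage hq.cont) ρ hρ
  set ε := min ε₁ ε₂ with hε
  have hε0 : 0 < ε := lt_min hε₁ hε₂
  have hR : R.Reach ⊤ ρ ε := fun x hx hxc => hR₁ x hx (hxc.trans_le (min_le_left _ _))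
  refine ⟨q '' Metric.ball ρ ε, hq.isOpenMap _ Metric.isOpen_ball,
    ⟨ρ, Metric.mem_ball_self hε0, rfl⟩, ?_, hq.contractible hR hε0, ?_⟩
  · rintro _ ⟨x, hx, rfl⟩
    exact hb (Metric.ball_subset_ball (min_le_right _ _) hx)
  · exact hq.simplyConnectedSpace hR hJo hJinv hJfree (hReach ρ) (hstab ρ)
      (isSimplyConnected_inter_of_thin Metric.isOpen_ball (convex_ball _ _)
        ⟨ρ, Metric.mem_ball_self hε0⟩ hJo φ hφ hdim hcov)

end OrthRep

/-! ### Tuples of Hermitian matrices -/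

/-- Real coordinates on the space of `r`-tuples of Hermitian `n × n` matrices, normalized so that the
Euclidean inner product is `∑ i, tr (X i * Y i)`; see `mat` for the dictionary. -/
abbrev HermTuple (n r : ℕ) : Type := EuclideanSpace ℝ (Fin r × Fin n × Fin n)

namespace HermTuple

variable {n r : ℕ}

/-- The tuple of Hermitian matrices with given coordinates. The coordinate `(i, a, b)` is the sum of
the real and imaginary parts of the `(a, b)` entry of the `i`-th matrix; as the matrix is Hermitian,
the coordinates `(i, a, b)` and `(i, b, a)` determine the entry. -/
noncomputable def mat : HermTuple n r →ₗ[ℝ] (Fin r → Matrix (Fin n) (Fin n) ℂ) where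
  toFun x i := Matrix.of fun a b =>
    (⟨(x (i, a, b) + x (i, b, a)) / 2, (x (i, a, b) - x (i, b, a)) / 2⟩ : ℂ)
  map_add' x y := by
    ext i a b
    apply Complex.ext <;> simp <;> ring
  map_smul' c x := by
    ext i a b
    apply Complex.ext <;> simp <;> ring

/-- The sum of the real and imaginary parts of every entry. On tuples of Hermitian matrices this is
inverse to `mat`. -/
noncomputable def ofMat : (Fin r → Matrix (Fin n) (Fin n) ℂ) →ₗ[ℝ] HermTuple n r where
  toFun Z := WithLp.toLp 2 fun p => (Z p.1 p.2.1 p.2.2).re + (Z p.1 p.2.1 p.2.2).im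
  map_add' x y := by
    ext p
    simp; ring
  map_smul' c x := by
    ext p
    simp; ring

theorem isHermitian_mat (x : HermTuple n r) (i : Fin r) : (mat x i).IsHermitian := by
  ext a b
  apply Complex.ext <;> simp [mat, Matrix.conjTranspose_apply] <;> ring

theorem ofMat_mat (x : HermTuple n r) : ofMat (mat x) = x := by
  ext p
  simp [ofMat, mat]; ring

theorem mat_ofMat {Z : Fin r → Matrix (Fin n) (Fin n) ℂ} (hZ : ∀ i, (Z i).IsHermitian) :
    mat (ofMat Z) = Z := by
  ext i a b
  have h := (hZ i).apply a b
  have h1 := congrArg Complex.re h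
  have h2 := congrArg Complex.im h
  simp at h1 h2
  apply Complex.ext <;> simp [ofMat, mat] <;> linarith

theorem mat_injective : Function.Injective (mat (n := n) (r := r)) :=
  Function.LeftInverse.injective ofMat_mat

theorem inner_eq (x y : HermTuple n r) :
    ⟪x, y⟫ = (∑ i, (mat x i * mat y i).trace).re := by
  simp only [PiLp.inner_apply, Fintype.sum_prod_type, Matrix.trace, Matrix.diag, Matrix.mul_apply,
    Complex.re_sum]
  refine Finset.sum_congr rfl fun i _ => ?_
  have h : ∀ f : Fin n → Fin n → ℝ, ∑ a, ∑ b, f a b = ∑ a, ∑ b, (f a b + f b a) / 2 := by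
    intro f
    have : ∑ a, ∑ b, (f a b + f b a) / 2 = (∑ a, ∑ b, f a b + ∑ a, ∑ b, f b a) / 2 := by
      simp only [← Finset.sum_add_distrib, Finset.sum_div]
    rw [this, Finset.sum_comm (f := fun a b => f b a)]
    ring
  rw [h]
  refine Finset.sum_congr rfl fun a _ => Finset.sum_congr rfl fun b _ => ?_
  simp [mat]
  ring

theorem continuous_mat : Continuous (mat (n := n) (r := r)) := by
  refine continuous_pi fun i => continuous_matrix fun a b => ?_
  have : (fun x : HermTuple n r => mat x i a b) = fun x : HermTuple n r =>
    (((x (i, a, b) + x (i, b, a)) / 2 : ℝ) : ℂ) +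
      (((x (i, a, b) - x (i, b, a)) / 2 : ℝ) : ℂ) * Complex.I := by
    ext x
    apply Complex.ext <;> simp [mat]
  rw [this]
  fun_prop

theorem continuous_mat_apply (i : Fin r) : Continuous fun x : HermTuple n r => mat x i :=
  continuous_pi_iff.1 continuous_mat i

theorem continuous_ofMat : Continuous (ofMat (n := n) (r := r)) := by
  refine (PiLp.continuous_toLp 2 _).comp (continuous_pi fun p => ?_)
  have : Continuous fun Z : Fin r → Matrix (Fin n) (Fin n) ℂ => Z p.1 p.2.1 p.2.2 :=
    (continuous_apply_apply p.2.1 p.2.2).comp (continuous_apply p.1)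
  exact (Complex.continuous_re.comp this).add (Complex.continuous_im.comp this)

theorem coe_inv (g : Un n) : ((g⁻¹ : Un n) : Matrix (Fin n) (Fin n) ℂ) = (g : Matrix _ _ ℂ)ᴴ := rfl

theorem mul_ct (g : Un n) : (g : Matrix (Fin n) (Fin n) ℂ) * (g : Matrix _ _ ℂ)ᴴ = 1 :=
  Matrix.mem_unitaryGroup_iff.1 g.2

theorem ct_mul (g : Un n) : (g : Matrix (Fin n) (Fin n) ℂ)ᴴ * (g : Matrix _ _ ℂ) = 1 :=
  Matrix.mem_unitaryGroup_iff'.1 g.2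

/-- Simultaneous conjugation of a tuple of Hermitian matrices by a unitary matrix. -/
noncomputable def conjAct (g : Un n) : HermTuple n r →ₗ[ℝ] HermTuple n r where
  toFun x := ofMat fun i => (g : Matrix (Fin n) (Fin n) ℂ) * mat x i * (g : Matrix _ _ ℂ)ᴴ
  map_add' x y := by
    rw [← map_add]; congr 1; ext1 i; simp [mul_add, add_mul]
  map_smul' c x := by
    rw [← map_smul]; congr 1; ext1 i; simp

theorem mat_conjAct (g : Un n) (x : HermTuple n r) (i : Fin r) :
    mat (conjAct g x) i = (g : Matrix (Fin n) (Fin n) ℂ) * mat x i * (g : Matrix _ _ ℂ)ᴴ := by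
  refine congrFun (mat_ofMat (Z := fun i => (g : Matrix (Fin n) (Fin n) ℂ) * mat x i * (g : Matrix _ _ ℂ)ᴴ)
    fun i => ?_) i
  exact Matrix.isHermitian_mul_mul_conjTranspose _ (isHermitian_mat x i)

/-- The orthogonal representation of `U(n)` on `r`-tuples of Hermitian matrices by simultaneous
conjugation. -/
noncomputable def rep (n r : ℕ) : OrthRep (Un n) (HermTuple n r) where
  act := conjAct
  one x := mat_injective (by ext1 i; rw [mat_conjAct]; simp)
  mul g h x := mat_injective (by
    ext1 i; simp only [mat_conjAct]; simp [Matrix.mul_assoc, Matrix.conjTranspose_mul])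
  inner g x y := by
    simp only [inner_eq, mat_conjAct]
    congr 1
    refine Finset.sum_congr rfl fun i _ => ?_
    have : (g : Matrix (Fin n) (Fin n) ℂ) * mat x i * (g : Matrix _ _ ℂ)ᴴ *
        ((g : Matrix (Fin n) (Fin n) ℂ) * mat y i * (g : Matrix _ _ ℂ)ᴴ) =
        (g : Matrix (Fin n) (Fin n) ℂ) * (mat x i * mat y i) * (g : Matrix _ _ ℂ)ᴴ := by
      simp only [Matrix.mul_assoc]
      rw [← Matrix.mul_assoc (g : Matrix (Fin n) (Fin n) ℂ)ᴴ (g : Matrix (Fin n) (Fin n) ℂ),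
        ct_mul, Matrix.one_mul]
    rw [this, Matrix.trace_mul_comm, ← Matrix.mul_assoc, ct_mul, Matrix.one_mul]
  cont := by
    have h1 : Continuous fun p : Un n × HermTuple n r => (p.1 : Matrix (Fin n) (Fin n) ℂ) := by
      fun_prop
    have h2 : Continuous fun p : Un n × HermTuple n r => fun i =>
        (p.1 : Matrix (Fin n) (Fin n) ℂ) * mat p.2 i * (p.1 : Matrix (Fin n) (Fin n) ℂ)ᴴ :=
      continuous_pi fun i => (h1.mul ((continuous_mat_apply i).comp continuous_snd)).mul
        h1.matrix_conjTranspose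
    exact continuous_ofMat.comp h2

theorem mat_act (g : Un n) (x : HermTuple n r) (i : Fin r) :
    mat ((rep n r).act g x) i = (g : Matrix (Fin n) (Fin n) ℂ) * mat x i * (g : Matrix _ _ ℂ)ᴴ :=
  mat_conjAct g x i

theorem mem_stab_iff {a : HermTuple n r} {g : Un n} : g ∈ (rep n r).stab a ↔
    ∀ i, (g : Matrix (Fin n) (Fin n) ℂ) * mat a i = mat a i * (g : Matrix (Fin n) (Fin n) ℂ) := by
  rw [OrthRep.mem_stab]
  constructor
  · intro h i
    conv_rhs => rw [← h, mat_act, Matrix.mul_assoc, ct_mul, Matrix.mul_one]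
  · intro h
    apply mat_injective
    ext1 i
    rw [mat_act, h, Matrix.mul_assoc, mul_ct, Matrix.mul_one]

instance compactSpace_Un : CompactSpace (Un n) := by
  have hc : IsClosed ((Matrix.unitaryGroup (Fin n) ℂ : Submonoid _) : Set (Matrix (Fin n) (Fin n) ℂ)) := by
    have : ((Matrix.unitaryGroup (Fin n) ℂ : Submonoid _) : Set (Matrix (Fin n) (Fin n) ℂ)) =
        {A | A * Aᴴ = 1} := by
      ext A; exact Matrix.mem_unitaryGroup_iff
    rw [this]
    exact isClosed_eq (by fun_prop) continuous_const
  have hK : IsCompact (Set.pi univ fun _ => Set.pi univ fun _ => Metric.closedBall 0 1 :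
      Set (Fin n → Fin n → ℂ)) :=
    isCompact_univ_pi fun _ => isCompact_univ_pi fun _ => isCompact_closedBall 0 1
  have := hK.of_isClosed_subset hc (fun A hA a _ b _ => by
    rw [mem_closedBall_zero_iff]; exact entry_norm_bound_of_unitary hA a b)
  exact isCompact_iff_compactSpace.1 this

end HermTuple

/-! ### Reach of Dirichlet domains under unitary conjugation -/

namespace HermTuple

variable {n r : ℕ}

section reach

open scoped Matrix.Norms.Frobenius

/-- The Dirichlet domain of `c` for the stabilizer of `a` is orthogonal to the tangent space of the
orbit of `c`: for skew-Hermitian `Y` commuting with `a`, the function `t ↦ ⟪x, exp (tY) • c⟫` is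
maximal at `t = 0`. -/
theorem inner_commutator_eq_zero {a c x : HermTuple n r} (hx : x ∈ (rep n r).dir ((rep n r).stab a) c)
    {Y : Matrix (Fin n) (Fin n) ℂ} (hY : Yᴴ = -Y) (hYa : ∀ i, Y * mat a i = mat a i * Y) :
    ⟪x, ofMat fun i => Y * mat c i - mat c i * Y⟫ = 0 := by
  let L : (Fin r → Matrix (Fin n) (Fin n) ℂ) →L[ℝ] HermTuple n r :=
    LinearMap.toContinuousLinearMap ofMat
  let h : ℝ → Fin r → Matrix (Fin n) (Fin n) ℂ := fun t i =>
    NormedSpace.exp (t • Y) * mat c i * NormedSpace.exp (t • (-Y))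
  have hderiv : HasDerivAt h (fun i => Y * mat c i - mat c i * Y) 0 := by
    refine hasDerivAt_pi.2 fun i => ?_
    have h1 := hasDerivAt_exp_smul_const (𝕂 := ℝ) Y (0 : ℝ)
    have h2 := hasDerivAt_exp_smul_const (𝕂 := ℝ) (-Y) (0 : ℝ)
    have h3 := (h1.mul_const (mat c i)).mul h2
    simp only [zero_smul, NormedSpace.exp_zero, one_mul, mul_one, mul_neg] at h3
    rw [sub_eq_add_neg]
    exact h3
  have hf : HasDerivAt (fun t => ⟪x, L (h t)⟫)
      (⟪x, L fun i => Y * mat c i - mat c i * Y⟫) 0 := by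
    exact ((innerSL ℝ x).comp L).hasFDerivAt.comp_hasDerivAt 0 hderiv
  have hmax : IsLocalMax (fun t => ⟪x, L (h t)⟫) 0 := by
    refine Filter.Eventually.of_forall fun t => ?_
    have hct : (NormedSpace.exp (t • Y))ᴴ = NormedSpace.exp (t • (-Y)) := by
      rw [← Matrix.exp_conjTranspose, Matrix.conjTranspose_smul, hY]; simp
    have hinv : NormedSpace.exp (t • Y) * NormedSpace.exp (t • (-Y)) = 1 := by
      rw [← Matrix.exp_add_of_commute (t • Y) (t • (-Y))
        (by rw [smul_neg]; exact (Commute.refl _).neg_right)]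
      simp
    let g : Un n := ⟨NormedSpace.exp (t • Y), by
      rw [Matrix.mem_unitaryGroup_iff, Matrix.star_eq_conjTranspose, hct, hinv]⟩
    have hg : g ∈ (rep n r).stab a := by
      rw [mem_stab_iff]
      intro i
      have : Commute (t • Y) (mat a i) := (show Commute Y (mat a i) from hYa i).smul_left t
      exact this.exp_left
    have h0 : L (h 0) = c := by
      simp only [h, zero_smul, NormedSpace.exp_zero, one_mul, mul_one]
      exact ofMat_mat c
    have h1 : L (h t) = (rep n r).act g c := by
      apply mat_injective
      have : h t = fun i => (g : Matrix (Fin n) (Fin n) ℂ) * mat c i * (g : Matrix _ _ ℂ)ᴴ := by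
        ext1 i
        simp only [h, g, hct]
      rw [this]
      rfl
    have h2 := hx _ (((rep n r).stab a).inv_mem hg)
    simp only [h0, h1]
    rwa [(rep n r).inner_act_left, inv_inv] at h2
  exact hmax.hasDerivAt_eq_zero hf

/-- If `g - e` and `g' - e'` commute with `c` and `g * g' = 1`, then `g c g'` differs from
`c + [Y, c]` by terms of second order in `(e, e')`, where `Y = (e (g' - e') - (g - e) e') / 2`. -/
theorem conj_sub_identity {A : Type*} [Ring A] [Algebra ℝ A] {g g' e e' c : A} (hg : g * g' = 1)
    (h1 : (g - e) * c = c * (g - e)) (h2 : (g' - e') * c = c * (g' - e')) :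
    g * c * g' - c - (((1 / 2 : ℝ) • (e * (g' - e') - (g - e) * e')) * c -
      c * ((1 / 2 : ℝ) • (e * (g' - e') - (g - e) * e'))) =
    (e * c - c * e) * e' - (1 / 2 : ℝ) • (e * e' * c - c * (e * e')) := by
  obtain ⟨k, rfl⟩ : ∃ k, g = k + e := ⟨g - e, by abel⟩
  obtain ⟨k', rfl⟩ : ∃ k', g' = k' + e' := ⟨g' - e', by abel⟩
  simp only [add_sub_cancel_right] at h1 h2 ⊢
  have hc : (k + e) * (k' + e') * c = c := by rw [hg, one_mul]
  have hc' : c * ((k + e) * (k' + e')) = c := by rw [hg, mul_one]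
  have f1 : k * (c * k') = c * (k * k') := by rw [← mul_assoc, h1, mul_assoc]
  have f2 : k * (c * e') = c * (k * e') := by rw [← mul_assoc, h1, mul_assoc]
  have f3 : e * (c * k') = e * (k' * c) := by rw [h2]
  have f6 : k * (k' * c) = c * (k * k') := by rw [h2, f1]
  simp only [mul_add, add_mul, mul_sub, sub_mul, mul_assoc, smul_mul_assoc, mul_smul_comm] at hc hc' ⊢
  linear_combination (norm := module) f1 + f2 + f3 + (1 / 2 : ℝ) • hc' + (1 / 2 : ℝ) • hc
    - (1 / 2 : ℝ) • f6

theorem exists_norm_bound {V W : Type*} [NormedAddCommGroup V] [NormedSpace ℝ V]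
    [FiniteDimensional ℝ V] [NormedAddCommGroup W] [NormedSpace ℝ W] (f : V →ₗ[ℝ] W) :
    ∃ C : ℝ, 0 ≤ C ∧ ∀ v, ‖f v‖ ≤ C * ‖v‖ :=
  ⟨‖LinearMap.toContinuousLinearMap f‖, norm_nonneg _,
    (LinearMap.toContinuousLinearMap f).le_opNorm⟩

/-- The displacements of `c` under the stabilizer of `a` agree with tangent vectors up to a quadratic
error.

On the commutant of `a`, choose a linear right inverse `S` of `Z ↦ [Z, c]` onto its range. For `g` in
the stabilizer, put `e = S [g, c]`, so that `‖e‖ = O(‖g c gᴴ - c‖)` and `k = g - e` commutes with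
`c`. Then `Y = (e kᴴ - k eᴴ) / 2` is skew-Hermitian, commutes with `a`, and `conj_sub_identity`
bounds the error by `O(‖e‖²)`. No closeness of `g` to the stabilizer of `c` is needed. -/
theorem exists_quadratic_bound (a c : HermTuple n r) : ∃ K > 0, ∀ g ∈ (rep n r).stab a,
    ∃ Y : Matrix (Fin n) (Fin n) ℂ, Yᴴ = -Y ∧ (∀ i, Y * mat a i = mat a i * Y) ∧
      ‖(rep n r).act g c - c - ofMat fun i => Y * mat c i - mat c i * Y‖ ≤
        K * ‖(rep n r).act g c - c‖ ^ 2 := by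
  -- the commutant of `a`
  let W : Submodule ℝ (Matrix (Fin n) (Fin n) ℂ) :=
    { carrier := {Z | ∀ i, Z * mat a i = mat a i * Z}
      add_mem' := fun {x y} hx hy i => by rw [add_mul, mul_add, hx i, hy i]
      zero_mem' := fun i => by simp
      smul_mem' := fun t x hx i => by rw [smul_mul_assoc, mul_smul_comm, hx i] }
  let L : W →ₗ[ℝ] (Fin r → Matrix (Fin n) (Fin n) ℂ) :=
    { toFun := fun Z i => (Z : Matrix _ _ ℂ) * mat c i - mat c i * (Z : Matrix _ _ ℂ)
      map_add' := fun x y => by ext1 i; simp [add_mul, mul_add]; abel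
      map_smul' := fun t x => by ext1 i; simp [smul_sub] }
  obtain ⟨S₀, hS₀⟩ := L.rangeRestrict.exists_rightInverse_of_surjective L.range_rangeRestrict
  obtain ⟨S, hS⟩ := S₀.exists_extend
  have hLS : ∀ Z : W, L (S (L Z)) = L Z := by
    intro Z
    have h1 : S (L Z) = S₀ (L.rangeRestrict Z) :=
      LinearMap.congr_fun hS (L.rangeRestrict Z)
    have h2 := LinearMap.congr_fun hS₀ (L.rangeRestrict Z)
    rw [h1]
    exact congrArg Subtype.val h2
  obtain ⟨CS, hCS, hSle⟩ := exists_norm_bound S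
  obtain ⟨CM, hCM, hMle⟩ := exists_norm_bound (mat (n := n) (r := r))
  obtain ⟨CO, hCO, hOle⟩ := exists_norm_bound (ofMat (n := n) (r := r))
  obtain ⟨B, hB⟩ : ∃ B : ℝ, ∀ g : Un n, ‖(g : Matrix (Fin n) (Fin n) ℂ)‖ ≤ B := by
    obtain ⟨B, hB⟩ := isCompact_univ.exists_bound_of_continuousOn
      (f := fun g : Un n => (g : Matrix (Fin n) (Fin n) ℂ)) (by fun_prop)
    exact ⟨B, fun g => hB g trivial⟩
  have hB0 : 0 ≤ B := (norm_nonneg _).trans (hB 1)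
  set C := CS * (CM * B) with hC
  have hC0 : 0 ≤ C := by positivity
  refine ⟨CO * (3 * C ^ 2 * ‖mat c‖) + 1, by positivity, fun g hg => ?_⟩
  rw [mem_stab_iff] at hg
  set D := (rep n r).act g c - c with hD
  let gW : W := ⟨g, hg⟩
  set e : Matrix (Fin n) (Fin n) ℂ := (S (L gW)).1 with he
  have hea : ∀ i, e * mat a i = mat a i * e := (S (L gW)).2
  have hec : ∀ i, (g - e) * mat c i = mat c i * (g - e) := by
    intro i
    have h1 : e * mat c i - mat c i * e = (g : Matrix _ _ ℂ) * mat c i - mat c i * (g : Matrix _ _ ℂ) :=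
      congrFun (hLS gW) i
    rw [sub_mul, mul_sub]
    linear_combination (norm := module) (-1 : ℝ) • h1
  have hmatD : ∀ i, mat D i = (g : Matrix (Fin n) (Fin n) ℂ) * mat c i * (g : Matrix _ _ ℂ)ᴴ -
      mat c i := by
    intro i; rw [hD, map_sub, Pi.sub_apply, mat_act]
  have hLg : L gW = fun i => mat D i * (g : Matrix _ _ ℂ) := by
    ext1 i
    change (g : Matrix _ _ ℂ) * mat c i - mat c i * (g : Matrix _ _ ℂ) = _
    rw [hmatD, sub_mul, Matrix.mul_assoc _ (g : Matrix (Fin n) (Fin n) ℂ)ᴴ, ct_mul, Matrix.mul_one]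
  have henorm : ‖e‖ ≤ C * ‖D‖ := by
    have h1 : ‖e‖ ≤ CS * ‖L gW‖ := hSle (L gW)
    have h2 : ‖L gW‖ ≤ ‖mat D‖ * B := by
      rw [hLg, pi_norm_le_iff_of_nonneg (by positivity)]
      intro i
      refine (norm_mul_le _ _).trans ?_
      gcongr
      · exact norm_le_pi_norm (mat D) i
      · exact hB g
    have h3 : ‖mat D‖ ≤ CM * ‖D‖ := hMle D
    calc ‖e‖ ≤ CS * (CM * ‖D‖ * B) := by
          refine h1.trans ?_
          gcongr
          exact h2.trans (by gcongr)
      _ = C * ‖D‖ := by rw [hC]; ring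
  have hct : ∀ (x : HermTuple n r) (Z : Matrix (Fin n) (Fin n) ℂ) (i : Fin r),
      Z * mat x i = mat x i * Z → Zᴴ * mat x i = mat x i * Zᴴ := by
    intro x Z i h
    have := congrArg Matrix.conjTranspose h
    rw [Matrix.conjTranspose_mul, Matrix.conjTranspose_mul, (isHermitian_mat x i).eq] at this
    exact this.symm
  set g' : Matrix (Fin n) (Fin n) ℂ := (g : Matrix (Fin n) (Fin n) ℂ)ᴴ with hg'
  set k : Matrix (Fin n) (Fin n) ℂ := g - e with hk
  have hka : ∀ i, k * mat a i = mat a i * k := fun i => by rw [hk, sub_mul, mul_sub, hg, hea]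
  have hk' : kᴴ = g' - eᴴ := by rw [hk, Matrix.conjTranspose_sub]
  set Y : Matrix (Fin n) (Fin n) ℂ := (1 / 2 : ℝ) • (e * kᴴ - k * eᴴ) with hY
  have hYa : ∀ i, Y * mat a i = mat a i * Y := by
    intro i
    have h1 : Commute e (mat a i) := hea i
    have h2 : Commute k (mat a i) := hka i
    have h3 : Commute eᴴ (mat a i) := hct a e i (hea i)
    have h4 : Commute kᴴ (mat a i) := hct a k i (hka i)
    exact ((h1.mul_left h4).sub_left (h2.mul_left h3)).smul_left _
  refine ⟨Y, ?_, hYa, ?_⟩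
  · rw [hY, Matrix.conjTranspose_smul, Matrix.conjTranspose_sub, Matrix.conjTranspose_mul,
      Matrix.conjTranspose_mul, Matrix.conjTranspose_conjTranspose,
      Matrix.conjTranspose_conjTranspose, ← smul_neg, neg_sub]
    simp
  · have hid : ∀ i, mat D i - (Y * mat c i - mat c i * Y) =
        (e * mat c i - mat c i * e) * eᴴ - (1 / 2 : ℝ) • (e * eᴴ * mat c i - mat c i * (e * eᴴ)) := by
      intro i
      rw [hmatD, hY, hk']
      refine conj_sub_identity (mul_ct g) (hec i) ?_
      rw [← hk']
      exact hct c k i (hec i)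
    have hD2 : D - ofMat (fun i => Y * mat c i - mat c i * Y) =
        ofMat (fun i => mat D i - (Y * mat c i - mat c i * Y)) := by
      conv_lhs => rw [← ofMat_mat D, ← map_sub]
      rfl
    have hZ : ‖fun i => mat D i - (Y * mat c i - mat c i * Y)‖ ≤ 3 * ‖e‖ ^ 2 * ‖mat c‖ := by
      rw [pi_norm_le_iff_of_nonneg (by positivity)]
      intro i
      rw [hid]
      have hc : ‖mat c i‖ ≤ ‖mat c‖ := norm_le_pi_norm (mat c) i
      have hes : ‖eᴴ‖ = ‖e‖ := Matrix.frobenius_norm_conjTranspose e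
      have b1 : ‖e * mat c i - mat c i * e‖ ≤ 2 * ‖e‖ * ‖mat c i‖ := by
        refine (norm_sub_le _ _).trans ?_
        have := norm_mul_le e (mat c i)
        have := norm_mul_le (mat c i) e
        linarith
      have b2 : ‖e * eᴴ‖ ≤ ‖e‖ ^ 2 := by
        refine (norm_mul_le _ _).trans ?_
        rw [hes, sq]
      have b3 : ‖e * eᴴ * mat c i - mat c i * (e * eᴴ)‖ ≤ 2 * ‖e‖ ^ 2 * ‖mat c i‖ := by
        refine (norm_sub_le _ _).trans ?_
        have h1 := norm_mul_le (e * eᴴ) (mat c i)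
        have h2 := norm_mul_le (mat c i) (e * eᴴ)
        have h3 : ‖e * eᴴ‖ * ‖mat c i‖ ≤ ‖e‖ ^ 2 * ‖mat c i‖ := by gcongr
        linarith
      calc _ ≤ ‖(e * mat c i - mat c i * e) * eᴴ‖ +
            ‖(1 / 2 : ℝ) • (e * eᴴ * mat c i - mat c i * (e * eᴴ))‖ := norm_sub_le _ _
        _ ≤ 2 * ‖e‖ * ‖mat c i‖ * ‖e‖ + 1 / 2 * (2 * ‖e‖ ^ 2 * ‖mat c i‖) := by
          rw [norm_smul]
          refine add_le_add ((norm_mul_le _ _).trans ?_) ?_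
          · rw [hes]; gcongr
          · rw [Real.norm_of_nonneg (by norm_num)]; gcongr
        _ = 3 * ‖e‖ ^ 2 * ‖mat c i‖ := by ring
        _ ≤ _ := by gcongr
    rw [hD2]
    calc _ ≤ CO * (3 * ‖e‖ ^ 2 * ‖mat c‖) := (hOle _).trans (by gcongr)
      _ ≤ CO * (3 * (C * ‖D‖) ^ 2 * ‖mat c‖) := by gcongr
      _ = (CO * (3 * C ^ 2 * ‖mat c‖)) * ‖D‖ ^ 2 := by ring
      _ ≤ _ := by
        gcongr
        linarith

theorem exists_reach (a c : HermTuple n r) : ∃ ε > 0, (rep n r).Reach ((rep n r).stab a) c ε := by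
  obtain ⟨K, hK, h⟩ := exists_quadratic_bound a c
  refine ⟨1 / (2 * K), by positivity, (rep n r).reach_of_tangent
    {y | ∃ Y : Matrix (Fin n) (Fin n) ℂ, Yᴴ = -Y ∧ (∀ i, Y * mat a i = mat a i * Y) ∧
      y = ofMat fun i => Y * mat c i - mat c i * Y} hK ?_ ?_⟩
  · rintro x hx _ ⟨Y, hY, hYa, rfl⟩
    exact inner_commutator_eq_zero hx hY hYa
  · intro g hg
    obtain ⟨Y, hY, hYa, hle⟩ := h g hg
    exact ⟨_, ⟨Y, hY, hYa, rfl⟩, hle⟩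

end reach

end HermTuple

/-! ### The Cayley transform -/

namespace HermTuple

variable {n r : ℕ}

open scoped ComplexOrder in
theorem isUnit_one_add_of_skew {K : Matrix (Fin n) (Fin n) ℂ} (hK : Kᴴ = -K) : IsUnit (1 + K) := by
  have h : (1 + K)ᴴ * (1 + K) = 1 + Kᴴ * K := by
    rw [Matrix.conjTranspose_add, hK, Matrix.conjTranspose_one]
    noncomm_ring
  have hpos : (1 + Kᴴ * K).PosDef :=
    Matrix.PosDef.one.add_posSemidef (Matrix.posSemidef_conjTranspose_mul_self K)
  have hu := hpos.isUnit
  rw [← h, Matrix.isUnit_iff_isUnit_det, Matrix.det_mul, IsUnit.mul_iff] at hu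
  exact (Matrix.isUnit_iff_isUnit_det _).2 hu.2

/-- The Cayley transform `(1 + iX) / (1 - iX)`, written as `2 (1 - iX)⁻¹ - 1`. -/
noncomputable def cay (X : Matrix (Fin n) (Fin n) ℂ) : Matrix (Fin n) (Fin n) ℂ :=
  (2 : ℂ) • (1 - Complex.I • X)⁻¹ - 1

/-- The inverse Cayley transform `i (1 - w) / (1 + w)`, meaningful when `w + 1` is invertible. -/
noncomputable def icay (w : Matrix (Fin n) (Fin n) ℂ) : Matrix (Fin n) (Fin n) ℂ :=
  Complex.I • ((2 : ℂ) • (w + 1)⁻¹ - 1)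

theorem isUnit_one_sub {X : Matrix (Fin n) (Fin n) ℂ} (hX : X.IsHermitian) :
    IsUnit (1 - Complex.I • X) := by
  rw [sub_eq_add_neg]
  apply isUnit_one_add_of_skew
  simp [Matrix.conjTranspose_smul, hX.eq]

theorem inv_mul_of_isUnit {A : Matrix (Fin n) (Fin n) ℂ} (hA : IsUnit A) : A⁻¹ * A = 1 :=
  Matrix.nonsing_inv_mul _ ((Matrix.isUnit_iff_isUnit_det _).1 hA)

theorem mul_inv_of_isUnit {A : Matrix (Fin n) (Fin n) ℂ} (hA : IsUnit A) : A * A⁻¹ = 1 :=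
  Matrix.mul_nonsing_inv _ ((Matrix.isUnit_iff_isUnit_det _).1 hA)

theorem commute_inv {A B : Matrix (Fin n) (Fin n) ℂ} (hA : IsUnit A) (h : Commute A B) :
    Commute A⁻¹ B := by
  have h1 := inv_mul_of_isUnit hA
  have h2 := mul_inv_of_isUnit hA
  calc A⁻¹ * B = A⁻¹ * (B * A) * A⁻¹ := by rw [Matrix.mul_assoc, Matrix.mul_assoc, h2, mul_one]
    _ = A⁻¹ * A * B * A⁻¹ := by rw [← h.eq]; simp only [Matrix.mul_assoc]
    _ = B * A⁻¹ := by rw [h1, one_mul]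

theorem cay_mul_ct {X : Matrix (Fin n) (Fin n) ℂ} (hX : X.IsHermitian) :
    cay X * (cay X)ᴴ = 1 := by
  have hu := isUnit_one_sub hX
  set N := 1 - Complex.I • X with hN
  have hsum : N + Nᴴ = 2 := by
    rw [hN]; simp [Matrix.conjTranspose_smul, hX.eq]
    norm_num
  have h1 : N⁻¹ * N = 1 := inv_mul_of_isUnit hu
  have h2 : Nᴴ * (N⁻¹)ᴴ = 1 := by
    rw [← Matrix.conjTranspose_mul, h1, Matrix.conjTranspose_one]
  have h3 : N⁻¹ + (N⁻¹)ᴴ = (2 : ℂ) • (N⁻¹ * (N⁻¹)ᴴ) := by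
    calc N⁻¹ + (N⁻¹)ᴴ = N⁻¹ * (Nᴴ * (N⁻¹)ᴴ) + N⁻¹ * N * (N⁻¹)ᴴ := by rw [h1, h2, mul_one, one_mul]
      _ = N⁻¹ * (N + Nᴴ) * (N⁻¹)ᴴ := by noncomm_ring
      _ = _ := by rw [hsum]; simp [mul_two, two_smul, add_mul]
  rw [cay, Matrix.conjTranspose_sub, Matrix.conjTranspose_smul, Matrix.conjTranspose_one]
  simp only [star_ofNat, sub_mul, mul_sub, smul_mul_assoc, mul_smul_comm, one_mul, mul_one]
  rw [← h3]
  module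

theorem cay_add_one (X : Matrix (Fin n) (Fin n) ℂ) :
    cay X + 1 = (2 : ℂ) • (1 - Complex.I • X)⁻¹ := by
  rw [cay]; abel

theorem icay_cay {X : Matrix (Fin n) (Fin n) ℂ} (hX : X.IsHermitian) : icay (cay X) = X := by
  have hu := isUnit_one_sub hX
  have h : (cay X + 1)⁻¹ = (1 / 2 : ℂ) • (1 - Complex.I • X) := by
    apply Matrix.inv_eq_right_inv
    rw [cay_add_one, smul_mul_smul_comm, inv_mul_of_isUnit hu]
    norm_num
  rw [icay, h, smul_smul]
  norm_num [smul_sub, smul_smul]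

theorem isUnit_cay_add_one {X : Matrix (Fin n) (Fin n) ℂ} (hX : X.IsHermitian) :
    IsUnit (cay X + 1) := by
  have hu := isUnit_one_sub hX
  refine IsUnit.of_mul_eq_one ((1 / 2 : ℂ) • (1 - Complex.I • X)) ?_
  rw [cay_add_one, smul_mul_smul_comm, inv_mul_of_isUnit hu]
  norm_num

theorem isHermitian_icay {w : Matrix (Fin n) (Fin n) ℂ} (hw : w * wᴴ = 1) (hu : IsUnit (w + 1)) :
    (icay w).IsHermitian := by
  have hw' : wᴴ * w = 1 := mul_eq_one_comm.1 hw
  have h1 : ((w + 1)⁻¹)ᴴ = (w + 1)⁻¹ * w := by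
    rw [Matrix.conjTranspose_nonsing_inv]
    apply Matrix.inv_eq_left_inv
    rw [Matrix.conjTranspose_add, Matrix.conjTranspose_one, Matrix.mul_assoc, mul_add, hw, mul_one,
      add_comm (1 : Matrix (Fin n) (Fin n) ℂ) w, inv_mul_of_isUnit hu]
  have h2 : (w + 1)⁻¹ * w = 1 - (w + 1)⁻¹ := by
    rw [eq_sub_iff_add_eq]
    conv_lhs => rw [← mul_one (w + 1)⁻¹, Matrix.mul_assoc, one_mul, ← mul_add]
    exact inv_mul_of_isUnit hu
  rw [Matrix.IsHermitian, icay, Matrix.conjTranspose_smul, Matrix.conjTranspose_sub,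
    Matrix.conjTranspose_smul, h1, h2]
  simp only [Matrix.conjTranspose_one, star_ofNat, Complex.star_def, Complex.conj_I]
  module

theorem cay_icay {w : Matrix (Fin n) (Fin n) ℂ} (hu : IsUnit (w + 1)) : cay (icay w) = w := by
  have h : 1 - Complex.I • icay w = (2 : ℂ) • (w + 1)⁻¹ := by
    rw [icay, smul_smul, Complex.I_mul_I]; module
  have h2 : (1 - Complex.I • icay w)⁻¹ = (1 / 2 : ℂ) • (w + 1) := by
    apply Matrix.inv_eq_right_inv
    rw [h, smul_mul_smul_comm, inv_mul_of_isUnit hu]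
    norm_num
  rw [cay, h2]
  module

theorem cay_conj (g : Un n) {X : Matrix (Fin n) (Fin n) ℂ} (hX : X.IsHermitian) :
    cay ((g : Matrix (Fin n) (Fin n) ℂ) * X * (g : Matrix _ _ ℂ)ᴴ) =
      (g : Matrix (Fin n) (Fin n) ℂ) * cay X * (g : Matrix _ _ ℂ)ᴴ := by
  have hu := isUnit_one_sub hX
  have h := mul_ct g
  have h' := ct_mul g
  set G := (g : Matrix (Fin n) (Fin n) ℂ)
  have h1 : (1 - Complex.I • (G * X * Gᴴ)) = G * (1 - Complex.I • X) * Gᴴ := by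
    simp [mul_sub, sub_mul, h]
  have h2 : (1 - Complex.I • (G * X * Gᴴ))⁻¹ = G * (1 - Complex.I • X)⁻¹ * Gᴴ := by
    apply Matrix.inv_eq_right_inv
    rw [h1]
    calc G * (1 - Complex.I • X) * Gᴴ * (G * (1 - Complex.I • X)⁻¹ * Gᴴ)
        = G * (1 - Complex.I • X) * (Gᴴ * G) * (1 - Complex.I • X)⁻¹ * Gᴴ := by
          simp only [Matrix.mul_assoc]
      _ = G * ((1 - Complex.I • X) * (1 - Complex.I • X)⁻¹) * Gᴴ := by
          rw [h', mul_one]; simp only [Matrix.mul_assoc]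
      _ = 1 := by rw [mul_inv_of_isUnit hu, mul_one, h]
  rw [cay, cay, h2]
  simp [mul_sub, sub_mul, h]

theorem continuousAt_inv {A : Matrix (Fin n) (Fin n) ℂ} (hA : IsUnit A) :
    ContinuousAt (Inv.inv : Matrix (Fin n) (Fin n) ℂ → _) A := by
  apply continuousAt_matrix_inv
  have hd := ((Matrix.isUnit_iff_isUnit_det _).1 hA)
  have : (Ring.inverse : ℂ → ℂ) = Inv.inv := Ring.inverse_eq_inv'
  rw [this]
  exact continuousAt_inv₀ hd.ne_zero

theorem continuous_cay_comp {T : Type*} [TopologicalSpace T] {f : T → Matrix (Fin n) (Fin n) ℂ}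
    (hf : Continuous f) (hH : ∀ t, (f t).IsHermitian) : Continuous fun t => cay (f t) := by
  have h1 : Continuous fun t => (1 - Complex.I • f t)⁻¹ := by
    rw [continuous_iff_continuousAt]
    intro t
    exact (continuousAt_inv (isUnit_one_sub (hH t))).comp
      (f := fun t => 1 - Complex.I • f t) (by fun_prop)
  exact (h1.const_smul (2 : ℂ)).sub continuous_const

/-- Some rotation of `A` by a scalar of modulus one does not have `-1` as an eigenvalue, since `A` has
finitely many eigenvalues. -/
theorem exists_unit_scalar (A : Matrix (Fin n) (Fin n) ℂ) :
    ∃ θ : ℝ, IsUnit (Complex.exp (-(θ * Complex.I)) • A + 1) := by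
  have hinj : Set.InjOn (fun θ : ℝ => -Complex.exp (θ * Complex.I)) (Ioo 0 1) := by
    intro x hx y hy hxy
    simp only [neg_inj] at hxy
    rw [Complex.exp_eq_exp_iff_exists_int] at hxy
    obtain ⟨k, hk⟩ := hxy
    have h1 := congrArg Complex.im hk
    simp at h1
    have hπ := Real.pi_gt_three
    rcases lt_trichotomy k 0 with h | h | h
    · have : (k : ℝ) ≤ -1 := by exact_mod_cast Int.le_sub_one_of_lt h
      nlinarith [hx.1, hx.2, hy.1, hy.2]
    · simpa [h] using h1
    · have : (1 : ℝ) ≤ k := by exact_mod_cast h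
      nlinarith [hx.1, hx.2, hy.1, hy.2]
  have hinf := (Ioo_infinite (zero_lt_one (α := ℝ))).image hinj
  obtain ⟨z, ⟨θ, -, rfl⟩, hz⟩ := hinf.exists_notMem_finset A.charpoly.roots.toFinset
  refine ⟨θ, ?_⟩
  rw [Multiset.mem_toFinset, Polynomial.mem_roots A.charpoly_monic.ne_zero, Polynomial.IsRoot,
    Matrix.eval_charpoly] at hz
  set ζ := Complex.exp (θ * Complex.I) with hζ
  have hζ0 : ζ ≠ 0 := Complex.exp_ne_zero _
  have h1 : Complex.exp (-(θ * Complex.I)) • A + 1 = (-ζ⁻¹) • (Matrix.scalar (Fin n) (-ζ) - A) := by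
    have h2 : Matrix.scalar (Fin n) (-ζ) = (-ζ) • (1 : Matrix (Fin n) (Fin n) ℂ) := by
      rw [Matrix.scalar_apply, Matrix.smul_one_eq_diagonal]
    rw [Complex.exp_neg, ← hζ, h2, smul_sub, smul_smul, neg_mul_neg, inv_mul_cancel₀ hζ0, one_smul,
      neg_smul, sub_neg_eq_add, add_comm]
  rw [h1, Matrix.isUnit_iff_isUnit_det, Matrix.det_smul]
  exact isUnit_iff_ne_zero.2 (mul_ne_zero (pow_ne_zero _ (neg_ne_zero.2 (inv_ne_zero hζ0))) hz)

end HermTuple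

/-! ### Equivariant charts of the representation space -/

namespace HermTuple

variable {n r : ℕ}

theorem exp_mul_conj (θ : ℝ) :
    Complex.exp (θ * Complex.I) * star (Complex.exp (θ * Complex.I)) = 1 := by
  rw [Complex.star_def, ← Complex.exp_conj, ← Complex.exp_add]
  simp

theorem exp_neg_mul_exp (θ : ℝ) :
    Complex.exp (-(θ * Complex.I)) * Complex.exp (θ * Complex.I) = 1 := by
  rw [← Complex.exp_add]; simp

theorem star_exp_neg (θ : ℝ) :
    star (Complex.exp (-(θ * Complex.I))) = Complex.exp (θ * Complex.I) := by
  rw [Complex.star_def, ← Complex.exp_conj]; simp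

theorem rot_mem (θ : ℝ) {X : Matrix (Fin n) (Fin n) ℂ} (hX : X.IsHermitian) :
    Complex.exp (θ * Complex.I) • cay X ∈ Matrix.unitaryGroup (Fin n) ℂ := by
  rw [Matrix.mem_unitaryGroup_iff, Matrix.star_eq_conjTranspose, Matrix.conjTranspose_smul,
    smul_mul_smul_comm, exp_mul_conj, cay_mul_ct hX, one_smul]

/-- The Cayley transform of a Hermitian matrix, rotated by the scalar `exp (iθ)`. -/
noncomputable def rot (θ : ℝ) (X : Matrix (Fin n) (Fin n) ℂ) (hX : X.IsHermitian) : Un n :=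
  ⟨Complex.exp (θ * Complex.I) • cay X, rot_mem θ hX⟩

theorem exp_neg_smul_mul_ct (θ : ℝ) (g : Un n) :
    (Complex.exp (-(θ * Complex.I)) • (g : Matrix (Fin n) (Fin n) ℂ)) *
      (Complex.exp (-(θ * Complex.I)) • (g : Matrix (Fin n) (Fin n) ℂ))ᴴ = 1 := by
  rw [Matrix.conjTranspose_smul, star_exp_neg, smul_mul_smul_comm, exp_neg_mul_exp, one_smul, mul_ct]

theorem rot_icay {θ : ℝ} {g : Un n}
    (hu : IsUnit (Complex.exp (-(θ * Complex.I)) • (g : Matrix (Fin n) (Fin n) ℂ) + 1))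
    (hH : (icay (Complex.exp (-(θ * Complex.I)) • (g : Matrix (Fin n) (Fin n) ℂ))).IsHermitian) :
    rot θ (icay (Complex.exp (-(θ * Complex.I)) • (g : Matrix (Fin n) (Fin n) ℂ))) hH = g := by
  apply Subtype.ext
  rw [rot]
  simp only
  rw [cay_icay hu, smul_smul, mul_comm, exp_neg_mul_exp, one_smul]

theorem exp_neg_smul_rot (θ : ℝ) {X : Matrix (Fin n) (Fin n) ℂ} (hX : X.IsHermitian) :
    Complex.exp (-(θ * Complex.I)) • (rot θ X hX : Matrix (Fin n) (Fin n) ℂ) = cay X := by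
  rw [rot]
  simp only
  rw [smul_smul, exp_neg_mul_exp, one_smul]

theorem commute_icay {w B : Matrix (Fin n) (Fin n) ℂ} (hu : IsUnit (w + 1)) (h : Commute w B) :
    Commute (icay w) B :=
  (((commute_inv hu (h.add_left (Commute.one_left B))).smul_left _).sub_left
    (Commute.one_left B)).smul_left _

theorem commute_cay {X B : Matrix (Fin n) (Fin n) ℂ} (hX : X.IsHermitian) (h : Commute X B) :
    Commute (cay X) B :=
  ((commute_inv (isUnit_one_sub hX) ((Commute.one_left B).sub_left (h.smul_left _))).smul_left
    _).sub_left (Commute.one_left B)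

theorem cay_zero : cay (0 : Matrix (Fin n) (Fin n) ℂ) = 1 := by
  rw [cay]; simp; module

/-- Stabilizers are path connected: scaling the Cayley logarithm of (a rotation of) `s` to zero, and
the rotation angle along with it, gives a path of matrices commuting with everything `s` commutes
with. -/
theorem exists_stab_path (a : HermTuple n r) (s : Un n) (hs : s ∈ (rep n r).stab a) :
    ∃ p : C(I, Un n), p 0 = 1 ∧ p 1 = s ∧ ∀ t, p t ∈ (rep n r).stab a := by
  obtain ⟨θ, hu⟩ := exists_unit_scalar (s : Matrix (Fin n) (Fin n) ℂ)
  set w := Complex.exp (-(θ * Complex.I)) • (s : Matrix (Fin n) (Fin n) ℂ) with hw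
  have hZ : (icay w).IsHermitian := isHermitian_icay (exp_neg_smul_mul_ct θ s) hu
  have hZt : ∀ t : ℝ, (t • icay w).IsHermitian := fun t => by
    rw [Matrix.IsHermitian, Matrix.conjTranspose_smul, hZ.eq]; simp
  refine ⟨⟨fun t => rot (t * θ) ((t : ℝ) • icay w) (hZt t), ?_⟩, ?_, ?_, ?_⟩
  · refine Continuous.subtype_mk ?_ _
    have h1 : Continuous fun t : I => Complex.exp (((t * θ : ℝ) : ℂ) * Complex.I) := by fun_prop
    have h2 : Continuous fun t : I => (t : ℝ) • icay w :=
      continuous_subtype_val.smul continuous_const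
    exact h1.smul (continuous_cay_comp h2 fun t => hZt t)
  · apply Subtype.ext
    simp [rot, cay_zero]
  · apply Subtype.ext
    have := congrArg Subtype.val (rot_icay hu hZ)
    simpa [rot] using this
  · intro t
    rw [mem_stab_iff] at hs ⊢
    intro i
    have h1 : Commute w (mat a i) := Commute.smul_left (hs i) _
    exact (commute_cay (hZt t) ((commute_icay hu h1).smul_left (t : ℝ))).smul_left _

/-- The equivariant chart of `U(n)^r` given by rotated Cayley transforms, with one angle for each
entry. -/
noncomputable def chart (θ : Fin r → ℝ) (x : HermTuple n r) (i : Fin r) : Un n :=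
  rot (θ i) (mat x i) (isHermitian_mat x i)

theorem continuous_chart (θ : Fin r → ℝ) : Continuous (chart (n := n) θ) := by
  refine continuous_pi fun i => Continuous.subtype_mk ?_ _
  exact (continuous_cay_comp (continuous_mat_apply i) fun x => isHermitian_mat x i).const_smul
    (Complex.exp (θ i * Complex.I))

theorem chart_act (θ : Fin r → ℝ) (g : Un n) (x : HermTuple n r) :
    chart θ ((rep n r).act g x) = ConjAct.toConjAct g • chart θ x := by
  ext1 i
  apply Subtype.ext
  rw [Pi.smul_apply, ConjAct.toConjAct_smul]
  simp only [chart, rot, mat_act, Submonoid.coe_mul, coe_inv]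
  rw [cay_conj g (isHermitian_mat x i)]
  simp

theorem chart_injective (θ : Fin r → ℝ) : Function.Injective (chart (n := n) θ) := by
  intro x y hxy
  apply mat_injective
  ext1 i
  rw [← icay_cay (isHermitian_mat x i), ← icay_cay (isHermitian_mat y i)]
  rw [← exp_neg_smul_rot (θ i) (isHermitian_mat x i), ← exp_neg_smul_rot (θ i) (isHermitian_mat y i)]
  have := congrArg Subtype.val (congrFun hxy i)
  simp only [chart] at this
  rw [this]

/-- The inverse of `chart θ`; its values outside `chartTarget θ` are irrelevant. -/
noncomputable def chartInv (θ : Fin r → ℝ) (A : Fin r → Un n) : HermTuple n r :=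
  ofMat fun i => icay (Complex.exp (-(θ i * Complex.I)) • (A i : Matrix (Fin n) (Fin n) ℂ))

/-- The image of `chart θ`: tuples whose `i`-th entry does not have `-exp (i θᵢ)` as an
eigenvalue. -/
def chartTarget (θ : Fin r → ℝ) : Set (Fin r → Un n) :=
  {A | ∀ i, IsUnit (Complex.exp (-(θ i * Complex.I)) • (A i : Matrix (Fin n) (Fin n) ℂ) + 1)}

theorem chart_chartInv {θ : Fin r → ℝ} {A : Fin r → Un n} (hA : A ∈ chartTarget θ) :
    chart θ (chartInv θ A) = A := by
  ext1 i
  have h : ∀ i, (icay (Complex.exp (-(θ i * Complex.I)) •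
      (A i : Matrix (Fin n) (Fin n) ℂ))).IsHermitian := fun i =>
    isHermitian_icay (exp_neg_smul_mul_ct (θ i) (A i)) (hA i)
  rw [← rot_icay (hA i) (h i), chart]
  congr 1
  rw [chartInv, mat_ofMat h]

theorem chart_mem_target (θ : Fin r → ℝ) (x : HermTuple n r) : chart θ x ∈ chartTarget θ := by
  intro i
  rw [chart, exp_neg_smul_rot]
  exact isUnit_cay_add_one (isHermitian_mat x i)

theorem isOpen_chartTarget (θ : Fin r → ℝ) : IsOpen (chartTarget (n := n) θ) := by
  have : chartTarget (n := n) θ = ⋂ i, {A : Fin r → Un n |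
      (Complex.exp (-(θ i * Complex.I)) • (A i : Matrix (Fin n) (Fin n) ℂ) + 1).det ≠ 0} := by
    ext A
    simp [chartTarget, Matrix.isUnit_iff_isUnit_det, isUnit_iff_ne_zero]
  rw [this]
  refine isOpen_iInter_of_finite fun i => isOpen_ne_fun ?_ continuous_const
  exact Continuous.matrix_det (by fun_prop)

theorem continuousOn_chartInv (θ : Fin r → ℝ) :
    ContinuousOn (chartInv (n := n) θ) (chartTarget θ) := by
  refine continuous_ofMat.comp_continuousOn (continuousOn_pi.2 fun i A hA => ?_)
  have h1 : ContinuousAt (fun A : Fin r → Un n =>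
      (Complex.exp (-(θ i * Complex.I)) • (A i : Matrix (Fin n) (Fin n) ℂ) + 1)⁻¹) A :=
    (continuousAt_inv (hA i)).comp (f := fun A : Fin r → Un n =>
      (Complex.exp (-(θ i * Complex.I)) • (A i : Matrix (Fin n) (Fin n) ℂ) + 1))
      (by
        have : Continuous fun A : Fin r → Un n => (A i : Matrix (Fin n) (Fin n) ℂ) := by fun_prop
        exact ((this.const_smul (Complex.exp (-(θ i * Complex.I)))).add
          continuous_const).continuousAt)
  exact (((h1.const_smul (2 : ℂ)).sub continuousAt_const).const_smul Complex.I).continuousWithinAt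

theorem isOpenMap_chart (θ : Fin r → ℝ) : IsOpenMap (chart (n := n) θ) := by
  intro O hO
  have : chart θ '' O = chartTarget θ ∩ chartInv θ ⁻¹' O := by
    ext A
    constructor
    · rintro ⟨x, hx, rfl⟩
      refine ⟨chart_mem_target θ x, ?_⟩
      have := chart_injective θ (chart_chartInv (chart_mem_target θ x))
      rwa [mem_preimage, this]
    · rintro ⟨h1, h2⟩
      exact ⟨_, h2, chart_chartInv h1⟩
  rw [this]
  exact (continuousOn_chartInv θ).isOpen_inter_preimage (isOpen_chartTarget θ) hO

/-- The chart followed by the projection to the character variety. -/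
noncomputable def chartClass (θ : Fin r → ℝ) (x : HermTuple n r) : CharVarU n r :=
  Quotient.mk (MulAction.orbitRel (ConjAct (Un n)) (Fin r → Un n)) (chart θ x)

instance : ContinuousConstSMul (ConjAct (Un n)) (Fin r → Un n) where
  continuous_const_smul g := by
    refine continuous_pi fun i => ?_
    simp only [Pi.smul_apply, ConjAct.smul_def]
    fun_prop

theorem isOrbitMap_chartClass (θ : Fin r → ℝ) : (rep n r).IsOrbitMap (chartClass (n := n) θ) where
  cont := continuous_quotient_mk'.comp (continuous_chart θ)
  isOpenMap := (isOpenMap_quotient_mk'_mul (Γ := ConjAct (Un n))).comp (isOpenMap_chart θ)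
  eq_iff x y := by
    rw [chartClass, chartClass, Quotient.eq, MulAction.orbitRel_apply, MulAction.mem_orbit_iff]
    constructor
    · rintro ⟨g, hg⟩
      refine ⟨(ConjAct.ofConjAct g)⁻¹, chart_injective θ ?_⟩
      rw [chart_act, ← hg]
      simp
    · rintro ⟨g, rfl⟩
      refine ⟨(ConjAct.toConjAct g)⁻¹, ?_⟩
      rw [chart_act]
      simp

end HermTuple

/-! ### Irreducible tuples -/

namespace HermTuple

variable {n r : ℕ}

theorem isIrreducible_smul (g : ConjAct (Un n)) {A : Fin r → Un n} (hA : IsIrreducibleTupleU A) :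
    IsIrreducibleTupleU (g • A) := by
  intro p hp
  set G : Un n := ConjAct.ofConjAct g
  have h1 := mul_ct G
  have h2 := ct_mul G
  set M := (G : Matrix (Fin n) (Fin n) ℂ) with hM
  have hback : (p.comap (Matrix.toLin' M)).comap (Matrix.toLin' Mᴴ) = p := by
    ext v
    simp only [Submodule.mem_comap, Matrix.toLin'_apply, Matrix.mulVec_mulVec, h1, Matrix.one_mulVec]
  rcases hA (p.comap (Matrix.toLin' M)) (fun i v hv => by
    simp only [Submodule.mem_comap, Matrix.toLin'_apply] at hv ⊢
    have := hp i _ hv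
    rw [Pi.smul_apply, ConjAct.smul_def] at this
    simp only [Submonoid.coe_mul, coe_inv] at this
    rw [Matrix.mulVec_mulVec, Matrix.mul_assoc, h2, Matrix.mul_one, ← Matrix.mulVec_mulVec] at this
    exact this) with h | h
  · left
    rw [← hback, h]
    rw [eq_bot_iff]
    intro v hv
    simp only [Submodule.mem_comap, Matrix.toLin'_apply, Submodule.mem_bot] at hv ⊢
    rw [← Matrix.one_mulVec v, ← h1, ← Matrix.mulVec_mulVec, hv, Matrix.mulVec_zero]
  · right
    rw [← hback, h, Submodule.comap_top]

/-- The product of the matrices `A i` along a list of indices. -/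
def word (A : Fin r → Un n) (L : List (Fin r)) : Matrix (Fin n) (Fin n) ℂ :=
  (L.map fun i => (A i : Matrix (Fin n) (Fin n) ℂ)).prod

theorem continuous_word (L : List (Fin r)) : Continuous fun A : Fin r → Un n => word A L :=
  continuous_list_prod L fun i _ => by fun_prop

/-- A tuple is reducible iff there are unit vectors `u` and `w` such that every word in the tuple
sends `u` into the kernel of `w`. This exhibits the reducible locus as the
projection of a closed set along a compact factor. -/
theorem not_isIrreducible_iff {A : Fin r → Un n} : ¬ IsIrreducibleTupleU A ↔
    ∃ z : Metric.sphere (0 : Fin n → ℂ) 1 × Metric.sphere (0 : Fin n → ℂ) 1,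
      ∀ L, (z.2 : Fin n → ℂ) ⬝ᵥ (word A L *ᵥ (z.1 : Fin n → ℂ)) = 0 := by
  have hnorm : ∀ v : Fin n → ℂ, v ≠ 0 → ((‖v‖⁻¹ : ℝ) : ℂ) • v ∈ Metric.sphere (0 : Fin n → ℂ) 1 := by
    intro v hv
    rw [mem_sphere_zero_iff_norm, norm_smul]
    simp [hv]
  constructor
  · intro h
    unfold IsIrreducibleTupleU at h
    push Not at h
    obtain ⟨p, hp, hbot, htop⟩ := h
    obtain ⟨u, hu, hu0⟩ := p.exists_mem_ne_zero_of_ne_bot hbot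
    obtain ⟨f, hf0, hf⟩ := Submodule.exists_le_ker_of_lt_top p (lt_top_iff_ne_top.2 htop)
    set w : Fin n → ℂ := fun i => f (Pi.single i 1) with hw
    have hfw : ∀ v, w ⬝ᵥ v = f v := by
      intro v
      conv_rhs => rw [← Finset.univ_sum_single v, map_sum]
      refine Finset.sum_congr rfl fun i _ => ?_
      have : (Pi.single i (v i) : Fin n → ℂ) = v i • Pi.single i 1 := by
        rw [← Pi.single_smul, smul_eq_mul, mul_one]
      rw [this, map_smul, smul_eq_mul, mul_comm]
    have hw0 : w ≠ 0 := by
      intro h0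
      refine hf0 (LinearMap.ext fun v => ?_)
      rw [← hfw, h0, zero_dotProduct, LinearMap.zero_apply]
    refine ⟨(⟨_, hnorm u hu0⟩, ⟨_, hnorm w hw0⟩), fun L => ?_⟩
    have hL : word A L *ᵥ u ∈ p := by
      induction L with
      | nil => simpa [word] using hu
      | cons i L ih =>
        have := hp i _ ih
        rwa [Matrix.mulVec_mulVec] at this
    have : w ⬝ᵥ (word A L *ᵥ u) = 0 := by rw [hfw]; exact hf hL
    simp [Matrix.mulVec_smul, this]
  · rintro ⟨⟨u, w⟩, h⟩ hirr
    rcases hirr (Submodule.span ℂ (range fun L => word A L *ᵥ (u : Fin n → ℂ))) (fun i v hv => by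
      induction hv using Submodule.span_induction with
      | mem v hv =>
        obtain ⟨L, rfl⟩ := hv
        refine Submodule.subset_span ⟨i :: L, ?_⟩
        simp [word, Matrix.mulVec_mulVec]
      | zero => simp
      | add x y _ _ hx hy => rw [Matrix.mulVec_add]; exact Submodule.add_mem _ hx hy
      | smul c x _ hx => rw [Matrix.mulVec_smul]; exact Submodule.smul_mem _ _ hx) with hp | hp
    · have h0 : (u : Fin n → ℂ) ∈ Submodule.span ℂ (range fun L => word A L *ᵥ (u : Fin n → ℂ)) :=
        Submodule.subset_span ⟨[], by simp [word]⟩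
      rw [hp, Submodule.mem_bot] at h0
      have := mem_sphere_zero_iff_norm.1 u.2
      rw [h0] at this
      simp at this
    · have hz : ∀ v : Fin n → ℂ, (w : Fin n → ℂ) ⬝ᵥ v = 0 := by
        intro v
        have hv : v ∈ Submodule.span ℂ (range fun L => word A L *ᵥ (u : Fin n → ℂ)) := by
          rw [hp]; trivial
        induction hv using Submodule.span_induction with
        | mem v hv => obtain ⟨L, rfl⟩ := hv; exact h L
        | zero => simp
        | add x y _ _ hx hy => rw [dotProduct_add, hx, hy, add_zero]
        | smul c x _ hx => rw [dotProduct_smul, hx, smul_zero]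
      have h0 : (w : Fin n → ℂ) = 0 := dotProduct_eq_zero _ hz
      have := mem_sphere_zero_iff_norm.1 w.2
      rw [h0] at this
      simp at this

theorem isOpen_isIrreducible : IsOpen {A : Fin r → Un n | IsIrreducibleTupleU A} := by
  rw [← isClosed_compl_iff]
  have : {A : Fin r → Un n | IsIrreducibleTupleU A}ᶜ = Prod.snd ''
      {p : (Metric.sphere (0 : Fin n → ℂ) 1 × Metric.sphere (0 : Fin n → ℂ) 1) × (Fin r → Un n) |
        ∀ L, (p.1.2 : Fin n → ℂ) ⬝ᵥ (word p.2 L *ᵥ (p.1.1 : Fin n → ℂ)) = 0} := by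
    ext A
    rw [mem_compl_iff, mem_ofPred_eq, not_isIrreducible_iff]
    simp
  rw [this]
  refine isClosedMap_snd_of_compactSpace _ ?_
  rw [ofPred_forall]
  refine isClosed_iInter fun L => isClosed_eq ?_ continuous_const
  have h1 := (continuous_word (n := n) L).comp (continuous_snd (X :=
    Metric.sphere (0 : Fin n → ℂ) 1 × Metric.sphere (0 : Fin n → ℂ) 1))
  exact Continuous.dotProduct (by fun_prop) (h1.matrix_mulVec (by fun_prop))

/-- Schur's lemma: the stabilizer of an irreducible tuple consists of scalars, which act trivially. -/
theorem act_eq_of_stab (θ : Fin r → ℝ) {c : HermTuple n r}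
    (hc : IsIrreducibleTupleU (chart θ c)) {g : Un n} (hg : (rep n r).act g c = c)
    (x : HermTuple n r) : (rep n r).act g x = x := by
  rcases Nat.eq_zero_or_pos n with rfl | hn
  · exact mat_injective (Subsingleton.elim _ _)
  have : Nonempty (Fin n) := ⟨⟨0, hn⟩⟩
  obtain ⟨μ, hμ⟩ := Module.End.exists_eigenvalue (Matrix.toLin' (g : Matrix (Fin n) (Fin n) ℂ))
  have hcomm : ∀ i, Commute (cay (mat c i)) (g : Matrix (Fin n) (Fin n) ℂ) := fun i =>
    commute_cay (isHermitian_mat c i) ((mem_stab_iff.1 hg i).symm)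
  rcases hc (Module.End.eigenspace (Matrix.toLin' (g : Matrix (Fin n) (Fin n) ℂ)) μ)
    (fun i v hv => by
      rw [Module.End.mem_eigenspace_iff, Matrix.toLin'_apply] at hv ⊢
      simp only [chart, rot]
      rw [Matrix.smul_mulVec, Matrix.mulVec_smul, Matrix.mulVec_mulVec, ← (hcomm i).eq,
        ← Matrix.mulVec_mulVec, hv, Matrix.mulVec_smul, smul_comm]) with h | h
  · exact absurd h hμ
  · have hs : (g : Matrix (Fin n) (Fin n) ℂ) = μ • 1 := by
      refine Matrix.toLin'.injective (LinearMap.ext fun v => ?_)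
      have : v ∈ Module.End.eigenspace (Matrix.toLin' (g : Matrix (Fin n) (Fin n) ℂ)) μ := by
        rw [h]; trivial
      rw [Module.End.mem_eigenspace_iff] at this
      rw [this, map_smul, Matrix.toLin'_one]
      rfl
    refine mem_stab_iff.2 fun i => ?_
    rw [hs]; simp

end HermTuple

/-! ### Parametrizing reducible tuples -/

namespace HermTuple

variable {n r : ℕ}

theorem inv_mulVec_mem {M : Matrix (Fin n) (Fin n) ℂ} (hM : IsUnit M)
    {p : Submodule ℂ (Fin n → ℂ)} (h : ∀ v ∈ p, M *ᵥ v ∈ p) {v : Fin n → ℂ} (hv : v ∈ p) :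
    M⁻¹ *ᵥ v ∈ p := by
  have hinj : Function.Injective (Matrix.toLin' M) := by
    refine Function.LeftInverse.injective (g := Matrix.toLin' M⁻¹) fun v => ?_
    simp [Matrix.mulVec_mulVec, inv_mul_of_isUnit hM]
  have hle : p.map (Matrix.toLin' M) ≤ p := by
    rintro _ ⟨v, hv, rfl⟩
    exact h v hv
  have heq := Submodule.eq_of_le_of_finrank_eq hle
    (p.equivMapOfInjective _ hinj).finrank_eq.symm
  rw [← heq] at hv
  obtain ⟨u, hu, rfl⟩ := hv
  rw [Matrix.toLin'_apply, Matrix.mulVec_mulVec, inv_mul_of_isUnit hM, Matrix.one_mulVec]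
  exact hu

/-- Subspaces invariant under a unitary matrix in the chart are invariant under its Cayley logarithm. -/
theorem mat_mulVec_mem {θ : Fin r → ℝ} {x : HermTuple n r} {p : Submodule ℂ (Fin n → ℂ)} {i : Fin r}
    (h : ∀ v ∈ p, (chart θ x i : Matrix (Fin n) (Fin n) ℂ) *ᵥ v ∈ p) {v : Fin n → ℂ} (hv : v ∈ p) :
    mat x i *ᵥ v ∈ p := by
  have hw : ∀ v ∈ p, (cay (mat x i) + 1) *ᵥ v ∈ p := by
    intro v hv
    rw [← exp_neg_smul_rot (θ i) (isHermitian_mat x i), Matrix.add_mulVec, Matrix.one_mulVec,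
      Matrix.smul_mulVec]
    exact p.add_mem (p.smul_mem _ (h v hv)) hv
  have := inv_mulVec_mem (isUnit_cay_add_one (isHermitian_mat x i)) hw hv
  rw [← icay_cay (isHermitian_mat x i), icay, Matrix.smul_mulVec, Matrix.sub_mulVec,
    Matrix.smul_mulVec, Matrix.one_mulVec]
  exact p.smul_mem _ (p.sub_mem (p.smul_mem _ this) hv)

/-- The projection onto the span of the basis vectors with index in `J`. -/
def proj (J : Finset (Fin n)) : Matrix (Fin n) (Fin n) ℂ :=
  Matrix.diagonal fun j => if j ∈ J then 1 else 0

/-- Every subspace is the kernel of a matrix in echelon form. The set `J` indexes basis vectors which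
form a basis of the quotient by `p`, and `S` expresses a vector modulo `p` in that basis. -/
theorem exists_echelon (p : Submodule ℂ (Fin n → ℂ)) :
    ∃ (J : Finset (Fin n)) (S : Matrix (Fin n) (Fin n) ℂ), proj J * S = S ∧ S * proj J = proj J ∧
      ∀ v, v ∈ p ↔ S *ᵥ v = 0 := by
  classical
  obtain ⟨κ, a, ha, hspan, hli⟩ := exists_linearIndependent' ℂ
    fun k : Fin n => p.mkQ (Pi.single k 1)
  have hfull : Submodule.span ℂ (range fun k : Fin n => p.mkQ (Pi.single k 1)) = ⊤ := by
    have h1 : (range fun k : Fin n => p.mkQ (Pi.single k 1)) =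
        p.mkQ '' range fun k : Fin n => (Pi.single k 1 : Fin n → ℂ) := by
      rw [← range_comp]; rfl
    have h2 : Submodule.span ℂ (range fun k : Fin n => (Pi.single k 1 : Fin n → ℂ)) = ⊤ := by
      have := (Pi.basisFun ℂ (Fin n)).span_eq
      convert this using 3
      ext1 k
      simp
    rw [h1, ← Submodule.map_span, h2, Submodule.map_top, Submodule.range_mkQ]
  let b : Module.Basis κ ℂ ((Fin n → ℂ) ⧸ p) := Module.Basis.mk hli (by rw [hspan, hfull])
  have hb : ∀ l, b l = p.mkQ (Pi.single (a l) 1) := fun l => by simp [b]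
  let L : Fin n → (Fin n → ℂ) →ₗ[ℂ] ℂ := fun j =>
    if h : ∃ l, a l = j then (b.coord h.choose).comp p.mkQ else 0
  have hL : ∀ l, L (a l) = (b.coord l).comp p.mkQ := by
    intro l
    have h : ∃ l', a l' = a l := ⟨l, rfl⟩
    simp only [L]
    rw [dif_pos h, ha h.choose_spec]
  have hL0 : ∀ j, (¬ ∃ l, a l = j) → L j = 0 := fun j hj => dif_neg hj
  have hS : ∀ v, (LinearMap.toMatrix' (LinearMap.pi L)) *ᵥ v = fun j => L j v := by
    intro v
    rw [LinearMap.toMatrix'_mulVec]; rfl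
  refine ⟨Finset.univ.filter fun j => ∃ l, a l = j, LinearMap.toMatrix' (LinearMap.pi L), ?_, ?_, ?_⟩
  · ext j k
    simp only [proj, Matrix.diagonal_mul, LinearMap.toMatrix'_apply, LinearMap.pi_apply]
    by_cases h : ∃ l, a l = j
    · simp [h]
    · rw [hL0 j h]; simp
  · ext j k
    simp only [proj, Matrix.mul_diagonal, LinearMap.toMatrix'_apply, LinearMap.pi_apply]
    by_cases h : ∃ l, a l = k
    · obtain ⟨l, rfl⟩ := h
      by_cases h' : ∃ l, a l = j
      · obtain ⟨l', rfl⟩ := h'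
        rw [hL, LinearMap.comp_apply, ← hb]
        simp [Matrix.diagonal_apply, Finsupp.single_apply, ha.eq_iff, eq_comm]
      · rw [hL0 j h']
        simp only [Matrix.diagonal_apply]
        simp only [Finset.mem_filter, h']
        simp
    · simp only [Matrix.diagonal_apply]
      by_cases hjk : j = k
      · subst hjk; simp [h]
      · simp [h, hjk]
  · intro v
    rw [hS, ← Submodule.Quotient.mk_eq_zero, ← Submodule.mkQ_apply, ← b.repr.map_eq_zero_iff]
    constructor
    · intro h
      ext1 j
      by_cases hj : ∃ l, a l = j
      · obtain ⟨l, rfl⟩ := hj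
        rw [hL, LinearMap.comp_apply, Module.Basis.coord_apply, h]; rfl
      · rw [hL0 j hj]; rfl
    · intro h
      ext l
      have := congrFun h (a l)
      rw [hL] at this
      simpa using this

theorem isHermitian_proj (J : Finset (Fin n)) : (proj J).IsHermitian := by
  rw [Matrix.IsHermitian, proj, Matrix.diagonal_conjTranspose]
  congr 1
  ext j
  by_cases h : j ∈ J <;> simp [h]

theorem proj_mul_proj (J : Finset (Fin n)) : proj J * proj J = proj J := by
  rw [proj, Matrix.diagonal_mul_diagonal]
  congr 1
  ext j
  by_cases h : j ∈ J <;> simp [h]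

open scoped ComplexOrder in
/-- If the kernel of `P + C` is invariant under the Hermitian matrix `X`, then `X` is congruent, by
`g = 1 + (Cᴴ - C)`, to a Hermitian matrix which is block diagonal with respect to `P`.

The matrix `g` is invertible, being the sum of the identity and a skew-Hermitian matrix. It maps
the range of `1 - P` onto the kernel of `P + C` and the range of `P` onto its orthogonal
complement; as `gᴴ g` commutes with `P`, the congruence `g⁻¹ X (g⁻¹)ᴴ` is block diagonal along with
`g⁻¹ X g`. Polar decomposition is avoided, so that the parametrization of the reducible tuples is
polynomial. -/
theorem exists_block {P C X : Matrix (Fin n) (Fin n) ℂ} (hP : P.IsHermitian) (hPP : P * P = P)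
    (hPC : P * C = C) (hCP : C * P = 0) (hX : X.IsHermitian)
    (hinv : ∀ v, (P + C) *ᵥ v = 0 → (P + C) *ᵥ (X *ᵥ v) = 0) :
    ∃ Y : Matrix (Fin n) (Fin n) ℂ, Y.IsHermitian ∧ P * Y = Y * P ∧
      (1 + (Cᴴ - C)) * Y * (1 + (Cᴴ - C))ᴴ = X := by
  have hCP' : Cᴴ * P = Cᴴ := by
    conv_lhs => rw [← hP.eq, ← Matrix.conjTranspose_mul, hPC]
  have hPC' : P * Cᴴ = 0 := by
    conv_lhs => rw [← hP.eq, ← Matrix.conjTranspose_mul, hCP, Matrix.conjTranspose_zero]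
  have hCC : C * C = 0 := by
    calc C * C = C * (P * C) := by rw [hPC]
      _ = 0 := by rw [← Matrix.mul_assoc, hCP, Matrix.zero_mul]
  have hCC' : Cᴴ * Cᴴ = 0 := by
    rw [← Matrix.conjTranspose_mul, hCC, Matrix.conjTranspose_zero]
  have hg : IsUnit (1 + (Cᴴ - C)) := isUnit_one_add_of_skew (by simp)
  have hpos : IsUnit (1 + C * Cᴴ) :=
    (Matrix.PosDef.one.add_posSemidef (Matrix.posSemidef_self_mul_conjTranspose C)).isUnit
  set g := 1 + (Cᴴ - C) with hgdef
  have hSg : (P + C) * g = (1 + C * Cᴴ) * P := by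
    have h1 : C * Cᴴ * P = C * Cᴴ := by rw [Matrix.mul_assoc, hCP']
    rw [hgdef]
    simp only [mul_add, add_mul, mul_sub, hPC, hPC', hCC, h1, mul_one, one_mul]
    abel
  have hgg : gᴴ * g = 1 + (C * Cᴴ + Cᴴ * C) := by
    rw [hgdef]
    simp only [Matrix.conjTranspose_add, Matrix.conjTranspose_sub, Matrix.conjTranspose_one,
      Matrix.conjTranspose_conjTranspose, mul_add, add_mul, mul_sub, sub_mul, hCC, hCC', mul_one,
      one_mul]
    abel
  have hgP : Commute (gᴴ * g) P := by
    rw [hgg]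
    change _ * _ = _ * _
    have h1 : P * (C * Cᴴ) = C * Cᴴ := by rw [← Matrix.mul_assoc, hPC]
    have h2 : P * (Cᴴ * C) = 0 := by rw [← Matrix.mul_assoc, hPC', Matrix.zero_mul]
    simp only [add_mul, mul_add, Matrix.mul_assoc, hCP, hCP', h1, h2, mul_one, one_mul,
      Matrix.mul_zero]
  have h1 := inv_mul_of_isUnit hg
  have h2 := mul_inv_of_isUnit hg
  have h1' : gᴴ * (g⁻¹)ᴴ = 1 := by rw [← Matrix.conjTranspose_mul, h1, Matrix.conjTranspose_one]
  have h2' : (g⁻¹)ᴴ * gᴴ = 1 := by rw [← Matrix.conjTranspose_mul, h2, Matrix.conjTranspose_one]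
  have hYH : (g⁻¹ * X * (g⁻¹)ᴴ).IsHermitian := Matrix.isHermitian_mul_mul_conjTranspose _ hX
  have hD : Commute (g⁻¹ * (g⁻¹)ᴴ) P := by
    have : (gᴴ * g)⁻¹ = g⁻¹ * (g⁻¹)ᴴ := by
      rw [Matrix.mul_inv_rev, Matrix.conjTranspose_nonsing_inv]
    rw [← this]
    refine commute_inv ?_ hgP
    exact IsUnit.mul (by rw [← Matrix.star_eq_conjTranspose]; exact hg.star) hg
  -- `g⁻¹ X g` preserves the range of `1 - P`
  have hZ : P * (g⁻¹ * X * g) * (1 - P) = 0 := by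
    have ha : (P + C) * (X * (g * (1 - P))) = 0 := by
      apply Matrix.toLin'.injective
      refine LinearMap.ext fun v => ?_
      rw [Matrix.toLin'_apply, map_zero, LinearMap.zero_apply, ← Matrix.mulVec_mulVec,
        ← Matrix.mulVec_mulVec]
      apply hinv
      rw [Matrix.mulVec_mulVec, ← Matrix.mul_assoc, hSg, Matrix.mul_assoc, mul_sub, hPP, mul_one,
        sub_self, Matrix.mul_zero, Matrix.zero_mulVec]
    have hb : (1 + C * Cᴴ) * (P * (g⁻¹ * X * g) * (1 - P)) = 0 := by
      rw [← ha, ← Matrix.mul_assoc, ← Matrix.mul_assoc, ← hSg]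
      calc (P + C) * g * (g⁻¹ * X * g) * (1 - P) = (P + C) * (g * g⁻¹) * X * g * (1 - P) := by
            simp only [Matrix.mul_assoc]
        _ = _ := by rw [h2]; simp only [Matrix.mul_assoc, Matrix.one_mul]
    calc P * (g⁻¹ * X * g) * (1 - P)
        = (1 + C * Cᴴ)⁻¹ * ((1 + C * Cᴴ) * (P * (g⁻¹ * X * g) * (1 - P))) := by
          rw [← Matrix.mul_assoc (1 + C * Cᴴ)⁻¹, inv_mul_of_isUnit hpos, Matrix.one_mul]
      _ = 0 := by rw [hb, Matrix.mul_zero]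
  have hY : P * (g⁻¹ * X * (g⁻¹)ᴴ) * (1 - P) = 0 := by
    have hD' : (g⁻¹ * (g⁻¹)ᴴ) * (1 - P) = (1 - P) * (g⁻¹ * (g⁻¹)ᴴ) := by
      rw [mul_sub, sub_mul, hD.eq, mul_one, one_mul]
    calc P * (g⁻¹ * X * (g⁻¹)ᴴ) * (1 - P)
        = P * (g⁻¹ * X * (g * g⁻¹) * (g⁻¹)ᴴ) * (1 - P) := by rw [h2, mul_one]
      _ = P * (g⁻¹ * X * g) * ((g⁻¹ * (g⁻¹)ᴴ) * (1 - P)) := by simp only [Matrix.mul_assoc]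
      _ = P * (g⁻¹ * X * g) * (1 - P) * (g⁻¹ * (g⁻¹)ᴴ) := by rw [hD', ← Matrix.mul_assoc]
      _ = 0 := by rw [hZ, Matrix.zero_mul]
  refine ⟨g⁻¹ * X * (g⁻¹)ᴴ, hYH, ?_, ?_⟩
  · set Y := g⁻¹ * X * (g⁻¹)ᴴ
    have h3 : P * Y = P * Y * P := by
      rw [mul_sub, mul_one, sub_eq_zero] at hY; exact hY
    have h4 := congrArg Matrix.conjTranspose h3
    simp only [Matrix.conjTranspose_mul, hP.eq, hYH.eq] at h4
    rw [h3, h4, Matrix.mul_assoc]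
  · calc g * (g⁻¹ * X * (g⁻¹)ᴴ) * gᴴ = (g * g⁻¹) * X * ((g⁻¹)ᴴ * gᴴ) := by
          simp only [Matrix.mul_assoc]
      _ = X := by rw [h2, h2', mul_one, one_mul]

/-- The positions of the two diagonal blocks determined by `J` and its complement. -/
abbrev diagBlocks (J : Finset (Fin n)) : Finset (Fin n × Fin n) := J ×ˢ J ∪ Jᶜ ×ˢ Jᶜ

/-- The parameters of a reducible tuple: an off-diagonal block, which fixes an invariant subspace,
and the coordinates of a tuple of block diagonal Hermitian matrices. -/
abbrev Param (r : ℕ) (J : Finset (Fin n)) : Type :=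
  (↥(J ×ˢ Jᶜ) → ℂ) × (Fin r × ↥(diagBlocks J) → ℝ)

/-- The matrix with a given block in rows `J` and columns `Jᶜ`, and zeros elsewhere. -/
def corner (J : Finset (Fin n)) (T : ↥(J ×ˢ Jᶜ) → ℂ) : Matrix (Fin n) (Fin n) ℂ :=
  Matrix.of fun a b => if h : (a, b) ∈ J ×ˢ Jᶜ then T ⟨(a, b), h⟩ else 0

/-- The tuple of block diagonal Hermitian matrices with given coordinates. -/
noncomputable def blocks (J : Finset (Fin n)) (M : Fin r × ↥(diagBlocks J) → ℝ) : HermTuple n r :=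
  WithLp.toLp 2 fun q => if h : q.2 ∈ diagBlocks J then M (q.1, ⟨q.2, h⟩) else 0

/-- The congruence by `1 + (Cᴴ - C)` of a block diagonal tuple, where `C` is the off-diagonal
parameter. -/
noncomputable def param (J : Finset (Fin n)) (t : Param r J) : HermTuple n r :=
  ofMat fun i => (1 + ((corner J t.1)ᴴ - corner J t.1)) * mat (blocks J t.2) i *
    (1 + ((corner J t.1)ᴴ - corner J t.1))ᴴ

theorem finrank_param (r : ℕ) (J : Finset (Fin n)) : Module.finrank ℝ (Param r J) =
    2 * (J.card * Jᶜ.card) + r * (J.card * J.card + Jᶜ.card * Jᶜ.card) := by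
  have hd : Disjoint (J ×ˢ J) (Jᶜ ×ˢ Jᶜ) := by
    rw [Finset.disjoint_left]
    rintro ⟨a, b⟩ h1 h2
    simp only [Finset.mem_product, Finset.mem_compl] at h1 h2
    exact h2.1 h1.1
  rw [Module.finrank_prod, Module.finrank_fintype_fun_eq_card, Module.finrank_pi_fintype]
  simp only [Complex.finrank_real_complex, Finset.sum_const, Finset.card_univ, Fintype.card_coe,
    Fintype.card_prod, Fintype.card_fin, Finset.card_product]
  rw [Finset.card_union_of_disjoint hd, Finset.card_product, Finset.card_product]
  simp [mul_comm]

/-- The parameter space has codimension `2 (r - 1) |J| |Jᶜ|`, which exceeds two under the assumption on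
`r` and `n`. -/
theorem finrank_param_lt (h : 3 ≤ r ∨ (2 ≤ r ∧ 3 ≤ n)) {J : Finset (Fin n)} (h1 : J ≠ ∅)
    (h2 : Jᶜ ≠ ∅) : Module.finrank ℝ (Param r J) + 2 < Module.finrank ℝ (HermTuple n r) := by
  have hE : Module.finrank ℝ (HermTuple n r) = r * (n * n) := by
    simp [HermTuple]
  rw [finrank_param, hE]
  have hc : J.card + Jᶜ.card = n := by simp
  have ha := Finset.card_pos.2 (Finset.nonempty_iff_ne_empty.2 h1)
  have hb := Finset.card_pos.2 (Finset.nonempty_iff_ne_empty.2 h2)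
  generalize J.card = a at *
  generalize Jᶜ.card = b at *
  subst hc
  have hab : 1 ≤ a * b := Nat.mul_pos ha hb
  have key : 2 * (a * b) + 2 < r * (2 * (a * b)) := by
    rcases h with h | ⟨h, hn⟩
    · nlinarith
    · have : 2 ≤ a * b := by
        rcases (show 2 ≤ a ∨ 2 ≤ b by omega) with h | h <;> nlinarith
      nlinarith
  nlinarith

theorem contDiff_param (J : Finset (Fin n)) : ContDiff ℝ 1 (param (r := r) J) := by
  have hmul : ∀ F H : Param r J → Matrix (Fin n) (Fin n) ℂ,
      (∀ a b, ContDiff ℝ 1 fun t => F t a b) → (∀ a b, ContDiff ℝ 1 fun t => H t a b) →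
      ∀ a b, ContDiff ℝ 1 fun t => (F t * H t) a b := by
    intro F H hF hH a b
    simp only [Matrix.mul_apply]
    exact ContDiff.sum fun k _ => (hF a k).mul (hH k b)
  have hstar : ∀ F : Param r J → Matrix (Fin n) (Fin n) ℂ,
      (∀ a b, ContDiff ℝ 1 fun t => F t a b) → ∀ a b, ContDiff ℝ 1 fun t => (F t)ᴴ a b := by
    intro F hF a b
    exact Complex.conjCLE.contDiff.comp (hF b a)
  have hC : ∀ a b, ContDiff ℝ 1 fun t : Param r J => corner J t.1 a b := by
    intro a b
    by_cases h : (a, b) ∈ J ×ˢ Jᶜ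
    · simp only [corner, Matrix.of_apply, dif_pos h]
      fun_prop
    · simp only [corner, Matrix.of_apply, dif_neg h]
      fun_prop
  have hg : ∀ a b, ContDiff ℝ 1 fun t : Param r J =>
      (1 + ((corner J t.1)ᴴ - corner J t.1)) a b := fun a b =>
    contDiff_const.add ((hstar _ hC a b).sub (hC a b))
  have hB : ∀ q, ContDiff ℝ 1 fun t : Param r J => blocks J t.2 q := by
    intro q
    by_cases h : q.2 ∈ diagBlocks J
    · simp only [blocks, dif_pos h]
      fun_prop
    · simp only [blocks, dif_neg h]
      fun_prop
  have hM : ∀ i a b, ContDiff ℝ 1 fun t : Param r J => mat (blocks J t.2) i a b := by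
    intro i a b
    have : (fun t : Param r J => mat (blocks J t.2) i a b) = fun t : Param r J =>
        Complex.ofRealCLM ((blocks J t.2 (i, a, b) + blocks J t.2 (i, b, a)) / 2) +
        Complex.ofRealCLM ((blocks J t.2 (i, a, b) - blocks J t.2 (i, b, a)) / 2) * Complex.I := by
      ext t
      apply Complex.ext <;> simp [mat]
    rw [this]
    have h1 := hB (i, a, b)
    have h2 := hB (i, b, a)
    exact (Complex.ofRealCLM.contDiff.comp ((h1.add h2).div_const 2)).add
      ((Complex.ofRealCLM.contDiff.comp ((h1.sub h2).div_const 2)).mul contDiff_const)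
  rw [contDiff_euclidean]
  rintro ⟨i, a, b⟩
  have := hmul _ _ (hmul _ _ hg (hM i)) (hstar _ hg) a b
  exact (Complex.reCLM.contDiff.comp this).add (Complex.imCLM.contDiff.comp this)

/-- Every reducible tuple in the chart is parametrized, with both `J` and its complement nonempty. -/
theorem exists_param {θ : Fin r → ℝ} {x : HermTuple n r} (hx : ¬ IsIrreducibleTupleU (chart θ x)) :
    ∃ J : Finset (Fin n), (J ≠ ∅ ∧ Jᶜ ≠ ∅) ∧ x ∈ range (param (r := r) J) := by
  unfold IsIrreducibleTupleU at hx
  push Not at hx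
  obtain ⟨p, hp, hbot, htop⟩ := hx
  obtain ⟨J, S, hPS, hSP, hker⟩ := exists_echelon p
  refine ⟨J, ⟨?_, ?_⟩, ?_⟩
  · rintro rfl
    apply htop
    rw [eq_top_iff]
    intro v _
    rw [hker, ← hPS]
    simp [proj]
  · intro hJ
    apply hbot
    rw [eq_bot_iff]
    intro v hv
    have : J = Finset.univ := by simpa using hJ
    have h1 : proj J = 1 := by rw [this]; simp [proj]
    rw [hker, ← mul_one S, ← h1, hSP, h1, Matrix.one_mulVec] at hv
    exact hv
  · have hC : ∀ i, ∃ Y : Matrix (Fin n) (Fin n) ℂ, Y.IsHermitian ∧ proj J * Y = Y * proj J ∧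
        (1 + ((S - proj J)ᴴ - (S - proj J))) * Y * (1 + ((S - proj J)ᴴ - (S - proj J)))ᴴ =
          mat x i := by
      intro i
      refine exists_block (isHermitian_proj J) (proj_mul_proj J) ?_ ?_ (isHermitian_mat x i) ?_
      · rw [mul_sub, hPS, proj_mul_proj]
      · rw [sub_mul, hSP, proj_mul_proj, sub_self]
      · intro v hv
        rw [add_sub_cancel, ← hker] at hv ⊢
        exact mat_mulVec_mem (hp i) hv
    choose Y hYH hYP hY using hC
    refine ⟨(fun e => (S - proj J) e.1.1 e.1.2, fun e => ofMat Y (e.1, e.2)), ?_⟩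
    apply mat_injective
    have hcorner : corner J (fun e => (S - proj J) e.1.1 e.1.2) = S - proj J := by
      ext a b
      simp only [corner, Matrix.of_apply]
      split_ifs with hab
      · rfl
      · have e1 := congrFun (congrFun hPS a) b
        have e2 := congrFun (congrFun hSP a) b
        simp only [proj, Matrix.diagonal_mul, Matrix.mul_diagonal] at e1 e2
        simp only [Finset.mem_product, Finset.mem_compl, not_and, not_not] at hab
        rw [Matrix.sub_apply]
        by_cases ha : a ∈ J
        · have hb := hab ha
          simp only [hb, if_true, mul_one] at e2
          rw [e2, proj, sub_self]
        · simp only [ha, if_false, zero_mul] at e1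
          rw [← e1, proj, Matrix.diagonal_apply]
          simp [ha]
    have hblocks : blocks J (fun e => ofMat Y (e.1, e.2)) = ofMat Y := by
      ext ⟨i, a, b⟩
      simp only [blocks]
      split_ifs with hab
      · rfl
      · have e := congrFun (congrFun (hYP i) a) b
        simp only [proj, Matrix.diagonal_mul, Matrix.mul_diagonal] at e
        have : Y i a b = 0 := by
          simp only [diagBlocks, Finset.mem_union, Finset.mem_product, Finset.mem_compl] at hab
          by_cases ha : a ∈ J <;> by_cases hb : b ∈ J <;> simp_all
        simp [ofMat, this]
    rw [param]
    simp only [hcorner, hblocks, mat_ofMat hYH]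
    rw [show (fun i => (1 + ((S - proj J)ᴴ - (S - proj J))) * Y i *
      (1 + ((S - proj J)ᴴ - (S - proj J)))ᴴ) = mat x from funext hY, ofMat_mat]

end HermTuple

/-! ### Simple connectivity of the irreducible locus near a class -/

/-- Suppose `r ≥ 3`, or `r ≥ 2` and `n ≥ 3`.  Then for every `ρ ∈ U(n)^r` and every open
neighborhood `U` of the class `[ρ]` in `X_r(U(n))`, there is an open set `V` with
`[ρ] ∈ V ⊆ U` such that `V` is contractible and `V ∩ X_r(U(n))^{irr}` is simply connected
(in particular, nonempty and path connected). -/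
theorem exists_contractible_nbhd_with_simplyConnected_irr (n r : ℕ)
    (h : 3 ≤ r ∨ (2 ≤ r ∧ 3 ≤ n)) (ρ : Fin r → Un n) (U : Set (CharVarU n r))
    (hU : IsOpen U)
    (hρU : Quotient.mk (MulAction.orbitRel (ConjAct (Un n)) (Fin r → Un n)) ρ ∈ U) :
    ∃ V : Set (CharVarU n r), IsOpen V ∧
      Quotient.mk (MulAction.orbitRel (ConjAct (Un n)) (Fin r → Un n)) ρ ∈ V ∧ V ⊆ U ∧
      ContractibleSpace ↥V ∧ SimplyConnectedSpace ↥(V ∩ irrLocusU n r) := by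
  choose θ hθ using fun i => HermTuple.exists_unit_scalar (ρ i : Matrix (Fin n) (Fin n) ℂ)
  have hρ : HermTuple.chart θ (HermTuple.chartInv θ ρ) = ρ := HermTuple.chart_chartInv hθ
  have hq := HermTuple.isOrbitMap_chartClass (n := n) θ
  obtain ⟨V, hVo, hρV, hVU, hV, hVirr⟩ := hq.main
    (J := {x | IsIrreducibleTupleU (HermTuple.chart θ x)})
    (fun a c => HermTuple.exists_reach a c)
    (HermTuple.isOpen_isIrreducible.preimage (HermTuple.continuous_chart θ))
    (fun g x hx => by
      rw [mem_ofPred_eq, HermTuple.chart_act]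
      exact HermTuple.isIrreducible_smul _ hx)
    (fun c hc g hg x => HermTuple.act_eq_of_stab θ hc hg x)
    (fun a s hs => HermTuple.exists_stab_path a s hs)
    (ι := {J : Finset (Fin n) // J ≠ ∅ ∧ Jᶜ ≠ ∅})
    (fun J => HermTuple.param (r := r) J.1) (fun J => HermTuple.contDiff_param J.1)
    (fun J => HermTuple.finrank_param_lt h J.2.1 J.2.2)
    (fun x hx => by
      obtain ⟨J, hJ, hxJ⟩ := HermTuple.exists_param hx
      exact mem_iUnion.2 ⟨⟨J, hJ⟩, hxJ⟩)
    (HermTuple.chartInv θ ρ) (hU.inter hq.isOpenMap.isOpen_range)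
    ⟨by rw [HermTuple.chartClass, hρ]; exact hρU, mem_range_self _⟩
  refine ⟨V, hVo, ?_, hVU.trans inter_subset_left, hV, ?_⟩
  · rwa [HermTuple.chartClass, hρ] at hρV
  · have heq : V ∩ irrLocusU n r =
        V ∩ HermTuple.chartClass θ '' {x | IsIrreducibleTupleU (HermTuple.chart θ x)} := by
      ext v
      refine and_congr_right fun hv => ⟨?_, ?_⟩
      · rintro ⟨A, hA, hAv⟩
        obtain ⟨x, rfl⟩ := (hVU hv).2
        refine ⟨x, ?_, rfl⟩
        rw [HermTuple.chartClass, Quotient.eq, MulAction.orbitRel_apply,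
          MulAction.mem_orbit_iff] at hAv
        obtain ⟨g, rfl⟩ := hAv
        have := HermTuple.isIrreducible_smul g⁻¹ hA
        rwa [inv_smul_smul] at this
      · rintro ⟨x, hx, rfl⟩
        exact ⟨_, hx, rfl⟩
    rw [heq]
    exact hVirr
end

section
/- Let n ≥ 1 and let H be any set of n×n unitary matrices. Then the inclusion of the centralizer C_{U(n)}(H) = {u ∈ U(n) : uh = hu for all h ∈ H} into the centralizer C_{GL_n(ℂ)}(H) = {g ∈ GL_n(ℂ) : gh = hg for all h ∈ H} is a homotopy equivalence; indeed, C_{GL_n(ℂ)}(H) deformation retracts onto C_{U(n)}(H). -/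
/-!
For invertible `g`, let `|g|⁻¹ = (g* g)^{-1/2}`, given by the continuous functional calculus.
The unitary factor of the polar decomposition is `g |g|⁻¹`, and the path
`t ↦ g ((1 - t) |g|⁻¹ + t)` joins it to `g`. It stays among the invertible elements because
`(1 - t) |g|⁻¹ + t` is positive definite, it is constant when `g` is unitary because then
`|g|⁻¹ = 1`, and it is jointly continuous in `(t, g)` because `g ↦ |g|⁻¹` is continuous. This convex
interpolation replaces the path `t ↦ k exp (t X)` of the Cartan decomposition, so that only the
continuity of a single functional calculus is needed.

The path respects centralizers: if `g` commutes with a unitary `h`, then so does `g*`,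
hence `g* g`, hence every continuous function of `g* g`.

The argument takes place in an arbitrary unital C⋆-algebra and is applied to matrices with the `L²`
operator norm, which induces the usual topology.
-/

/-- The general linear group `GL_n(ℂ)` of invertible `n × n` complex matrices. -/
abbrev GLn (n : ℕ) : Type := Matrix.GeneralLinearGroup (Fin n) ℂ

namespace PolarRetraction

open scoped unitInterval Topology

section CStar

variable {A : Type*} [CStarAlgebra A]

/-- The inverse `(a* a)^{-1/2}` of the absolute value of `a`; it is meaningful for invertible `a`,
where the spectrum of `a* a` avoids the discontinuity of `x ↦ (√x)⁻¹` at `0`. -/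
noncomputable def invAbs (a : A) : A := cfc (fun x : ℝ => (√x)⁻¹) (star a * a)

lemma spectrum_pos (g : Aˣ) {x : ℝ} (hx : x ∈ spectrum ℝ (star (g : A) * g)) : 0 < x := by
  refine lt_of_le_of_ne (spectrum_star_mul_self_nonneg x hx) ?_
  rintro rfl
  exact spectrum.zero_notMem ℝ (g.isUnit.star.mul g.isUnit) hx

lemma continuousOn_inv_sqrt : ContinuousOn (fun x : ℝ => (√x)⁻¹) (Set.Ioi 0) :=
  Real.continuous_sqrt.continuousOn.inv₀ fun _ hx => (Real.sqrt_pos.2 hx).ne'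

lemma continuousOn_spectrum (g : Aˣ) :
    ContinuousOn (fun x : ℝ => (√x)⁻¹) (spectrum ℝ (star (g : A) * g)) :=
  continuousOn_inv_sqrt.mono fun _ hx => spectrum_pos g hx

lemma continuous_invAbs : Continuous fun g : Aˣ => invAbs (g : A) := by
  refine Continuous.cfc_of_mem_nhdsSet (s := Set.Ioi 0) _ ?_ ?_
    (fun g => IsSelfAdjoint.star_mul_self _) continuousOn_inv_sqrt
  · refine isOpen_Ioi.mem_nhdsSet.2 (Set.iUnion_subset fun g x hx => spectrum_pos g hx)
  · exact (Units.continuous_val.star).mul Units.continuous_val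

lemma isSelfAdjoint_invAbs (a : A) : IsSelfAdjoint (invAbs a) := cfc_predicate _ _

lemma invAbs_mul_mul (g : Aˣ) : invAbs (g : A) * (star (g : A) * g) * invAbs (g : A) = 1 := by
  have hsa : IsSelfAdjoint (star (g : A) * g) := IsSelfAdjoint.star_mul_self _
  have hc := continuousOn_spectrum g
  conv_lhs =>
    enter [1, 2]
    rw [← cfc_id ℝ (star (g : A) * g) hsa]
  have hc' : ContinuousOn (fun x : ℝ => (√x)⁻¹ * id x) (spectrum ℝ (star (g : A) * g)) :=
    hc.mul continuousOn_id
  unfold invAbs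
  rw [← cfc_mul _ _ _ hc continuousOn_id, ← cfc_mul _ _ _ hc' hc,
    ← cfc_one ℝ (star (g : A) * g) hsa]
  refine cfc_congr fun x hx => ?_
  have hx := spectrum_pos g hx
  have h0 := (Real.sqrt_pos.2 hx).ne'
  have h2 := Real.mul_self_sqrt hx.le
  simp only [id, Pi.one_apply]
  field_simp
  nlinarith

/-- The left-hand side is a function of `g* g` that is positive on the spectrum. -/
lemma isUnit_interp (g : Aˣ) (t : I) :
    IsUnit ((1 - (t : ℝ)) • invAbs (g : A) + (t : ℝ) • (1 : A)) := by
  have hsa : IsSelfAdjoint (star (g : A) * g) := IsSelfAdjoint.star_mul_self _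
  have hc := continuousOn_spectrum g
  have hc' : ContinuousOn (fun x : ℝ => (1 - (t : ℝ)) • (√x)⁻¹) (spectrum ℝ (star (g : A) * g)) :=
    hc.const_smul (1 - (t : ℝ))
  have hc'' : ContinuousOn (fun x : ℝ => (1 - (t : ℝ)) • (√x)⁻¹ + (t : ℝ))
      (spectrum ℝ (star (g : A) * g)) := hc'.add continuousOn_const
  have key : (1 - (t : ℝ)) • invAbs (g : A) + (t : ℝ) • (1 : A) =
      cfc (fun x : ℝ => (1 - (t : ℝ)) • (√x)⁻¹ + (t : ℝ)) (star (g : A) * g) := by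
    rw [cfc_add_const _ _ _ hc' hsa, cfc_smul _ _ _ hc,
      Algebra.algebraMap_eq_smul_one, invAbs]
  rw [key, isUnit_cfc_iff _ _ hc'' hsa]
  intro x hx
  have h0 : 0 < (√x)⁻¹ := inv_pos.2 (Real.sqrt_pos.2 (spectrum_pos g hx))
  have h1 := t.2.1
  have h2 := t.2.2
  simp only [smul_eq_mul]
  rcases h1.eq_or_lt with h | h
  · rw [← h]; simpa using h0.ne'
  · exact (add_pos_of_nonneg_of_pos (mul_nonneg (sub_nonneg.2 h2) h0.le) h).ne'

/-- The path `t ↦ g ((1 - t) |g|⁻¹ + t)` from the unitary polar factor of `g` to `g`. -/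
noncomputable def polarPath (t : I) (g : Aˣ) : Aˣ := g * (isUnit_interp g t).unit

lemma val_polarPath (t : I) (g : Aˣ) :
    (polarPath t g : A) = g * ((1 - (t : ℝ)) • invAbs (g : A) + (t : ℝ) • (1 : A)) := rfl

lemma continuous_polarPath : Continuous fun p : I × Aˣ => polarPath p.1 p.2 := by
  rw [Units.isOpenEmbedding_val.isInducing.continuous_iff]
  have h1 : Continuous fun p : I × Aˣ => invAbs (p.2 : A) := continuous_invAbs.comp continuous_snd
  have h2 : Continuous fun p : I × Aˣ => (p.2 : A) := Units.continuous_val.comp continuous_snd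
  have h3 : Continuous fun p : I × Aˣ => (p.1 : ℝ) := continuous_subtype_val.comp continuous_fst
  exact h2.mul (((continuous_const.sub h3).smul h1).add (h3.smul continuous_const))

lemma polarPath_one (g : Aˣ) : polarPath 1 g = g := by
  ext; simp [val_polarPath]

lemma star_polarPath_zero_mul (g : Aˣ) :
    star (polarPath 0 g : A) * (polarPath 0 g : A) = 1 := by
  have h : (polarPath 0 g : A) = g * invAbs (g : A) := by simp [val_polarPath]
  rw [h, star_mul, (isSelfAdjoint_invAbs _).star_eq, ← invAbs_mul_mul g]
  simp only [mul_assoc]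

lemma polarPath_of_star_mul (t : I) (g : Aˣ) (hg : star (g : A) * g = 1) :
    polarPath t g = g := by
  ext
  have h : invAbs (g : A) = 1 := by simp [invAbs, hg]
  rw [val_polarPath, h, ← add_smul]
  simp

lemma polarPath_commute (t : I) (g : Aˣ) (h : A) (hh : h ∈ unitary A)
    (hg : (g : A) * h = h * g) : (polarPath t g : A) * h = h * polarPath t g := by
  have h1 : Commute (g : A) h := hg
  have h2 : Commute (star (g : A)) h := by
    have hs : star h * star (g : A) = star (g : A) * star h := by
      simpa using congrArg star hg
    calc star (g : A) * h = h * (star h * star (g : A)) * h := by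
          rw [← mul_assoc, Unitary.mul_star_self_of_mem hh, one_mul]
      _ = h * star (g : A) * (star h * h) := by rw [hs]; simp only [mul_assoc]
      _ = h * star (g : A) := by rw [Unitary.star_mul_self_of_mem hh, mul_one]
  have h3 : Commute (invAbs (g : A)) h := (h2.mul_left h1).cfc_real _
  exact h1.mul_left ((h3.smul_left _).add_left ((Commute.one_left h).smul_left _))

end CStar

end PolarRetraction

open scoped Matrix.Norms.L2Operator unitInterval in
/-- `PolarRetraction.polarPath` for matrices, stated for the topology of `GL_n(ℂ)`. -/
lemma PolarRetraction.exists_path (n : ℕ) : ∃ F : I → GLn n → GLn n,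
    (Continuous fun p : I × GLn n => F p.1 p.2) ∧ (∀ g, F 1 g = g) ∧
    (∀ g, (F 0 g : Matrix (Fin n) (Fin n) ℂ) ∈ Matrix.unitaryGroup (Fin n) ℂ) ∧
    (∀ t (g : GLn n), (g : Matrix (Fin n) (Fin n) ℂ) ∈ Matrix.unitaryGroup (Fin n) ℂ →
      F t g = g) ∧
    (∀ t (g : GLn n), ∀ h ∈ Matrix.unitaryGroup (Fin n) ℂ,
      (g : Matrix (Fin n) (Fin n) ℂ) * h = h * (g : Matrix (Fin n) (Fin n) ℂ) →
      (F t g : Matrix (Fin n) (Fin n) ℂ) * h = h * (F t g : Matrix (Fin n) (Fin n) ℂ)) :=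
  ⟨polarPath, continuous_polarPath, polarPath_one,
    fun g => Matrix.mem_unitaryGroup_iff'.2 (star_polarPath_zero_mul g),
    fun t g hg => polarPath_of_star_mul t g (Matrix.mem_unitaryGroup_iff'.1 hg),
    fun t g h hh hg => polarPath_commute t g h hh hg⟩

/-- Let `H` be any set of `n × n` unitary matrices.  Then the inclusion of the centralizer
`T = C_{U(n)}(H)` into the centralizer `S = C_{GL_n(ℂ)}(H)` is a homotopy equivalence;
indeed `S` deformation retracts onto `T`: there is a retraction `retr : S → T` restricting to
the identity on `T`, with the composite `T ↪ S` after `retr` homotopic to the identity of `S`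
relative to `T`. -/
theorem centralizer_unitary_deformation_retract_of_centralizer_GL (n : ℕ) (hn : 1 ≤ n)
    (H : Set (Matrix (Fin n) (Fin n) ℂ))
    (hH : ∀ h ∈ H, h ∈ Matrix.unitaryGroup (Fin n) ℂ)
    (S T : Set (GLn n))
    (hS : S = {g : GLn n | ∀ h ∈ H,
      (g : Matrix (Fin n) (Fin n) ℂ) * h = h * (g : Matrix (Fin n) (Fin n) ℂ)})
    (hT : T = {g : GLn n | (g : Matrix (Fin n) (Fin n) ℂ) ∈ Matrix.unitaryGroup (Fin n) ℂ ∧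
      ∀ h ∈ H, (g : Matrix (Fin n) (Fin n) ℂ) * h = h * (g : Matrix (Fin n) (Fin n) ℂ)})
    (hTS : T ⊆ S) :
    (∃ e : ContinuousMap.HomotopyEquiv ↥T ↥S, ∀ t : ↥T, e.toFun t = Set.inclusion hTS t) ∧
    ∃ retr : C(↥S, ↥T),
      (∀ t : ↥T, retr (Set.inclusion hTS t) = t) ∧
      ContinuousMap.HomotopicRel
        ((⟨Set.inclusion hTS, continuous_inclusion hTS⟩ : C(↥T, ↥S)).comp retr)
        (ContinuousMap.id ↥S) {x : ↥S | (x : GLn n) ∈ T} := by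
  obtain ⟨F, hF, hF1, hF0, hFU, hFc⟩ := PolarRetraction.exists_path n
  have hFS : ∀ t, ∀ g ∈ S, F t g ∈ S := by
    subst hS
    exact fun t g hg h hh => hFc t g h (hH h hh) (hg h hh)
  have hFT : ∀ g ∈ S, F 0 g ∈ T := by
    subst hS hT
    exact fun g hg => ⟨hF0 g, fun h hh => hFc 0 g h (hH h hh) (hg h hh)⟩
  have hfix : ∀ t, ∀ g ∈ T, F t g = g := by
    subst hT
    exact fun t g hg => hFU t g hg.1
  let retr : C(↥S, ↥T) :=
    ⟨fun g => ⟨F 0 g, hFT g g.2⟩,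
      (hF.comp (continuous_const.prodMk continuous_subtype_val)).subtype_mk _⟩
  have hretr : ∀ t : ↥T, retr (Set.inclusion hTS t) = t := fun t =>
    Subtype.ext (hfix 0 t t.2)
  have hrel : ContinuousMap.HomotopicRel
      ((⟨Set.inclusion hTS, continuous_inclusion hTS⟩ : C(↥T, ↥S)).comp retr)
      (ContinuousMap.id ↥S) {x : ↥S | (x : GLn n) ∈ T} :=
    ⟨{ toFun := fun p => ⟨F p.1 p.2, hFS p.1 p.2 p.2.2⟩
       continuous_toFun :=
        (hF.comp (continuous_fst.prodMk (continuous_subtype_val.comp continuous_snd))).subtype_mk _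
       map_zero_left := fun g => rfl
       map_one_left := fun g => Subtype.ext (hF1 g)
       prop' := fun t g hg => Subtype.ext ((hfix t g hg).trans (hfix 0 g hg).symm) }⟩
  refine ⟨⟨⟨⟨Set.inclusion hTS, continuous_inclusion hTS⟩, retr, ?_, hrel.homotopic⟩,
    fun _ => rfl⟩, retr, hretr, hrel⟩
  have : retr.comp ⟨Set.inclusion hTS, continuous_inclusion hTS⟩ = ContinuousMap.id ↥T :=
    ContinuousMap.ext hretr
  rw [this]
end

section
/- Fix r ≥ 1 and work in the polynomial ring ℚ[t]. With f_r(t) = ((1+t)^r(1+t²) − (1−t)^r(1−t²))/2, h_r(t) = (1+t³)^r, Q(t) = t²·f_r(t) − h_r(t), a(t) = Σ_{k≥1} C(r,2k+1)·t^{2k+4}·(1 + t⁴ + t⁸ + ⋯ + t^{4k−4}), and b(t) = Σ_{k≥1} C(r,2k+2)·t^{2k+7}·(1 + t⁴ + ⋯ + t^{4k−4}), one has the identity t·Q(t) = (1 − t⁴)·(−t + a(t) + b(t)); equivalently, the Poincaré polynomial P_t = 1 + t + t·Q(t)/(1−t⁴) of X_r(SU(2)) equals 1 + a(t) + b(t).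 -/
/-!
Let `E` and `O` be the even and odd parts of `(1 + t)^r`, so that `f_r = O + t² E` and
`t Q = t³ O + t⁵ E - t (1 + t³)^r`. Comparing binomial expansions, the index `2k + 1` contributes
`C(r, 2k+1) (t^(2k+4) - t^(6k+4))`, the index `2k + 2` contributes
`C(r, 2k+2) (t^(2k+7) - t^(6k+7))`, and the index `0` contributes `t⁵ - t = (1 - t⁴) (-t)`.
Multiplying `a` and `b` by `1 - t⁴` telescopes their geometric sums to exactly these terms
(`one_sub_mul_sum`). The expansion of `(1 + x)^r` grouped by parity (`one_add_pow_eq_pairs`) is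
used at `x = t, -t, t³`.
-/

open Polynomial

/-- `f_r(t) = ((1+t)^r (1+t²) − (1−t)^r (1−t²)) / 2`. -/
noncomputable def fPoly (r : ℕ) : Polynomial ℚ :=
  C (1 / 2 : ℚ) * ((1 + X) ^ r * (1 + X ^ 2) - (1 - X) ^ r * (1 - X ^ 2))

/-- `h_r(t) = (1 + t³)^r`. -/
noncomputable def hPoly (r : ℕ) : Polynomial ℚ := (1 + X ^ 3) ^ r

/-- `Q(t) = t² f_r(t) − h_r(t)`. -/
noncomputable def QPoly (r : ℕ) : Polynomial ℚ := X ^ 2 * fPoly r - hPoly r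

/-- `a(t) = Σ_{k ≥ 1} C(r, 2k+1) t^{2k+4} (1 + t⁴ + ⋯ + t^{4k−4})`; since `C(r, 2k+1) = 0`
for `2k + 1 > r`, the sum may be taken over `1 ≤ k ≤ r`. -/
noncomputable def aPoly (r : ℕ) : Polynomial ℚ :=
  ∑ k ∈ Finset.Icc 1 r,
    C (r.choose (2 * k + 1) : ℚ) * X ^ (2 * k + 4) * ∑ j ∈ Finset.range k, X ^ (4 * j)

/-- `b(t) = Σ_{k ≥ 1} C(r, 2k+2) t^{2k+7} (1 + t⁴ + ⋯ + t^{4k−4})`; since `C(r, 2k+2) = 0`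
for `2k + 2 > r`, the sum may be taken over `1 ≤ k ≤ r`. -/
noncomputable def bPoly (r : ℕ) : Polynomial ℚ :=
  ∑ k ∈ Finset.Icc 1 r,
    C (r.choose (2 * k + 2) : ℚ) * X ^ (2 * k + 7) * ∑ j ∈ Finset.range k, X ^ (4 * j)

theorem sum_range_odd_even {R : Type*} [AddCommMonoid R] (g : ℕ → R) (n : ℕ) :
    ∑ m ∈ Finset.range (2 * n + 1), g m =
      g 0 + ∑ k ∈ Finset.range n, (g (2 * k + 1) + g (2 * k + 2)) := by
  induction n with
  | zero => simp
  | succ n ih =>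
    rw [show 2 * (n + 1) + 1 = 2 * n + 1 + 1 + 1 by ring, Finset.sum_range_succ,
      Finset.sum_range_succ, ih, Finset.sum_range_succ _ n]
    simp only [add_assoc]

/-- The binomial theorem with the indices `2k + 1` and `2k + 2` paired; the terms with index
beyond `r` vanish. -/
theorem one_add_pow_eq_pairs (r : ℕ) (x : ℚ[X]) :
    (1 + x) ^ r = 1 + ∑ k ∈ Finset.range (r + 1),
      (C (r.choose (2 * k + 1) : ℚ) * x ^ (2 * k + 1)
        + C (r.choose (2 * k + 2) : ℚ) * x ^ (2 * k + 2)) := by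
  have h := sum_range_odd_even (fun m => C (r.choose m : ℚ) * x ^ m) (r + 1)
  simp only [Nat.choose_zero_right, Nat.cast_one, map_one, pow_zero, mul_one] at h
  rw [← h, add_comm 1 x, add_pow]
  have hsub : Finset.range (r + 1) ⊆ Finset.range (2 * (r + 1) + 1) :=
    Finset.range_subset_range.2 (by omega)
  rw [← Finset.sum_subset hsub]
  · refine Finset.sum_congr rfl fun m _ => ?_
    simp [mul_comm]
  · intro m _ hm
    rw [Nat.choose_eq_zero_of_lt (by simpa using hm)]
    simp

/-- Multiplication by `1 - t⁴` telescopes the inner geometric sums. The index `k = 0` may be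
included because its term vanishes. -/
theorem one_sub_mul_sum (r : ℕ) (c : ℕ → ℚ[X]) (e : ℕ → ℕ) :
    (1 - X ^ 4) * ∑ k ∈ Finset.Icc 1 r,
        c k * X ^ e k * ∑ j ∈ Finset.range k, X ^ (4 * j) =
      ∑ k ∈ Finset.range (r + 1), c k * X ^ e k * (1 - X ^ (4 * k)) := by
  have hsub : Finset.Icc 1 r ⊆ Finset.range (r + 1) := fun k hk => by
    simp only [Finset.mem_Icc, Finset.mem_range] at *
    omega
  rw [← Finset.sum_subset hsub, Finset.mul_sum]
  · refine Finset.sum_congr rfl fun k _ => ?_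
    have hg := mul_neg_geom_sum (X ^ 4 : ℚ[X]) k
    simp only [← pow_mul] at hg
    rw [← hg, mul_left_comm]
  · intro k hk hk'
    have : k = 0 := by
      simp only [Finset.mem_Icc, Finset.mem_range] at *
      omega
    simp [this]

/-- The identity `t Q(t) = (1 − t⁴) (−t + a(t) + b(t))` in `ℚ[t]`; equivalently, the Poincaré
polynomial `P_t = 1 + t + t Q(t)/(1 − t⁴)` of `X_r(SU(2))` equals `1 + a(t) + b(t)`. -/
theorem X_mul_QPoly_eq (r : ℕ) (hr : 1 ≤ r) :
    X * QPoly r = (1 - X ^ 4) * (-X + aPoly r + bPoly r) := by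
  have ha := one_sub_mul_sum r (fun k => C (r.choose (2 * k + 1) : ℚ)) (fun k => 2 * k + 4)
  have hb := one_sub_mul_sum r (fun k => C (r.choose (2 * k + 2) : ℚ)) (fun k => 2 * k + 7)
  rw [mul_add, mul_add, aPoly, bPoly, ha, hb]
  set O : ℚ[X] := ∑ k ∈ Finset.range (r + 1), C (r.choose (2 * k + 1) : ℚ) * X ^ (2 * k + 1)
    with hO
  -- `E` omits the constant term of the even part.
  set E : ℚ[X] := ∑ k ∈ Finset.range (r + 1), C (r.choose (2 * k + 2) : ℚ) * X ^ (2 * k + 2)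
    with hE
  have h1 : (1 + X : ℚ[X]) ^ r = 1 + (O + E) := by
    rw [one_add_pow_eq_pairs, Finset.sum_add_distrib]
  have h2 : (1 - X : ℚ[X]) ^ r = 1 + (-O + E) := by
    rw [sub_eq_add_neg, one_add_pow_eq_pairs, Finset.sum_add_distrib, hO, hE,
      ← Finset.sum_neg_distrib]
    congr 2 <;> refine Finset.sum_congr rfl fun k _ => ?_
    · rw [Odd.neg_pow ⟨k, rfl⟩, mul_neg]
    · rw [Even.neg_pow ⟨k + 1, by ring⟩]
  have hf : fPoly r = O + X ^ 2 * (1 + E) := by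
    have hhalf : (C (1 / 2 : ℚ)) * 2 = (1 : ℚ[X]) := by
      rw [← C_ofNat, ← C_mul]
      norm_num
    rw [fPoly, h1, h2]
    linear_combination (O + X ^ 2 * (1 + E)) * hhalf
  rw [QPoly, hf, hPoly, one_add_pow_eq_pairs]
  have key : X ^ 3 * O + X ^ 5 * E - X * ∑ k ∈ Finset.range (r + 1),
        (C (r.choose (2 * k + 1) : ℚ) * (X ^ 3) ^ (2 * k + 1)
          + C (r.choose (2 * k + 2) : ℚ) * (X ^ 3) ^ (2 * k + 2)) =
      ∑ k ∈ Finset.range (r + 1),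
          C (r.choose (2 * k + 1) : ℚ) * X ^ (2 * k + 4) * (1 - X ^ (4 * k)) +
        ∑ k ∈ Finset.range (r + 1),
          C (r.choose (2 * k + 2) : ℚ) * X ^ (2 * k + 7) * (1 - X ^ (4 * k)) := by
    rw [hO, hE, Finset.mul_sum, Finset.mul_sum, Finset.mul_sum, ← Finset.sum_add_distrib,
      ← Finset.sum_sub_distrib, ← Finset.sum_add_distrib]
    refine Finset.sum_congr rfl fun k _ => ?_
    ring
  linear_combination key
end

section
/- Fix r ≥ 3 and work in ℚ[t]. With a(t) = Σ_{k≥1} C(r,2k+1)·t^{2k+4}·(1 + t⁴ + ⋯ + t^{4k−4}) and b(t) = Σ_{k≥1} C(r,2k+2)·t^{2k+7}·(1 + t⁴ + ⋯ + t^{4k−4}), the polynomial 1 + a(t) + b(t) has degree exactly 3r − 3 and its leading coefficient equals 1. -/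
/-!
Both `a` and `b` are sums, over `n = 2k + 1` and `n = 2k + 2` respectively, of `r.choose n` times a
monic polynomial of degree `3n - 3` (`shape_odd`, `shape_even`). Hence every summand with
`n < r` has degree below `3r - 3`, every summand with `n > r` vanishes, and the only contribution to
the coefficient of `t ^ (3r - 3)` is `r.choose r = 1`, coming from `a` when `r` is odd and from `b`
when `r` is even (`coeff_choose_mul`).
-/

open Polynomial

/-- The factor `1 + t⁴ + ⋯ + t^(4k-4)` is the geometric sum `1 + t + ⋯ + t^(k-1)` evaluated at
`t⁴`, so both claims follow from the corresponding facts for that sum. -/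
lemma monic_geom {k : ℕ} (hk : 1 ≤ k) :
    (∑ j ∈ Finset.range k, (X : ℚ[X]) ^ (4 * j)).Monic ∧
      (∑ j ∈ Finset.range k, (X : ℚ[X]) ^ (4 * j)).natDegree = 4 * (k - 1) := by
  have key : ∑ j ∈ Finset.range k, (X : ℚ[X]) ^ (4 * j) =
      expand ℚ 4 (∑ j ∈ Finset.range k, X ^ j) := by
    simp [map_sum, ← pow_mul]
  rw [key]
  refine ⟨(Polynomial.monic_geom_sum_X (by omega)).expand (by norm_num), ?_⟩
  obtain ⟨m, rfl⟩ := Nat.exists_eq_add_of_le' hk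
  rw [natDegree_expand, mul_comm, Nat.add_sub_cancel, Finset.sum_range_succ,
    natDegree_add_eq_right_of_degree_lt, natDegree_X_pow]
  rw [degree_X_pow]
  refine (degree_sum_le _ _).trans_lt
    ((Finset.sup_lt_iff (WithBot.bot_lt_coe m)).mpr fun j hj => ?_)
  rw [degree_X_pow]
  exact WithBot.coe_lt_coe.mpr (Finset.mem_range.mp hj)

lemma shape {k m : ℕ} (hk : 1 ≤ k) :
    ((X : ℚ[X]) ^ m * ∑ j ∈ Finset.range k, X ^ (4 * j)).Monic ∧
      ((X : ℚ[X]) ^ m * ∑ j ∈ Finset.range k, X ^ (4 * j)).natDegree = m + 4 * (k - 1) := by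
  obtain ⟨h1, h2⟩ := monic_geom hk
  refine ⟨(monic_X_pow m).mul h1, ?_⟩
  rw [(monic_X_pow m).natDegree_mul h1, natDegree_X_pow, h2]

lemma shape_odd {k : ℕ} (hk : 1 ≤ k) :
    ((X : ℚ[X]) ^ (2 * k + 4) * ∑ j ∈ Finset.range k, X ^ (4 * j)).Monic ∧
      ((X : ℚ[X]) ^ (2 * k + 4) * ∑ j ∈ Finset.range k, X ^ (4 * j)).natDegree =
        3 * (2 * k + 1) - 3 :=
  ⟨(shape hk).1, (shape hk).2.trans (by omega)⟩

lemma shape_even {k : ℕ} (hk : 1 ≤ k) :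
    ((X : ℚ[X]) ^ (2 * k + 7) * ∑ j ∈ Finset.range k, X ^ (4 * j)).Monic ∧
      ((X : ℚ[X]) ^ (2 * k + 7) * ∑ j ∈ Finset.range k, X ^ (4 * j)).natDegree =
        3 * (2 * k + 2) - 3 :=
  ⟨(shape hk).1, (shape hk).2.trans (by omega)⟩

lemma natDegree_choose_mul_le {r n : ℕ} {P : ℚ[X]} (hP : P.natDegree = 3 * n - 3) :
    (C (r.choose n : ℚ) * P).natDegree ≤ 3 * r - 3 := by
  rcases lt_or_ge r n with h | h
  · simp [Nat.choose_eq_zero_of_lt h]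
  · exact (natDegree_C_mul_le _ _).trans (by omega)

/-- The hypothesis `1 ≤ n` keeps the truncated subtraction `3 * n - 3` strictly monotone, so that
distinct `n` give distinct degrees. -/
lemma coeff_choose_mul {r n : ℕ} {P : ℚ[X]} (hn : 1 ≤ n)
    (hP : P.Monic ∧ P.natDegree = 3 * n - 3) :
    (C (r.choose n : ℚ) * P).coeff (3 * r - 3) = if n = r then 1 else 0 := by
  rw [coeff_C_mul]
  rcases lt_trichotomy n r with h | rfl | h
  · rw [coeff_eq_zero_of_natDegree_lt (by omega), if_neg h.ne, mul_zero]
  · rw [← hP.2, hP.1.coeff_natDegree]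
    simp
  · simp [Nat.choose_eq_zero_of_lt h, h.ne']

lemma natDegree_poincarePoly_le (r : ℕ) : (1 + aPoly r + bPoly r).natDegree ≤ 3 * r - 3 := by
  refine natDegree_add_le_of_degree_le (natDegree_add_le_of_degree_le (by simp) ?_) ?_
  · refine natDegree_sum_le_of_forall_le _ _ fun k hk => ?_
    rw [mul_assoc]
    exact natDegree_choose_mul_le (shape_odd (Finset.mem_Icc.mp hk).1).2
  · refine natDegree_sum_le_of_forall_le _ _ fun k hk => ?_
    rw [mul_assoc]
    exact natDegree_choose_mul_le (shape_even (Finset.mem_Icc.mp hk).1).2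

lemma coeff_aPoly (r : ℕ) :
    (aPoly r).coeff (3 * r - 3) = ∑ k ∈ Finset.Icc 1 r, if 2 * k + 1 = r then 1 else 0 := by
  rw [aPoly, finsetSum_coeff]
  refine Finset.sum_congr rfl fun k hk => ?_
  rw [mul_assoc]
  exact coeff_choose_mul (by omega) (shape_odd (Finset.mem_Icc.mp hk).1)

lemma coeff_bPoly (r : ℕ) :
    (bPoly r).coeff (3 * r - 3) = ∑ k ∈ Finset.Icc 1 r, if 2 * k + 2 = r then 1 else 0 := by
  rw [bPoly, finsetSum_coeff]
  refine Finset.sum_congr rfl fun k hk => ?_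
  rw [mul_assoc]
  exact coeff_choose_mul (by omega) (shape_even (Finset.mem_Icc.mp hk).1)

/-- Exactly one of `2k + 1 = r` and `2k + 2 = r` is solvable in `k`, and `3 ≤ r` ensures that the
solution satisfies `1 ≤ k`. -/
lemma coeff_poincarePoly {r : ℕ} (hr : 3 ≤ r) :
    (1 + aPoly r + bPoly r).coeff (3 * r - 3) = 1 := by
  rw [coeff_add, coeff_add, coeff_aPoly, coeff_bPoly, coeff_one, if_neg (by omega), zero_add]
  obtain ⟨m, rfl | rfl⟩ := Nat.even_or_odd' r
  · rw [Finset.sum_eq_zero fun k _ => if_neg (by omega),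
      Finset.sum_eq_single_of_mem (m - 1) (Finset.mem_Icc.mpr (by omega))
        fun k _ hk => if_neg (by omega), if_pos (by omega), zero_add]
  · rw [Finset.sum_eq_single_of_mem m (Finset.mem_Icc.mpr (by omega))
        fun k _ hk => if_neg (by omega), if_pos (by omega),
      Finset.sum_eq_zero fun k _ => if_neg (by omega), add_zero]

/-- For `r ≥ 3`, the Poincaré polynomial `1 + a(t) + b(t)` of `X_r(SU(2))` has degree exactly
`3r − 3` and leading coefficient `1`. -/
theorem degree_poincarePoly (r : ℕ) (hr : 3 ≤ r) :
    (1 + aPoly r + bPoly r).degree = ((3 * r - 3 : ℕ) : WithBot ℕ) ∧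
    (1 + aPoly r + bPoly r).leadingCoeff = 1 := by
  have hdeg : (1 + aPoly r + bPoly r).natDegree = 3 * r - 3 :=
    natDegree_eq_of_le_of_coeff_ne_zero (natDegree_poincarePoly_le r)
      (by rw [coeff_poincarePoly hr]; exact one_ne_zero)
  have hne : 1 + aPoly r + bPoly r ≠ 0 := fun h => by
    simpa [h] using coeff_poincarePoly hr
  exact ⟨by rw [degree_eq_natDegree hne, hdeg],
    by rw [leadingCoeff, hdeg, coeff_poincarePoly hr]⟩
end

section
/- Fix r ≥ 5 and work in ℚ[t]. With a(t) = Σ_{k≥1} C(r,2k+1)·t^{2k+4}·(1 + t⁴ + ⋯ + t^{4k−4}) and b(t) = Σ_{k≥1} C(r,2k+2)·t^{2k+7}·(1 + t⁴ + ⋯ + t^{4k−4}), the coefficient of t⁴ in 1 + a(t) + b(t) is 0, while the coefficient of t^{3r−7} in 1 + a(t) + b(t) is nonzero. Hence the coefficient sequence of this degree-(3r−3) polynomial fails the Poincaré duality symmetry b_k = b_{(3r−3)−k}. -/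
/-!
All exponents occurring in `a` and `b` are at least `6`, so the coefficient of `t⁴` vanishes.
All coefficients of `1 + a + b` are nonnegative, so it suffices to exhibit one positive contribution
to the coefficient of `t^{3r-7}`. If `r = 2k + 1`, the summand of `a` indexed by `k`,
whose binomial coefficient is `1`, is
`t^{2k+4} (1 + t⁴ + ⋯ + t^{4k-4})`, and if `r = 2k + 2`, the
summand of `b` indexed by `k` is likewise
`t^{2k+7} (1 + t⁴ + ⋯ + t^{4k-4})`. Either one has top degree `3r - 3`, and since `r ≥ 5` forces
`k ≥ 2`, its next exponent `3r - 7` (the term `j = k - 2`) also occurs. The exponents `4` and `3r - 7`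
are exchanged by `n ↦ 3r - 3 - n`, so duality fails.
-/

open Polynomial

/-- Each summand of `aPoly` and `bPoly` has the shape treated here. -/
lemma coeff_summand (c : ℚ) (m k n : ℕ) :
    (C c * X ^ m * ∑ j ∈ Finset.range k, X ^ (4 * j) : Polynomial ℚ).coeff n =
      ∑ j ∈ Finset.range k, if n = m + 4 * j then c else 0 := by
  simp only [Finset.mul_sum, mul_assoc, ← pow_add, finsetSum_coeff, coeff_C_mul_X_pow]

lemma coeff_summand_nonneg {c : ℚ} (hc : 0 ≤ c) (m k n : ℕ) :
    0 ≤ (C c * X ^ m * ∑ j ∈ Finset.range k, X ^ (4 * j) : Polynomial ℚ).coeff n := by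
  rw [coeff_summand]
  exact Finset.sum_nonneg fun j _ => by split_ifs <;> simp [hc]

lemma coeff_summand_pos {c : ℚ} (hc : 0 < c) {m k n j : ℕ} (hj : j < k) (hn : n = m + 4 * j) :
    0 < (C c * X ^ m * ∑ j ∈ Finset.range k, X ^ (4 * j) : Polynomial ℚ).coeff n := by
  rw [coeff_summand]
  refine Finset.sum_pos' (fun j _ => by split_ifs <;> simp [hc.le])
    ⟨j, Finset.mem_range.2 hj, by simp [hn, hc]⟩

lemma coeff_summand_eq_zero (c : ℚ) {m k n : ℕ} (hn : n < m) :
    (C c * X ^ m * ∑ j ∈ Finset.range k, X ^ (4 * j) : Polynomial ℚ).coeff n = 0 := by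
  rw [coeff_summand]
  exact Finset.sum_eq_zero fun j _ => if_neg (by omega)

lemma aPoly_coeff_nonneg (r n : ℕ) : 0 ≤ (aPoly r).coeff n := by
  rw [aPoly, finsetSum_coeff]
  exact Finset.sum_nonneg fun k _ => coeff_summand_nonneg (Nat.cast_nonneg _) _ _ _

lemma bPoly_coeff_nonneg (r n : ℕ) : 0 ≤ (bPoly r).coeff n := by
  rw [bPoly, finsetSum_coeff]
  exact Finset.sum_nonneg fun k _ => coeff_summand_nonneg (Nat.cast_nonneg _) _ _ _

lemma aPoly_coeff_four (r : ℕ) : (aPoly r).coeff 4 = 0 := by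
  rw [aPoly, finsetSum_coeff]
  refine Finset.sum_eq_zero fun k hk => coeff_summand_eq_zero _ ?_
  have := (Finset.mem_Icc.1 hk).1
  omega

lemma bPoly_coeff_four (r : ℕ) : (bPoly r).coeff 4 = 0 := by
  rw [bPoly, finsetSum_coeff]
  exact Finset.sum_eq_zero fun k _ => coeff_summand_eq_zero _ (by omega)

lemma aPoly_coeff_pos {k : ℕ} (hk : 2 ≤ k) :
    0 < (aPoly (2 * k + 1)).coeff (3 * (2 * k + 1) - 7) := by
  rw [aPoly, finsetSum_coeff]
  refine Finset.sum_pos' (fun i _ => coeff_summand_nonneg (Nat.cast_nonneg _) _ _ _)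
    ⟨k, Finset.mem_Icc.2 ⟨by omega, by omega⟩, ?_⟩
  exact coeff_summand_pos (by simp) (j := k - 2) (by omega) (by omega)

lemma bPoly_coeff_pos {k : ℕ} (hk : 2 ≤ k) :
    0 < (bPoly (2 * k + 2)).coeff (3 * (2 * k + 2) - 7) := by
  rw [bPoly, finsetSum_coeff]
  refine Finset.sum_pos' (fun i _ => coeff_summand_nonneg (Nat.cast_nonneg _) _ _ _)
    ⟨k, Finset.mem_Icc.2 ⟨by omega, by omega⟩, ?_⟩
  exact coeff_summand_pos (by simp) (j := k - 2) (by omega) (by omega)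

/-- For `r ≥ 5`, in the polynomial `1 + a(t) + b(t)` (the Poincaré polynomial of `X_r(SU(2))`,
of degree `3r − 3`) the coefficient of `t⁴` is `0` while the coefficient of `t^{3r−7}` is
nonzero; hence the coefficient sequence fails the Poincaré duality symmetry
`b_k = b_{(3r−3)−k}`. -/
theorem poincarePoly_fails_duality (r : ℕ) (hr : 5 ≤ r) :
    (1 + aPoly r + bPoly r).coeff 4 = 0 ∧
    (1 + aPoly r + bPoly r).coeff (3 * r - 7) ≠ 0 ∧
    ¬ ∀ k ≤ 3 * r - 3,
        (1 + aPoly r + bPoly r).coeff k = (1 + aPoly r + bPoly r).coeff (3 * r - 3 - k) := by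
  have h4 : (1 + aPoly r + bPoly r).coeff 4 = 0 := by
    simp [coeff_one, aPoly_coeff_four, bPoly_coeff_four]
  have hne : (1 + aPoly r + bPoly r).coeff (3 * r - 7) ≠ 0 := by
    have h1 : (1 : Polynomial ℚ).coeff (3 * r - 7) = 0 := by
      rw [coeff_one, if_neg (by omega)]
    have ha := aPoly_coeff_nonneg r (3 * r - 7)
    have hb := bPoly_coeff_nonneg r (3 * r - 7)
    have hab : 0 < (aPoly r).coeff (3 * r - 7) ∨ 0 < (bPoly r).coeff (3 * r - 7) := by
      rcases Nat.even_or_odd' r with ⟨k, rfl | rfl⟩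
      · obtain ⟨l, rfl⟩ : ∃ l, k = l + 1 := ⟨k - 1, by omega⟩
        exact Or.inr (bPoly_coeff_pos (k := l) (by omega))
      · exact Or.inl (aPoly_coeff_pos (by omega))
    rw [coeff_add, coeff_add, h1]
    rcases hab with h | h <;> linarith
  refine ⟨h4, hne, fun h => hne ?_⟩
  have h' := h 4 (by omega)
  rw [h4, show 3 * r - 3 - 4 = 3 * r - 7 by omega] at h'
  exact h'.symm
end
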